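/- Let G be a non-elementary hyperbolic group, A a finite group, and φ : A → Aut(G) a homomorphism such that (a) the composition A → Aut(G) → Out(G) is injective, and (b) E_{G⋊_φ A}(G) is trivial. Let j : A → B be an embedding of A into a finite group B. Then for every r ≥ 0 there exists a non-elementary hyperbolic quotient Ḡ of G and a homomorphism ψ : B → Aut(Ḡ) such that: (1) the injectivity radius of the canonical projection G → Ḡ is at least r; (2) for every a ∈ A, the projection G → Ḡ intertwines φ(a) with ψ(j(a)); (3) the composition B → Aut(Ḡ) → Out(Ḡ) is injective; (4) E_{Ḡ⋊_ψ B}(Ḡ) is trivial. -/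

import Mathlib

/-!
# Enlarging a finite group of outer automorphisms on a quotient of a hyperbolic group

Let `N` be the free product of copies of `G` indexed by the cosets `B / j(A)`. The group `B`
permutes the copies, with `A` acting on the base copy through `φ` (the induced action, `ith`), so
that `H = N ⋊ B` contains `G ⋊ A` (`incl`). The group `N` is hyperbolic, and `H` acts on it,
properly and by isometries of the word metric given by the generators of all the copies (`sdAct`).
The quotient of `G` is obtained by identifying, `B`-equivariantly, every generator `t i` of a copy
outside the base one with a long word `u i` in elements of the base copy: if `Γ` is the normal
closure in `H` of the relators `rel = u i * t i`, then `N / Γ` is generated by the image of the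
base copy, and `B` acts on it by `qpsi`, extending `φ`.

The words `u i` are alternating products of `g` with high, pairwise different powers of `a`. Here
`a` is a loxodromic element of `G` (`exists_lox`, `exists_LoxC`), and `g ∈ G` lies outside the
elementary closure `elem a` and conjugates no nontrivial torsion element of the centraliser of `a`
into that centraliser (`LoxC.exists_g`); the hypothesis `E_{G ⋊ A}(G) = 1` gives such a `g`,
by B. H. Neumann's lemma on coverings by cosets. Since the `t i` also lie outside `elem a`, the
broken lines traced by the powers of a relator are quasiconvex, distinct ones have overlaps that
are short compared with the translation length of the relators, and the stabilizer of such a line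
is generated by its relator. So their translates form a rotating family with arbitrarily large
rotation (`Crn.relRot`).

The rest is small cancellation theory for rotating families (`Rot`). Coning off the family gives a
hyperbolic graph, by a guessing-geodesics criterion, with Behrstock-type inequalities for the
projection distances `pd` to the members of the family. A windmill argument (`Rot.red`) shows
that every element of `Γ` can be reduced to `1` by successive rotations about members on which
its displacement has large projection. This has three consequences.

* Nontrivial elements of `Γ` move the base point far (`Rot.red_far`): this is the injectivity
  radius.
* Polygons with at most four sides lift from the quotient to the coned-off space, so the
  quotient of the cone is hyperbolic with the same constant; undoing the cone, which over `Γ`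
  means only finitely many bounded pieces, gives the hyperbolicity of `N / Γ` (`quot_hyp`).
* If the class of `h ∈ H` has finitely many conjugates under the quotient, then `h` moves all
  points of the base copy a bounded amount in the quotient metric (`qd_orbit`). Applied to the
  points `a ^ k * g * a ^ k`, lifting yields an element of `h Γ` which almost fixes long
  segments of the axis of `a` and of its translate by `a ^ k * g`; so it is a torsion element
  commuting with `a` and so is its conjugate by `g`, hence it is trivial by the choice of `g`
  (`Crn.mem_rot`).

The last point says that `E_{Ḡ ⋊ B}(Ḡ)` is trivial. Injectivity of `B → Out Ḡ` and
non-elementarity follow formally from it (`quot_out`, `quot_not_vc`).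
-/

open Filter Set Function

namespace LacHyp

/-! ### Word length and norms of endomorphisms for marked groups -/

/-- Word length of `g` in the group `H` marked by the epimorphism `p` from a free group:
the least length of a word in the (images of the) generators representing `g`. -/
noncomputable def wlen {ι : Type} [DecidableEq ι] {H : Type*} [Group H]
    (p : FreeGroup ι →* H) (g : H) : ℕ :=
  sInf {n | ∃ w : FreeGroup ι, p w = g ∧ w.norm = n}

/-- The norm `|φ| = max_{s ∈ S} |φ(s)|_S` of an endomorphism of a marked group. -/
noncomputable def enorm {ι : Type} [Fintype ι] [DecidableEq ι] {H : Type*} [Group H]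
    (p : FreeGroup ι →* H) (φ : H →* H) : ℕ :=
  Finset.univ.sup fun i : ι => wlen p (φ (p (FreeGroup.of i)))

/-- The conjugacy-invariant norm `‖φ‖ = inf_g |ι_g ∘ φ|` of an endomorphism. -/
noncomputable def cnorm {ι : Type} [Fintype ι] [DecidableEq ι] {H : Type*} [Group H]
    (p : FreeGroup ι →* H) (φ : H →* H) : ℕ :=
  sInf (Set.range fun g : H => enorm p ((MulAut.conj g).toMonoidHom.comp φ))

/-- The marked group `(H, S)` is `δ`-hyperbolic: Gromov's four-point condition for the
word metric `d(x, y) = |x⁻¹y|_S`. -/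
def MarkedHyperbolic {ι : Type} [DecidableEq ι] {H : Type*} [Group H]
    (p : FreeGroup ι →* H) (δ : ℝ) : Prop :=
  ∀ x y z w : H,
    (wlen p (x⁻¹ * y) : ℝ) + (wlen p (z⁻¹ * w) : ℝ) ≤
      max ((wlen p (x⁻¹ * z) : ℝ) + (wlen p (y⁻¹ * w) : ℝ))
        ((wlen p (x⁻¹ * w) : ℝ) + (wlen p (y⁻¹ * z) : ℝ)) + 2 * δ

/-- `η` is injective on every ball of radius `R` of the marked group `(H, S)`. -/
def InjOnBalls {ι : Type} [DecidableEq ι] {H G' : Type*} [Group H] [Group G']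
    (p : FreeGroup ι →* H) (η : H →* G') (R : ℕ) : Prop :=
  ∀ c x y : H, wlen p (c⁻¹ * x) ≤ R → wlen p (c⁻¹ * y) ≤ R → η x = η y → x = y

/-! ### Lacunary hyperbolic groups as limits of hyperbolic groups -/

/-- A presentation of the marked group `(G, S)` (with `S` indexed by `ι`, via the marking `m`)
as a direct limit of `δ_k`-hyperbolic marked groups `(G_k, S_k)` in which the natural
epimorphisms `η_k : G_k → G` are injective on balls of radius `R_k` with `R_k/δ_k → ∞`.
This is Ol'shanskii–Osin–Sapir's characterization of lacunary hyperbolicity. -/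
structure LHSeq (ι : Type) [Fintype ι] [DecidableEq ι] (G : Type*) [Group G]
    (m : FreeGroup ι →* G) where
  m_surj : Function.Surjective m
  /-- the approximating groups `G_k` -/
  Gk : ℕ → Type
  [grp : ∀ k, Group (Gk k)]
  /-- the markings `π_k` of the `G_k` (so `S_k` is the image of the generators) -/
  pk : ∀ k, FreeGroup ι →* Gk k
  /-- the natural epimorphisms `η_k : G_k → G` -/
  ηk : ∀ k, Gk k →* G
  pk_surj : ∀ k, Function.Surjective (pk k)
  /-- `G_{k+1}` is a marked quotient of `G_k` (this encodes the bonding epimorphisms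
  `α_k : (G_k, S_k) ↠ (G_{k+1}, S_{k+1})`) -/
  ker_mono : ∀ k, (pk k).ker ≤ (pk (k + 1)).ker
  ηk_comp : ∀ k, (ηk k).comp (pk k) = m
  /-- `G` is the direct limit of the `G_k` -/
  limit : ∀ w : FreeGroup ι, m w = 1 → ∃ k, pk k w = 1
  /-- the hyperbolicity constants -/
  δ : ℕ → ℝ
  δ_pos : ∀ k, 0 < δ k
  hyp : ∀ k, MarkedHyperbolic (pk k) (δ k)
  /-- radii of injectivity of the `η_k` -/
  R : ℕ → ℕ
  inj : ∀ k, InjOnBalls (pk k) (ηk k) (R k)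
  /-- the lacunarity condition `inj(η_k)/δ_k → ∞` -/
  lac : Filter.Tendsto (fun k => (R k : ℝ) / δ k) Filter.atTop Filter.atTop

attribute [instance] LHSeq.grp

/-- A finitely generated group is lacunary hyperbolic if it admits an approximating
sequence as above. -/
def LacunaryHyperbolic (G : Type*) [Group G] : Prop :=
  ∃ (ι : Type) (_ : Fintype ι) (_ : DecidableEq ι) (m : FreeGroup ι →* G),
    Nonempty (LHSeq ι G m)

section Lifts

variable {ι : Type} [Fintype ι] [DecidableEq ι] {G : Type*} [Group G] {m : FreeGroup ι →* G}

/-- The endomorphism `ψ` of the free group `G_0` descends to an endomorphism of `G_k`. -/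
def LiftsAt (D : LHSeq ι G m) (ψ : FreeGroup ι →* FreeGroup ι) (k : ℕ) : Prop :=
  ∃ φk : D.Gk k →* D.Gk k, φk.comp (D.pk k) = (D.pk k).comp ψ

/-- `φ` coherently lifts from step `n`: some lift `ψ` of `φ` to the free group `G_0`
induces endomorphisms of `G_k` for all `k ≥ n`. -/
def CoherentlyLifts (D : LHSeq ι G m) (φ : G →* G) (n : ℕ) : Prop :=
  ∃ ψ : FreeGroup ι →* FreeGroup ι, m.comp ψ = φ.comp m ∧ ∀ k, n ≤ k → LiftsAt D ψ k

end Lifts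

/-! ### ℝ-trees and property (FR) -/

/-- Gromov's four-point condition for a metric space. -/
def GromovHyperbolicSpace (X : Type*) [MetricSpace X] (δ : ℝ) : Prop :=
  ∀ x y z w : X, dist x y + dist z w ≤ max (dist x z + dist y w) (dist x w + dist y z) + 2 * δ

/-- A geodesic metric space. -/
def GeodesicSpace (X : Type*) [MetricSpace X] : Prop :=
  ∀ x y : X, ∃ f : ℝ → X, f 0 = x ∧ f (dist x y) = y ∧
    ∀ s ∈ Set.Icc (0 : ℝ) (dist x y), ∀ t ∈ Set.Icc (0 : ℝ) (dist x y),
      dist (f s) (f t) = |s - t|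

/-- An ℝ-tree: a geodesic, 0-hyperbolic metric space. -/
def IsRTree (X : Type*) [MetricSpace X] : Prop :=
  GeodesicSpace X ∧ GromovHyperbolicSpace X 0

/-- Property (FR): every isometric action on an ℝ-tree has a global fixed point. -/
def PropertyFR (G : Type*) [Group G] : Prop :=
  ∀ (X : Type) (_ : MetricSpace X), IsRTree X →
    ∀ ρ : G →* (X ≃ᵢ X), ∃ x : X, ∀ g : G, ρ g x = x

/-- Minimal displacement `λ(H, X) = inf_x max_{s ∈ S} d(s·x, x)` of an isometric action of
the marked group `(H, S)` on `X`. -/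
noncomputable def minDisp {ι : Type} [Fintype ι] {H : Type*} [Group H] {X : Type*}
    [MetricSpace X] (p : FreeGroup ι →* H) (ρ : H →* (X ≃ᵢ X)) : ℝ :=
  ⨅ x : X, ⨆ i : ι, dist (ρ (p (FreeGroup.of i)) x) x

/-! ### Outer automorphisms -/

/-- The subgroup of inner automorphisms. -/
def innerAut (G : Type*) [Group G] : Subgroup (MulAut G) :=
  (MulAut.conj : G →* MulAut G).range

instance innerAut_normal (G : Type*) [Group G] : (innerAut G).Normal := by
  constructor
  rintro x ⟨g, rfl⟩ σ
  refine ⟨σ g, ?_⟩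
  ext h
  simp [MulAut.conj, mul_assoc]

/-- The outer automorphism group `Out(G) = Aut(G)/Inn(G)`. -/
abbrev OutAut (G : Type*) [Group G] := MulAut G ⧸ innerAut G

/-- The norm `‖Φ‖` of an outer automorphism class. -/
noncomputable def outNorm {ι : Type} [Fintype ι] [DecidableEq ι] {G : Type*} [Group G]
    (m : FreeGroup ι →* G) (Φ : OutAut G) : ℕ :=
  sInf {n | ∃ φ : MulAut G, (QuotientGroup.mk φ : OutAut G) = Φ ∧ cnorm m φ.toMonoidHom = n}

/-- A group is locally finite if all its finitely generated subgroups are finite. -/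
def LocallyFiniteGroup (G : Type*) [Group G] : Prop :=
  ∀ H : Subgroup G, H.FG → Finite H

/-! ### Hyperbolic groups, elementary subgroups, `E_H(G)` -/

/-- A hyperbolic group: some marking by a finite generating set is `δ`-hyperbolic. -/
def HyperbolicGroup (H : Type*) [Group H] : Prop :=
  ∃ (ι : Type) (_ : Fintype ι) (_ : DecidableEq ι) (p : FreeGroup ι →* H) (δ : ℝ),
    Function.Surjective p ∧ 0 ≤ δ ∧ MarkedHyperbolic p δ

/-- A group is virtually cyclic (elementary) if it has a cyclic subgroup of finite index. -/
def VirtuallyCyclic (K : Type*) [Group K] : Prop :=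
  ∃ C : Subgroup K, IsCyclic C ∧ C.FiniteIndex

/-- `E_H(K)`: the set of elements of `H` whose orbit under conjugation by the subgroup `K`
is finite. -/
def EHset {H : Type*} [Group H] (K : Subgroup H) : Set H :=
  {h : H | (Set.range fun g : K => (g : H) * h * (g : H)⁻¹).Finite}

/-- Equationally Noetherian group: every system of equations (in `n` variables) has the same
solution set as a finite subsystem. -/
def EquationallyNoetherian (G : Type*) [Group G] : Prop :=
  ∀ (n : ℕ) (S : Set (FreeGroup (Fin n))), ∃ S₀ : Finset (FreeGroup (Fin n)),
    ↑S₀ ⊆ S ∧ ∀ x : Fin n → G,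
      (∀ w ∈ S₀, FreeGroup.lift x w = 1) → ∀ w ∈ S, FreeGroup.lift x w = 1

/-! ### Discrete geodesic metrics and Gromov's four-point condition -/

/-- An integer-valued metric on `V` in which any two points are joined by a discrete geodesic. -/
structure GMet (V : Type) where
  /-- the distance function -/
  d : V → V → ℕ
  d_self : ∀ x, d x x = 0
  eq_of : ∀ x y, d x y = 0 → x = y
  symm : ∀ x y, d x y = d y x
  tri : ∀ x y z, d x z ≤ d x y + d y z
  geo : ∀ x y k, k ≤ d x y → ∃ z, d x z = k ∧ k + d z y = d x y

namespace GMet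
variable {V : Type} (m : GMet V)

/-- Gromov's four-point condition; the maximum is written as a disjunction. -/
def Hyp (δ : ℕ) : Prop := ∀ x y z w,
  m.d x y + m.d z w ≤ m.d x z + m.d y w + δ ∨ m.d x y + m.d z w ≤ m.d x w + m.d y z + δ

/-- `z` lies on a geodesic from `x` to `y` up to an error `C`. -/
def Btw (C : ℕ) (x z y : V) : Prop := m.d x z + m.d z y ≤ m.d x y + C

variable {m}

theorem Btw.symm {C x z y} (h : m.Btw C x z y) : m.Btw C y z x := by
  unfold Btw at *
  have := m.symm x z; have := m.symm z y; have := m.symm x y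
  omega

theorem Btw.mono {C C' x z y} (h : m.Btw C x z y) (hC : C ≤ C') : m.Btw C' x z y := by
  unfold Btw at *; omega

theorem Hyp.mono {δ δ' : ℕ} (h : m.Hyp δ) (hd : δ ≤ δ') : m.Hyp δ' := by
  intro x y z w
  rcases h x y z w with h | h <;> [left; right] <;> omega

/-- A point of a given interval at a given distance from its origin (truncated at the end). -/
theorem exists_pt (m : GMet V) (x y : V) (k : ℕ) :
    ∃ z, m.Btw 0 x z y ∧ (m.d x z = k ∨ (m.d x y < k ∧ z = y)) := by
  by_cases h : k ≤ m.d x y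
  · obtain ⟨z, h1, h2⟩ := m.geo x y k h
    exact ⟨z, by unfold Btw; omega, Or.inl h1⟩
  · exact ⟨y, by unfold Btw; have := m.d_self y; omega, Or.inr ⟨by omega, rfl⟩⟩

theorem btw_left (m : GMet V) (C x y) : m.Btw C x x y := by
  unfold Btw; have := m.d_self x; omega

theorem btw_right (m : GMet V) (C x y) : m.Btw C x y y := by
  unfold Btw; have := m.d_self y; omega

/-- Two points quasi-between `x` and `y` at comparable distance from `x` are close. -/
theorem Hyp.btw_close {δ : ℕ} (h : m.Hyp δ) {c e x y z z'} (h1 : m.Btw c x z y)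
    (h2 : m.Btw c x z' y) (h3 : m.d x z ≤ m.d x z' + e) (h4 : m.d x z' ≤ m.d x z + e) :
    m.d z z' ≤ c + e + δ := by
  unfold Btw at *
  have := h x y z z'
  have := m.symm y z'; have := m.symm y z
  have := m.tri x z y; have := m.tri x z' y
  omega

theorem Hyp.btw_near {δ : ℕ} (h : m.Hyp δ) {c x y z} (h1 : m.Btw c x z y) :
    ∃ z', m.Btw 0 x z' y ∧ m.d z z' ≤ c + δ := by
  obtain ⟨z', h2, h3⟩ := m.exists_pt x y (m.d x z)
  rcases h3 with h3 | ⟨h3, rfl⟩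
  · exact ⟨z', h2, by simpa using h.btw_close (e := 0) h1 (h2.mono (by omega)) (by omega) (by omega)⟩
  · refine ⟨z', h2, ?_⟩
    unfold Btw at *; omega

/-- Points of a side of a triangle are quasi-between one of the other pairs of vertices. -/
theorem Hyp.thin_btw {δ : ℕ} (h : m.Hyp δ) {c x y z} (w : V) (h1 : m.Btw c x z y) :
    m.Btw (c + δ) x z w ∨ m.Btw (c + δ) w z y := by
  unfold Btw at *
  have := h x y w z
  have := m.symm y z; have := m.symm y w; have := m.symm w z
  omega

theorem Hyp.thin {δ : ℕ} (h : m.Hyp δ) {c x y z} (w : V) (h1 : m.Btw c x z y) :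
    ∃ z', (m.Btw 0 x z' w ∨ m.Btw 0 w z' y) ∧ m.d z z' ≤ c + 2 * δ := by
  rcases h.thin_btw w h1 with h2 | h2
  · obtain ⟨z', h3, h4⟩ := h.btw_near h2
    exact ⟨z', Or.inl h3, by omega⟩
  · obtain ⟨z', h3, h4⟩ := h.btw_near h2
    exact ⟨z', Or.inr h3, by omega⟩

theorem Btw.move {c x y z} (h : m.Btw c x z y) (x' y' z' : V) {e} (hx : m.d x x' ≤ e)
    (hy : m.d y y' ≤ e) (hz : m.d z z' ≤ e) : m.Btw (c + 6 * e) x' z' y' := by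
  unfold Btw at *
  have := m.tri x' x z'; have := m.tri x z z'; have := m.tri z' z y'; have := m.tri z y y'
  have := m.tri x x' y; have := m.tri x' y' y
  have := m.symm x' x; have := m.symm y' y; have := m.symm z' z
  omega

/-! ### Local-to-global for chains of long segments -/

/-- If consecutive corners of a chain are `C`-straight and the interior sides are long, then the
chain is straight seen from its origin. -/
theorem Hyp.chain_fwd {δ C : ℕ} (h : m.Hyp δ) (p : ℕ → V) (n : ℕ)
    (hb : ∀ i, i + 2 ≤ n → m.Btw C (p i) (p (i + 1)) (p (i + 2)))
    (hl : ∀ i, i + 3 ≤ n → C + δ < m.d (p (i + 1)) (p (i + 2))) :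
    ∀ i, i + 2 ≤ n → m.Btw (C + δ) (p 0) (p (i + 1)) (p (i + 2)) := by
  intro i
  induction i with
  | zero => intro hi; exact (hb 0 hi).mono (by omega)
  | succ i ih =>
    intro hi
    have h1 := ih (by omega)
    have h2 := hb (i + 1) hi
    have h3 := hl i (by omega)
    unfold Btw at *
    have := h (p 0) (p (i + 2)) (p (i + 1)) (p (i + 3))
    have := m.symm (p (i+2)) (p (i+1))
    simp only [show i + 1 + 1 = i + 2 by omega, show i + 1 + 2 = i + 3 by omega] at *
    omega

theorem Hyp.chain {δ C : ℕ} (h : m.Hyp δ) (p : ℕ → V) (n : ℕ)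
    (hb : ∀ i, i + 2 ≤ n → m.Btw C (p i) (p (i + 1)) (p (i + 2)))
    (hl : ∀ i, i + 3 ≤ n → C + 2 * δ < m.d (p (i + 1)) (p (i + 2)))
    (i j k : ℕ) (hij : i ≤ j) (hjk : j ≤ k) (hk : k ≤ n) :
    m.Btw (C + 2 * δ) (p i) (p j) (p k) := by
  rcases hij.eq_or_lt with rfl | hij
  · exact btw_left _ _ _ _
  rcases hjk.eq_or_lt with rfl | hjk
  · exact btw_right _ _ _ _
  -- the chain from `p i` forward, up to `p (j+1)`
  have F : m.Btw (C + δ) (p i) (p j) (p (j + 1)) := by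
    have := h.chain_fwd (C := C) (fun t => p (i + t)) (n - i) (fun t ht => hb (i + t) (by omega))
      (fun t ht => by have := hl (i + t) (by omega); simp only [← Nat.add_assoc]; omega)
      (j - i - 1) (by omega)
    simpa only [Nat.add_zero, show i + (j - i - 1 + 1) = j by omega,
      show i + (j - i - 1 + 2) = j + 1 by omega] using this
  rcases (show j + 1 ≤ k from hjk).eq_or_lt with rfl | hjk'
  · exact F.mono (by omega)
  -- the reversed chain from `p k`, down to `p j`
  have R : m.Btw (C + δ) (p k) (p (j + 1)) (p j) := by
    have := h.chain_fwd (C := C) (fun t => p (k - t)) k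
      (fun t ht => by
        have := (hb (k - t - 2) (by omega)).symm
        rwa [show k - t - 2 + 1 = k - (t + 1) by omega, show k - t - 2 + 2 = k - t by omega,
          show k - t - 2 = k - (t + 2) by omega] at this)
      (fun t ht => by
        have := hl (k - t - 3) (by omega)
        rw [m.symm] at this
        simp only [show k - t - 3 + 1 = k - (t + 2) by omega,
          show k - t - 3 + 2 = k - (t + 1) by omega] at this
        omega) (k - j - 2) (by omega)
    simpa only [Nat.sub_zero, show k - (k - j - 2 + 1) = j + 1 by omega,
      show k - (k - j - 2 + 2) = j by omega] using this
  have h3 := hl (j - 1) (by omega)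
  simp only [show j - 1 + 1 = j by omega, show j - 1 + 2 = j + 1 by omega] at h3
  unfold Btw at *
  have := h (p i) (p (j + 1)) (p j) (p k)
  have := m.symm (p k) (p (j+1)); have := m.symm (p (j+1)) (p j); have := m.symm (p k) (p j)
  omega

/-- A geodesic joining the ends of a straight chain follows the chain. -/
theorem Hyp.chain_near {δ C : ℕ} (h : m.Hyp δ) (p : ℕ → V) (n : ℕ) (hn : 0 < n)
    (hb : ∀ j, j ≤ n → m.Btw C (p 0) (p j) (p n))
    (z : V) (hz : m.Btw 0 (p 0) z (p n)) :
    ∃ j, j < n ∧ m.Btw (2 * C + 2 * δ) (p j) z (p (j + 1)) := by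
  classical
  obtain ⟨j, hj, h1, h2⟩ : ∃ j, j < n ∧ m.d (p 0) (p j) ≤ m.d (p 0) z ∧
      m.d (p 0) z ≤ m.d (p 0) (p (j + 1)) := by
    by_contra hcon
    push Not at hcon
    have : ∀ j, j ≤ n → m.d (p 0) (p j) ≤ m.d (p 0) z := by
      intro j
      induction j with
      | zero => intro _; have := m.d_self (p 0); omega
      | succ j ih => intro hj; exact (hcon j (by omega) (ih (by omega))).le
    have h3 := hcon (n - 1) (by omega) (this _ (by omega))
    rw [show n - 1 + 1 = n by omega] at h3
    unfold Btw at hz; omega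
  refine ⟨j, hj, ?_⟩
  have b1 := hb j hj.le
  have b2 := hb (j + 1) hj
  unfold Btw at *
  have := h (p 0) (p n) (p j) z
  have := h (p 0) (p n) z (p (j + 1))
  have := m.symm (p n) (p j); have := m.symm (p n) z; have := m.symm (p n) (p (j + 1))
  have := m.tri (p 0) (p j) (p (j + 1))
  omega

end GMet

/-! ### Word metrics -/

section wlen
variable {ι : Type} [DecidableEq ι] {H : Type} [Group H] {p : FreeGroup ι →* H}

theorem wlen_le (w : FreeGroup ι) : wlen p (p w) ≤ w.norm := Nat.sInf_le ⟨w, rfl, rfl⟩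

theorem wlen_spec (hp : Surjective p) (g : H) : ∃ w, p w = g ∧ w.norm = wlen p g := by
  obtain ⟨w, hw⟩ := hp g
  exact Nat.sInf_mem (s := {n | ∃ w : FreeGroup ι, p w = g ∧ w.norm = n}) ⟨_, w, hw, rfl⟩

theorem wlen_one : wlen p 1 = 0 := by
  have := wlen_le (p := p) 1
  simpa using this

theorem wlen_mul (hp : Surjective p) (g h : H) : wlen p (g * h) ≤ wlen p g + wlen p h := by
  obtain ⟨v, rfl, hv⟩ := wlen_spec hp g
  obtain ⟨w, rfl, hw⟩ := wlen_spec hp h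
  rw [← map_mul, ← hv, ← hw]
  exact (wlen_le _).trans (FreeGroup.norm_mul_le _ _)

theorem wlen_inv (hp : Surjective p) (g : H) : wlen p g⁻¹ = wlen p g := by
  have key : ∀ g : H, wlen p g⁻¹ ≤ wlen p g := by
    intro g
    obtain ⟨v, rfl, hv⟩ := wlen_spec hp g
    rw [← map_inv, ← hv, ← FreeGroup.norm_inv_eq]
    exact wlen_le _
  exact le_antisymm (key g) (by simpa using key g⁻¹)

theorem wlen_eq_zero (hp : Surjective p) {g : H} (h : wlen p g = 0) : g = 1 := by
  obtain ⟨v, rfl, hv⟩ := wlen_spec hp g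
  rw [h, FreeGroup.norm_eq_zero] at hv
  simp [hv]

theorem wlen_split (hp : Surjective p) (g : H) (k : ℕ) (hk : k ≤ wlen p g) :
    ∃ h, wlen p h = k ∧ k + wlen p (h⁻¹ * g) = wlen p g := by
  obtain ⟨v, rfl, hv⟩ := wlen_spec hp g
  have e : v = FreeGroup.mk (v.toWord.take k) * FreeGroup.mk (v.toWord.drop k) := by
    rw [FreeGroup.mul_mk, List.take_append_drop, FreeGroup.mk_toWord]
  have l1 : (FreeGroup.mk (v.toWord.take k)).norm ≤ k :=
    FreeGroup.norm_mk_le.trans (by simp)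
  have l2 : (FreeGroup.mk (v.toWord.drop k)).norm ≤ v.norm - k :=
    FreeGroup.norm_mk_le.trans (by simp [FreeGroup.norm])
  have l3 := wlen_le (p := p) (FreeGroup.mk (v.toWord.take k))
  have l4 := wlen_le (p := p) (FreeGroup.mk (v.toWord.drop k))
  have l5 := wlen_mul hp (p (FreeGroup.mk (v.toWord.take k))) (p (FreeGroup.mk (v.toWord.drop k)))
  have e2 : p v = p (FreeGroup.mk (v.toWord.take k)) * p (FreeGroup.mk (v.toWord.drop k)) := by
    rw [← map_mul, ← e]
  refine ⟨p (FreeGroup.mk (v.toWord.take k)), ?_, ?_⟩ <;>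
  · rw [e2] at hv hk
    try rw [e2]
    try rw [inv_mul_cancel_left]
    omega

/-- The word metric. -/
noncomputable def wmet (p : FreeGroup ι →* H) (hp : Surjective p) : GMet H where
  d x y := wlen p (x⁻¹ * y)
  d_self x := by simp [wlen_one]
  eq_of x y h := by
    have := wlen_eq_zero hp h
    exact inv_mul_eq_one.mp this
  symm x y := by rw [← wlen_inv hp]; simp
  tri x y z := by
    have := wlen_mul hp (x⁻¹ * y) (y⁻¹ * z)
    simpa [mul_assoc] using this
  geo x y k hk := by
    obtain ⟨h, h1, h2⟩ := wlen_split hp _ k hk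
    exact ⟨x * h, by simpa using h1, by simpa [mul_assoc] using h2⟩

theorem wlen_of_le (i : ι) : wlen p (p (FreeGroup.of i)) ≤ 1 :=
  (wlen_le _).trans (by simp [FreeGroup.norm_of])

/-- A length function that grows by at most one along generators and can be decreased by a
suitable generator is the word length. -/
theorem wlen_eq_of (hp : Surjective p) (N : H → ℕ) (h0 : ∀ g, N g = 0 ↔ g = 1)
    (h1 : ∀ g i, N (g * p (FreeGroup.of i)) ≤ N g + 1)
    (h1' : ∀ g i, N (g * (p (FreeGroup.of i))⁻¹) ≤ N g + 1)
    (h2 : ∀ g, g ≠ 1 → ∃ g' i, N g' + 1 = N g ∧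
      (g = g' * p (FreeGroup.of i) ∨ g = g' * (p (FreeGroup.of i))⁻¹)) (g : H) :
    wlen p g = N g := by
  apply le_antisymm
  · induction hn : N g generalizing g with
    | zero => rw [(h0 g).1 hn, wlen_one]
    | succ n ih =>
      obtain ⟨g', i, h3, h4⟩ := h2 g (fun h => by rw [(h0 g).2 h] at hn; omega)
      have := ih g' (by omega)
      have := wlen_of_le (p := p) i
      have := wlen_inv hp (p (FreeGroup.of i))
      rcases h4 with rfl | rfl
      · exact (wlen_mul hp _ _).trans (by omega)
      · exact (wlen_mul hp _ _).trans (by omega)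
  · obtain ⟨w, rfl, hw⟩ := wlen_spec hp g
    rw [← hw]
    have key : ∀ (L : List (ι × Bool)) (h : H), N (h * p (FreeGroup.mk L)) ≤ N h + L.length := by
      intro L
      induction L with
      | nil => intro h; simp [← FreeGroup.one_eq_mk]
      | cons a L ih =>
        intro h
        have e : p (FreeGroup.mk (a :: L)) = p (FreeGroup.mk [a]) * p (FreeGroup.mk L) := by
          rw [← map_mul, FreeGroup.mul_mk]; simp
        rw [e, ← mul_assoc]
        refine (ih _).trans ?_
        obtain ⟨i, b⟩ := a
        have : N (h * p (FreeGroup.mk [(i, b)])) ≤ N h + 1 := by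
          cases b
          · have e' : FreeGroup.mk [(i, false)] = (FreeGroup.of i)⁻¹ := by
              simp [FreeGroup.of, FreeGroup.inv_mk, FreeGroup.invRev]
            rw [e', map_inv]; exact h1' h i
          · exact h1 h i
        simp only [List.length_cons]; omega
    have := key w.toWord 1
    rw [FreeGroup.mk_toWord, one_mul, (h0 1).2 rfl] at this
    simpa [FreeGroup.norm] using this

end wlen

/-- The path metric of a connected graph. -/
noncomputable def graphMet {V : Type} (G : SimpleGraph V) (hG : G.Connected) : GMet V where
  d := G.dist
  d_self x := by simp
  eq_of x y h := (hG.dist_eq_zero_iff).1 h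
  symm x y := G.dist_comm
  tri x y z := hG.dist_triangle
  geo x y k hk := by
    obtain ⟨w, hw⟩ := hG.exists_walk_length_eq_dist x y
    refine ⟨w.getVert k, ?_, ?_⟩ <;>
    · have h1 := SimpleGraph.dist_le (w.take k)
      have h2 := SimpleGraph.dist_le (w.drop k)
      have h3 := hG.dist_triangle (u := x) (v := w.getVert k) (w := y)
      simp only [SimpleGraph.Walk.take_length, SimpleGraph.Walk.drop_length] at h1 h2
      omega

/-! ### Guessing geodesics: hyperbolicity of a coarser metric -/

namespace GMet
variable {V : Type} {m m' : GMet V}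

theorem Btw.trans_left {x z y w} (h : m.Btw 0 x z y) (h2 : m.Btw 0 x w z) : m.Btw 0 x w y := by
  unfold Btw at *
  have := m.tri w z y; have := m.tri x w y
  omega

theorem Btw.trans_right {x z y w} (h : m.Btw 0 x z y) (h2 : m.Btw 0 z w y) : m.Btw 0 x w y := by
  unfold Btw at *
  have := m.tri x z w; have := m.tri x w y
  omega

/-- Discrete connectedness of intervals: two properties covering an interval meet. -/
theorem transition (m : GMet V) (x y : V) (P Q : V → Prop) (hPQ : ∀ z, m.Btw 0 x z y → P z ∨ Q z)
    (hx : P x) (hy : Q y) :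
    ∃ z₁ z₂, m.Btw 0 x z₁ y ∧ m.Btw 0 x z₂ y ∧ m.d z₁ z₂ ≤ 1 ∧ P z₁ ∧ Q z₂ := by
  classical
  have hex : ∃ n, ∃ z, m.Btw 0 x z y ∧ P z ∧ m.d z y = n := ⟨_, x, m.btw_left _ _ _, hx, rfl⟩
  obtain ⟨z, hz, hPz, hn⟩ := Nat.find_spec hex
  have hmin := fun k (hk : k < Nat.find hex) => Nat.find_min hex hk
  by_cases h0 : m.d z y = 0
  · obtain rfl := m.eq_of _ _ h0
    exact ⟨z, z, hz, hz, by simp [m.d_self], hPz, hy⟩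
  · obtain ⟨z', h1, h2⟩ := m.geo z y 1 (by omega)
    have hz' : m.Btw 0 x z' y := hz.trans_right (by unfold Btw; omega)
    refine ⟨z, z', hz, hz', by omega, hPz, ?_⟩
    rcases hPQ z' hz' with h | h
    · exact absurd ⟨z', hz', h, rfl⟩ (hmin _ (by omega))
    · exact h

/-- Slim triangles imply the four-point condition. -/
theorem hyp_of_slim {S : ℕ} (hS : ∀ x y u w, m.Btw 0 x u y →
    ∃ v, (m.Btw 0 x v w ∨ m.Btw 0 w v y) ∧ m.d u v ≤ S) : m.Hyp (6 * S + 4) := by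
  have hb : ∀ x y u w, m.Btw 0 x u y → m.Btw (2 * S) x u w ∨ m.Btw (2 * S) w u y := by
    intro x y u w hu
    obtain ⟨v, hv, hd⟩ := hS x y u w hu
    unfold Btw at *
    have := m.tri x v u; have := m.tri u v w; have := m.tri w v u; have := m.tri u v y
    have := m.symm v u
    omega
  have hc : ∀ x y z, ∃ u, m.Btw 0 x u y ∧ m.Btw (2 * S + 2) x u z ∧ m.Btw (2 * S + 2) z u y := by
    intro x y z
    obtain ⟨u, u', h1, -, h2, h3, h4⟩ := m.transition x y (fun u => m.Btw (2 * S) x u z)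
      (fun u => m.Btw (2 * S) z u y) (fun u hu => hb x y u z hu) (m.btw_left _ _ _)
      (m.btw_right _ _ _)
    refine ⟨u, h1, h3.mono (by omega), ?_⟩
    unfold Btw at *
    have := m.tri z u' u; have := m.tri u u' y; have := m.symm u u'
    omega
  intro x y z w
  obtain ⟨u, h1, h2, h3⟩ := hc x y z
  obtain ⟨u', h1', h2', h3'⟩ := hc x y w
  have h4 := hb x y u u' h1
  have h5 := hb x y u' u h1'
  unfold Btw at *
  have := m.tri z u w; have := m.tri u u' w
  have := m.symm z u; have := m.symm w u'; have := m.symm u u'; have := m.symm w y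
  have := m.symm z y; have := m.tri x u y; have := m.tri x u' y
  omega

theorem exists_log_bound (a b : ℕ) : ∃ D, a ≤ D ∧ ∀ R, D < R → ∃ k, 6 * R ≤ 2 ^ k ∧ a + b * k < R := by
  obtain ⟨E, hE⟩ : ∃ E, E = 2 ^ (4 * (a + 4 * b + b) + 2) := ⟨_, rfl⟩
  refine ⟨E + a, by omega, fun R hR => ⟨Nat.log 2 R + 4, ?_, ?_⟩⟩
  · have := Nat.lt_pow_succ_log_self (b := 2) (by norm_num) R
    rw [pow_succ] at this
    rw [show Nat.log 2 R + 4 = (Nat.log 2 R) + 1 + 3 by ring, pow_add, pow_add]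
    omega
  · have h1 := Nat.pow_log_le_self 2 (x := R) (by omega)
    have h2 : 4 * (a + 4 * b + b) + 2 ≤ Nat.log 2 R := by
      apply Nat.le_log_of_pow_le (by norm_num); rw [← hE]; omega
    set l := Nat.log 2 R
    obtain ⟨q, hq⟩ : ∃ q, q = l / 2 := ⟨_, rfl⟩
    have h3 : 2 ^ q * 2 ^ q ≤ 2 ^ l := by
      rw [← pow_add]; exact Nat.pow_le_pow_right (by norm_num) (by omega)
    have h4 := Nat.lt_two_pow_self (n := q)
    have h5 : (q + 1) * (q + 1) ≤ 2 ^ q * 2 ^ q := Nat.mul_le_mul h4 h4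
    have h6 : 2 * (a + 4 * b + b) + 1 ≤ q := by omega
    have h7 : (2 * (a + 4 * b + b) + 1) * (q + 1) ≤ q * (q + 1) := Nat.mul_le_mul_right _ h6
    have h8 : l ≤ 2 * q + 1 := by omega
    have h9 : b * l ≤ b * (2 * q + 1) := Nat.mul_le_mul_left _ h8
    nlinarith

/-- The logarithmic estimate: an `m`-interval stays close to the corresponding `m'`-interval,
up to an error linear in the logarithm of the length. -/
theorem Hyp.log_near {δ h : ℕ} (H : m.Hyp δ) (hle : ∀ x y, m'.d x y ≤ m.d x y)
    (hloc : ∀ x y z, m'.d x y ≤ 1 → m.Btw 0 x z y → m'.d x z ≤ h) (k : ℕ) :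
    ∀ x y z, m'.d x y ≤ 2 ^ k → m.Btw 0 x z y →
      ∃ u, m'.Btw 0 x u y ∧ m'.d z u ≤ 2 * δ * k + h := by
  induction k with
  | zero =>
    intro x y z h1 h2
    refine ⟨x, m'.btw_left _ _ _, ?_⟩
    rw [m'.symm]
    have := hloc x y z (by simpa using h1) h2
    omega
  | succ k ih =>
    intro x y z h1 h2
    obtain ⟨w, h3, h4⟩ := m'.geo x y (m'.d x y / 2) (by omega)
    have hw : m'.Btw 0 x w y := by unfold Btw; omega
    rw [pow_succ] at h1
    obtain ⟨z', h5, h6⟩ := H.thin w h2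
    have h7 := hle z z'
    rcases h5 with h5 | h5
    · obtain ⟨u, h8, h9⟩ := ih x w z' (by omega) h5
      refine ⟨u, hw.trans_left h8, ?_⟩
      have := m'.tri z z' u
      rw [mul_add]; omega
    · obtain ⟨u, h8, h9⟩ := ih w y z' (by omega) h5
      refine ⟨u, hw.trans_right h8, ?_⟩
      have := m'.tri z z' u
      rw [mul_add]; omega

/-- The uniform estimate, obtained from the logarithmic one by improving the constant. -/
theorem Hyp.unif_near {δ h D : ℕ} (H : m.Hyp δ) (hle : ∀ x y, m'.d x y ≤ m.d x y)
    (hloc : ∀ x y z, m'.d x y ≤ 1 → m.Btw 0 x z y → m'.d x z ≤ h)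
    (hD : 4 * δ + h ≤ D)
    (hlog : ∀ R, D < R → ∃ k, 6 * R ≤ 2 ^ k ∧ (4 * δ + h) + (2 * δ) * k < R)
    (x y z : V) (hz : m.Btw 0 x z y) : ∃ u, m'.Btw 0 x u y ∧ m'.d z u ≤ D := by
  set n := m'.d x y with hn
  let P : ℕ → Prop := fun R => ∀ x y z, m'.d x y ≤ n → m.Btw 0 x z y →
    ∃ u, m'.Btw 0 x u y ∧ m'.d z u ≤ R
  have base : P (2 * δ * n + h) := fun x y z hxy hz =>
    H.log_near hle hloc n x y z (hxy.trans Nat.lt_two_pow_self.le) hz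
  have step : ∀ R, D ≤ R → P (R + 1) → P R := by
    intro R hR hP x y z hxy hz
    obtain ⟨q, hq, hzq⟩ := hP x y z hxy hz
    obtain ⟨k, hk1, hk2⟩ := hlog (R + 1) (by omega)
    -- points at distance `3 (R+1)` from `q` along the `m'`-interval
    obtain ⟨p₁, hp₁, hp₁'⟩ := m'.exists_pt q x (3 * (R + 1))
    obtain ⟨p₂, hp₂, hp₂'⟩ := m'.exists_pt q y (3 * (R + 1))
    obtain ⟨v, hv, hzv⟩ := H.thin p₁ hz
    have hv' : ∃ v, (m.Btw 0 x v p₁ ∨ m.Btw 0 p₁ v p₂ ∨ m.Btw 0 p₂ v y) ∧ m.d z v ≤ 4 * δ := by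
      rcases hv with hv | hv
      · exact ⟨v, Or.inl hv, by omega⟩
      · obtain ⟨v', h1, h2⟩ := H.thin p₂ hv
        exact ⟨v', Or.inr h1, by have := m.tri z v v'; omega⟩
    clear hv hzv v
    obtain ⟨v, hv, hzv⟩ := hv'
    have hzv' := (hle z v).trans hzv
    have hb₁ : m'.Btw 0 x p₁ q := hp₁.symm
    have hb₂ := hp₂
    have hxp₁ : m'.d x p₁ ≤ n := by unfold Btw at *; omega
    have hyp₂ : m'.d p₂ y ≤ n := by unfold Btw at *; omega
    rcases hv with hv | hv | hv
    · rcases hp₁' with h1 | ⟨h1, rfl⟩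
      · exfalso
        obtain ⟨u, hu, hu'⟩ := hP _ _ _ hxp₁ hv
        have := m'.tri z v u; have := m'.tri q z u; have := m'.symm q z
        have hb := m'.tri x u q
        have := m'.symm u q
        have := m'.symm p₁ q
        unfold Btw at *
        omega
      · -- here `p₁ = x`, so `v = x` is an end point of the interval
        refine ⟨p₁, m'.btw_left _ _ _, ?_⟩
        obtain rfl : v = p₁ := by
          apply m.eq_of
          unfold Btw at hv; have := m.symm p₁ v; have := m.d_self p₁; omega
        omega
    · have h6 : m'.d p₁ p₂ ≤ 2 ^ k := by
        have := m'.tri p₁ q p₂; have := m'.symm p₁ q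
        unfold Btw at *; omega
      obtain ⟨u, hu, hu'⟩ := H.log_near hle hloc k _ _ _ h6 hv
      refine ⟨u, ?_, ?_⟩
      · have := m'.tri x p₁ u; have := m'.tri u p₂ y; have := m'.tri p₁ q p₂
        unfold Btw at *; omega
      · have := m'.tri z v u
        omega
    · rcases hp₂' with h1 | ⟨h1, rfl⟩
      · exfalso
        obtain ⟨u, hu, hu'⟩ := hP _ _ _ hyp₂ hv
        have := m'.tri z v u; have := m'.tri q z u; have := m'.symm q z
        have hb := m'.tri q u y
        unfold Btw at *
        omega
      · refine ⟨p₂, m'.btw_right _ _ _, ?_⟩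
        obtain rfl : p₂ = v := by
          apply m.eq_of
          unfold Btw at hv; have := m.d_self p₂; omega
        omega
  have all : ∀ t, P (D + t) → P D := by
    intro t
    induction t with
    | zero => exact id
    | succ t ih => exact fun hp => ih (step _ (by omega) hp)
  have base' : P (D + (2 * δ * n + h)) := by
    intro x y z h1 h2
    obtain ⟨u, h3, h4⟩ := base x y z h1 h2
    exact ⟨u, h3, by omega⟩
  exact all _ base' x y z le_rfl hz

theorem guess_aux {δ D : ℕ} (H : m.Hyp δ) (hle : ∀ x y, m'.d x y ≤ m.d x y)
    (near : ∀ x y z, m.Btw 0 x z y → ∃ u, m'.Btw 0 x u y ∧ m'.d z u ≤ D)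
    (x y u : V) (hu : m'.Btw 0 x u y) : ∃ z, m.Btw 0 x z y ∧ m'.d u z ≤ 3 * D + 6 * δ + 1 := by
  obtain ⟨z₁, z₂, h1, h2, h3, ⟨v₁, h4, h4'⟩, ⟨v₂, h5, h5'⟩⟩ := m.transition x y
    (fun z => ∃ v, m'.Btw 0 x v u ∧ m'.d z v ≤ D + 2 * δ)
    (fun z => ∃ v, m'.Btw 0 u v y ∧ m'.d z v ≤ D + 2 * δ)
    (fun z hz => by
      obtain ⟨z', h1, h2⟩ := H.thin u hz
      have := hle z z'
      rcases h1 with h1 | h1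
      · obtain ⟨v, hv, hv'⟩ := near _ _ _ h1
        exact Or.inl ⟨v, hv, by have := m'.tri z z' v; omega⟩
      · obtain ⟨v, hv, hv'⟩ := near _ _ _ h1
        exact Or.inr ⟨v, hv, by have := m'.tri z z' v; omega⟩)
    ⟨x, m'.btw_left _ _ _, by simp [m'.d_self]⟩ ⟨y, m'.btw_right _ _ _, by simp [m'.d_self]⟩
  refine ⟨z₁, h1, ?_⟩
  have := hle z₁ z₂
  have := m'.tri z₁ z₂ v₂; have := m'.tri v₁ z₁ v₂; have := m'.symm v₁ z₁
  have := m'.tri x v₁ v₂; have := m'.tri x v₂ y; have := m'.tri u v₁ z₁; have := m'.symm u v₁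
  unfold Btw at *
  omega

/-- If `m` is hyperbolic and `m'` is a coarser metric in which `m`-intervals with `m'`-close ends
are bounded, then `m'` is hyperbolic and intervals of `m` and `m'` with the same ends are close. -/
theorem guess (δ h : ℕ) : ∃ D, ∀ (V : Type) (m m' : GMet V), m.Hyp δ →
    (∀ x y, m'.d x y ≤ m.d x y) → (∀ x y z, m'.d x y ≤ 1 → m.Btw 0 x z y → m'.d x z ≤ h) →
    m'.Hyp D ∧ (∀ x y z, m.Btw 0 x z y → ∃ u, m'.Btw 0 x u y ∧ m'.d z u ≤ D) ∧
      (∀ x y u, m'.Btw 0 x u y → ∃ z, m.Btw 0 x z y ∧ m'.d u z ≤ D) := by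
  obtain ⟨D, hD, hlog⟩ := exists_log_bound (4 * δ + h) (2 * δ)
  refine ⟨6 * (4 * D + 8 * δ + 1) + 4, fun V m m' H hle hloc => ?_⟩
  have near := H.unif_near hle hloc hD hlog
  refine ⟨hyp_of_slim fun x y u w hu => ?_, fun x y z hz => ?_, fun x y u hu => ?_⟩
  · obtain ⟨z, h1, h2⟩ := guess_aux H hle near x y u hu
    obtain ⟨z', h3, h4⟩ := H.thin w h1
    have := hle z z'
    have := m'.tri u z z'
    rcases h3 with h3 | h3
    · obtain ⟨v, hv, hv'⟩ := near _ _ _ h3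
      exact ⟨v, Or.inl hv, by have := m'.tri u z' v; omega⟩
    · obtain ⟨v, hv, hv'⟩ := near _ _ _ h3
      exact ⟨v, Or.inr hv, by have := m'.tri u z' v; omega⟩
  · obtain ⟨u, h1, h2⟩ := near x y z hz
    exact ⟨u, h1, by omega⟩
  · obtain ⟨z, h1, h2⟩ := guess_aux H hle near x y u hu
    exact ⟨z, h1, by omega⟩

end GMet

/-! ### Coning off a family of quasiconvex subsets -/

namespace GMet
variable {V : Type} {m : GMet V}

/-- `Y` is `κ`-quasiconvex. -/
def QC (m : GMet V) (κ : ℕ) (Y : Set V) : Prop :=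
  ∀ x ∈ Y, ∀ y ∈ Y, ∀ z, m.Btw 0 x z y → ∃ u ∈ Y, m.d z u ≤ κ

/-- The part of `Z` that is `C`-close to `Y` has diameter at most `c`. -/
def Ov (m : GMet V) (C c : ℕ) (Y Z : Set V) : Prop :=
  ∀ x ∈ Y, ∀ x' ∈ Y, ∀ y ∈ Z, ∀ y' ∈ Z, m.d x y ≤ C → m.d x' y' ≤ C → m.d y y' ≤ c

/-- `p` is a point of `Z` nearest to `x`. -/
def Near (m : GMet V) (Z : Set V) (x p : V) : Prop := p ∈ Z ∧ ∀ q ∈ Z, m.d x p ≤ m.d x q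

theorem exists_near (m : GMet V) {Z : Set V} (hZ : Z.Nonempty) (x : V) : ∃ p, m.Near Z x p := by
  classical
  have hex : ∃ n, ∃ p ∈ Z, m.d x p = n := by
    obtain ⟨p, hp⟩ := hZ; exact ⟨_, p, hp, rfl⟩
  obtain ⟨p, hp, hn⟩ := Nat.find_spec hex
  exact ⟨p, hp, fun q hq => by rw [hn]; exact Nat.find_min' hex ⟨q, hq, rfl⟩⟩

theorem Near.self {Z : Set V} {x p : V} (h : m.Near Z x p) (hx : x ∈ Z) : p = x := by
  have := h.2 x hx
  rw [m.d_self] at this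
  exact (m.eq_of _ _ (by omega)).symm

/-- A discrete geodesic as a sequence of points. -/
theorem exists_geod (m : GMet V) (n : ℕ) : ∀ x y, m.d x y = n →
    ∃ v : ℕ → V, v 0 = x ∧ v n = y ∧ ∀ i j, i ≤ j → j ≤ n → m.d (v i) (v j) = j - i := by
  induction n with
  | zero =>
    intro x y h
    refine ⟨fun _ => x, rfl, m.eq_of _ _ h, fun i j _ hj => ?_⟩
    rw [m.d_self]; omega
  | succ n ih =>
    intro x y h
    obtain ⟨z, h1, h2⟩ := m.geo x y n (by omega)
    obtain ⟨v, hv0, hvn, hv⟩ := ih x z h1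
    refine ⟨fun i => if i ≤ n then v i else y, by simp [hv0], by simp, fun i j hij hj => ?_⟩
    by_cases hjn : j ≤ n
    · simp only [hjn, (hij.trans hjn : i ≤ n), if_true]; exact hv i j hij hjn
    · obtain rfl : j = n + 1 := by omega
      by_cases hi : i ≤ n
      · simp only [hi, if_true, hjn, if_false]
        have a := hv i n hi le_rfl; have b := hv 0 i (by omega) hi
        rw [hv0] at b; rw [hvn] at a
        have := m.tri (v i) z y; have := m.tri x (v i) y
        omega
      · obtain rfl : i = n + 1 := by omega
        simp [m.d_self]

/-- The projection constant. -/
def k0 (δ κ : ℕ) : ℕ := 2 * κ + 2 * δ + 1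

/-- The neighbourhood in which overlaps are measured. -/
def k1 (δ κ : ℕ) : ℕ := 2 * k0 δ κ + 2 * δ + κ

theorem Hyp.near_btw {δ κ : ℕ} (h : m.Hyp δ) {Z : Set V} (hZ : m.QC κ Z) {x p q : V}
    (hp : m.Near Z x p) (hq : q ∈ Z) : m.Btw (k0 δ κ) x p q := by
  obtain ⟨w, hw, hw'⟩ := m.exists_pt p q (κ + δ + 1)
  obtain ⟨u, hu, hu'⟩ := hZ p hp.1 q hq w hw
  have := hp.2 u hu
  have := m.tri x w u; have := m.tri x q p; have := m.symm q p; have := m.tri x p q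
  have := h x w p q
  have := m.symm w q; have := m.symm w p
  have := hp.2 q hq
  unfold Btw k0 at *
  rcases hw' with hw' | ⟨hw', rfl⟩ <;> omega

theorem Hyp.near_near {δ κ : ℕ} (h : m.Hyp δ) {Z : Set V} (hZ : m.QC κ Z) {x y p q : V}
    (hp : m.Near Z x p) (hq : m.Near Z y q) (hpq : k0 δ κ + δ < m.d p q) :
    m.d x p + m.d p q + m.d q y ≤ m.d x y + 2 * k0 δ κ + δ := by
  have h1 := h.near_btw hZ hp hq.1
  have h2 := h.near_btw hZ hq hp.1
  have := h x q p y
  have := m.symm y q; have := m.symm q p; have := m.symm y p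
  unfold Btw at *
  omega

/-- Nearest points on `Z` of the ends of an edge, or of two points of a quasiconvex set having
bounded overlap with `Z`, are close. -/
theorem Hyp.near_lip {δ κ c : ℕ} (h : m.Hyp δ) {Z : Set V} (hZ : m.QC κ Z) {x y p q : V}
    (hp : m.Near Z x p) (hq : m.Near Z y q)
    (hxy : m.d x y ≤ 1 ∨ ∃ Y, m.QC κ Y ∧ m.Ov (k1 δ κ) c Y Z ∧ x ∈ Y ∧ y ∈ Y) :
    m.d p q ≤ 2 * k0 δ κ + δ + 1 + c := by
  by_contra hcon
  have h1 := h.near_near hZ hp hq (by omega)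
  rcases hxy with hxy | ⟨Y, hY, hO, hx, hy⟩
  · omega
  · have b1 : m.Btw (2 * k0 δ κ + δ) x p y := by
      unfold Btw; have := m.tri p q y; omega
    have b2 : m.Btw (2 * k0 δ κ + δ) x q y := by
      unfold Btw; have := m.tri x p q; omega
    obtain ⟨p₁, hp₁, hp₁'⟩ := h.btw_near b1
    obtain ⟨q₁, hq₁, hq₁'⟩ := h.btw_near b2
    obtain ⟨p₂, hp₂, hp₂'⟩ := hY x hx y hy _ hp₁
    obtain ⟨q₂, hq₂, hq₂'⟩ := hY x hx y hy _ hq₁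
    have := hO p₂ hp₂ q₂ hq₂ p hp.1 q hq.1
      (by have := m.tri p p₁ p₂; have := m.symm p p₂; unfold k1; omega)
      (by have := m.tri q q₁ q₂; have := m.symm q q₂; unfold k1; omega)
    omega

/-- The graph obtained from the unit-distance graph by joining any two points of each member of
the family `𝕐`. -/
def coneGraph (m : GMet V) (𝕐 : Set (Set V)) : SimpleGraph V where
  Adj x y := x ≠ y ∧ (m.d x y = 1 ∨ ∃ Y ∈ 𝕐, x ∈ Y ∧ y ∈ Y)
  symm := ⟨by
    rintro x y ⟨h, h'⟩
    refine ⟨h.symm, ?_⟩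
    rw [m.symm]
    rcases h' with h' | ⟨Y, hY, h1, h2⟩
    · exact Or.inl h'
    · exact Or.inr ⟨Y, hY, h2, h1⟩⟩
  loopless := ⟨by rintro x ⟨h, -⟩; exact h rfl⟩

theorem cone_walk (m : GMet V) (𝕐 : Set (Set V)) (n : ℕ) : ∀ x y, m.d x y = n →
    ∃ w : (coneGraph m 𝕐).Walk x y, w.length = n := by
  induction n with
  | zero => intro x y h; obtain rfl := m.eq_of _ _ h; exact ⟨.nil, rfl⟩
  | succ n ih =>
    intro x y h
    obtain ⟨z, h1, h2⟩ := m.geo x y 1 (by omega)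
    obtain ⟨w, hw⟩ := ih z y (by omega)
    have adj : (coneGraph m 𝕐).Adj x z :=
      ⟨by rintro rfl; rw [m.d_self] at h1; omega, Or.inl h1⟩
    exact ⟨.cons adj w, by simp [hw]⟩

theorem cone_conn [Nonempty V] (m : GMet V) (𝕐 : Set (Set V)) : (coneGraph m 𝕐).Connected where
  preconnected x y := (cone_walk m 𝕐 _ x y rfl).choose.reachable

/-- The cone-off metric. -/
noncomputable def cone [Nonempty V] (m : GMet V) (𝕐 : Set (Set V)) : GMet V :=
  graphMet _ (cone_conn m 𝕐)

variable [Nonempty V] {𝕐 : Set (Set V)}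

theorem cone_le (m : GMet V) (𝕐 : Set (Set V)) (x y : V) : (cone m 𝕐).d x y ≤ m.d x y := by
  obtain ⟨w, hw⟩ := cone_walk m 𝕐 _ x y rfl
  rw [← hw]; exact SimpleGraph.dist_le w

theorem cone_in {Y : Set V} (hY : Y ∈ 𝕐) {x y : V} (hx : x ∈ Y) (hy : y ∈ Y) :
    (cone m 𝕐).d x y ≤ 1 := by
  by_cases h : x = y
  · subst h; rw [(cone m 𝕐).d_self]; omega
  · have : (coneGraph m 𝕐).Adj x y := ⟨h, Or.inr ⟨Y, hY, hx, hy⟩⟩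
    exact (SimpleGraph.dist_eq_one_iff_adj.2 this).le

theorem cone_edge {x y : V} (h : (cone m 𝕐).d x y ≤ 1) :
    m.d x y ≤ 1 ∨ ∃ Y ∈ 𝕐, x ∈ Y ∧ y ∈ Y := by
  rcases Nat.le_one_iff_eq_zero_or_eq_one.1 h with h | h
  · left; rw [(cone m 𝕐).eq_of _ _ h, m.d_self]; omega
  · rcases (SimpleGraph.dist_eq_one_iff_adj.1 h).2 with h | h
    · left; omega
    · exact Or.inr h

theorem cone_map (f : V → V) (hf : ∀ x y, m.d (f x) (f y) = m.d x y)
    (h𝕐 : ∀ Y ∈ 𝕐, f '' Y ∈ 𝕐) (x y : V) : (cone m 𝕐).d (f x) (f y) ≤ (cone m 𝕐).d x y := by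
  have hom : ∀ a b, (coneGraph m 𝕐).Adj a b → (coneGraph m 𝕐).Adj (f a) (f b) := by
    rintro a b ⟨h, h'⟩
    refine ⟨fun e => h (m.eq_of _ _ (by rw [← hf, e, m.d_self])), ?_⟩
    rcases h' with h' | ⟨Y, hY, h1, h2⟩
    · left; rwa [hf]
    · exact Or.inr ⟨_, h𝕐 Y hY, ⟨a, h1, rfl⟩, ⟨b, h2, rfl⟩⟩
  obtain ⟨w, hw⟩ := (cone_conn m 𝕐).exists_walk_length_eq_dist x y
  let F : coneGraph m 𝕐 →g coneGraph m 𝕐 := ⟨f, fun {a b} h => hom a b h⟩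
  calc (cone m 𝕐).d (f x) (f y) ≤ (w.map F).length := SimpleGraph.dist_le _
    _ = w.length := by simp
    _ = (cone m 𝕐).d x y := hw

/-- The hypotheses on a family of subsets under which its cone-off is controlled. -/
structure ConeHyp (m : GMet V) (𝕐 : Set (Set V)) (δ κ c : ℕ) : Prop where
  hyp : m.Hyp δ
  qc : ∀ Y ∈ 𝕐, m.QC κ Y
  ne : ∀ Y ∈ 𝕐, Y.Nonempty
  ov : ∀ Y ∈ 𝕐, ∀ Z ∈ 𝕐, Y ≠ Z → m.Ov (k1 δ κ) c Y Z

/-- The hyperbolicity constant of the cone-off, which also bounds the distance between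
corresponding intervals. -/
noncomputable def kD (δ κ : ℕ) : ℕ := (guess δ (κ + 1)).choose

theorem ConeHyp.guess {δ κ c : ℕ} (h : ConeHyp m 𝕐 δ κ c) :
    (cone m 𝕐).Hyp (kD δ κ) ∧
    (∀ x y z, m.Btw 0 x z y → ∃ u, (cone m 𝕐).Btw 0 x u y ∧ (cone m 𝕐).d z u ≤ kD δ κ) ∧
      (∀ x y u, (cone m 𝕐).Btw 0 x u y → ∃ z, m.Btw 0 x z y ∧ (cone m 𝕐).d u z ≤ kD δ κ) := by
  refine (GMet.guess δ (κ + 1)).choose_spec V m (cone m 𝕐) h.hyp (cone_le m 𝕐) ?_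
  intro x y z h1 h2
  rcases cone_edge h1 with h1 | ⟨Y, hY, hx, hy⟩
  · have := cone_le m 𝕐 x z
    unfold Btw at h2; omega
  · obtain ⟨u, hu, hu'⟩ := h.qc Y hY x hx y hy z h2
    have := cone_in (m := m) hY hx hu
    have := cone_le m 𝕐 z u
    have := (cone m 𝕐).tri x u z; have := (cone m 𝕐).symm z u
    omega

/-- The contact constant. -/
noncomputable def k2 (δ κ : ℕ) : ℕ := 2 * kD δ κ + 2 * k0 δ κ + 2 * δ

/-- If nearest points on `Z` are far apart, a cone-off geodesic comes close to `Z`. -/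
theorem ConeHyp.contact {δ κ c : ℕ} (h : ConeHyp m 𝕐 δ κ c) {Z : Set V} (hZ : m.QC κ Z)
    {x y p q : V} (hp : m.Near Z x p) (hq : m.Near Z y q) (hpq : k0 δ κ + δ < m.d p q)
    (n : ℕ) (v : ℕ → V) (h0 : v 0 = x) (hn : v n = y)
    (hv : ∀ i j, i ≤ j → j ≤ n → (cone m 𝕐).d (v i) (v j) = j - i) :
    ∃ i ≤ n, ∃ z ∈ Z, (cone m 𝕐).d (v i) z ≤ k2 δ κ := by
  have h1 := h.hyp.near_near hZ hp hq hpq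
  have b1 : m.Btw (2 * k0 δ κ + δ) x p y := by
    unfold Btw; have := m.tri p q y; omega
  obtain ⟨p₁, hp₁, hp₁'⟩ := h.hyp.btw_near b1
  obtain ⟨u, hu, hu'⟩ := h.guess.2.1 _ _ _ hp₁
  have e := hv 0 n (by omega) le_rfl
  rw [h0, hn] at e
  have hun : (cone m 𝕐).d x u ≤ n := by unfold Btw at hu; omega
  have e1 := hv 0 _ (by omega) hun
  have e2 := hv _ n hun le_rfl
  rw [h0] at e1; rw [hn] at e2
  refine ⟨_, hun, p, hp.1, ?_⟩
  have := h.guess.1.btw_close (c := 0) (e := 0) hu (z' := v ((cone m 𝕐).d x u))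
    (by unfold Btw; omega) (by omega) (by omega)
  have := (cone m 𝕐).tri (v ((cone m 𝕐).d x u)) u p
  have := (cone m 𝕐).tri u p₁ p
  have := cone_le m 𝕐 p p₁
  have := (cone m 𝕐).symm u p₁; have := (cone m 𝕐).symm p₁ p
  have := (cone m 𝕐).symm (v ((cone m 𝕐).d x u)) u
  unfold k2
  omega

/-- The Lipschitz constant of projections along edges. -/
def k3 (δ κ c : ℕ) : ℕ := 2 * k0 δ κ + δ + 1 + c

/-- The constant of the bounded-image property. -/
noncomputable def k4 (δ κ c : ℕ) : ℕ := 2 * (k0 δ κ + δ) + (2 * k2 δ κ + 3) * k3 δ κ c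

/-- Nearest points on `Z` of the vertices of a path vary slowly, as long as the path does not
use an edge inside `Z`. -/
theorem ConeHyp.near_lip {δ κ c : ℕ} (h : ConeHyp m 𝕐 δ κ c) {Z : Set V} (hZ : m.QC κ Z)
    (v : ℕ → V) (n : ℕ) (hv : ∀ i, i < n → (cone m 𝕐).d (v i) (v (i + 1)) ≤ 1)
    (hO : ∀ i, i < n → ∀ Y ∈ 𝕐, v i ∈ Y → v (i + 1) ∈ Y → m.Ov (k1 δ κ) c Y Z)
    (π : V → V) (hπ : ∀ x, m.Near Z x (π x)) (i j : ℕ) (hij : i ≤ j) (hj : j ≤ n) :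
    m.d (π (v i)) (π (v j)) ≤ (j - i) * k3 δ κ c := by
  induction j, hij using Nat.le_induction with
  | base => simp [m.d_self]
  | succ j hij ih =>
    have h1 := ih (by omega)
    have h2 : m.d (π (v j)) (π (v (j + 1))) ≤ k3 δ κ c := by
      refine h.hyp.near_lip hZ (hπ _) (hπ _) ?_
      rcases cone_edge (hv j (by omega)) with h3 | ⟨Y, hY, h3, h4⟩
      · exact Or.inl h3
      · exact Or.inr ⟨Y, h.qc Y hY, hO j (by omega) Y hY h3 h4, h3, h4⟩
    have := m.tri (π (v i)) (π (v j)) (π (v (j + 1)))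
    rw [show j + 1 - i = (j - i) + 1 by omega, add_mul]; omega

/-- Nearest-point projection to a quasiconvex set having bounded overlap with all members of the
family is Lipschitz on the cone-off. -/
theorem ConeHyp.proj_lip {δ κ c : ℕ} (h : ConeHyp m 𝕐 δ κ c) {Z : Set V} (hZ : m.QC κ Z)
    (hO : ∀ Y ∈ 𝕐, m.Ov (k1 δ κ) c Y Z) (π : V → V) (hπ : ∀ x, m.Near Z x (π x)) (x y : V) :
    m.d (π x) (π y) ≤ (cone m 𝕐).d x y * k3 δ κ c := by
  obtain ⟨v, h0, hn, hv⟩ := (cone m 𝕐).exists_geod _ x y rfl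
  have := h.near_lip hZ v _ (fun i hi => by rw [hv i (i + 1) (by omega) hi]; omega)
    (fun i _ Y hY _ _ => hO Y hY) π hπ 0 _ (by omega) le_rfl
  rwa [h0, hn] at this

/-- Bounded image: a cone-off geodesic without edges in `Z ∈ 𝕐` projects to a bounded subset
of `Z`. -/
theorem ConeHyp.bdd_image {δ κ c : ℕ} (h : ConeHyp m 𝕐 δ κ c) {Z : Set V} (hZ : Z ∈ 𝕐)
    (π : V → V) (hπ : ∀ x, m.Near Z x (π x))
    (n : ℕ) (v : ℕ → V)
    (hv : ∀ i j, i ≤ j → j ≤ n → (cone m 𝕐).d (v i) (v j) = j - i)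
    (hno : ∀ i, i < n → ¬ (v i ∈ Z ∧ v (i + 1) ∈ Z)) :
    m.d (π (v 0)) (π (v n)) ≤ k4 δ κ c := by
  classical
  have lip := h.near_lip (h.qc Z hZ) v n (fun i hi => by rw [hv i (i + 1) (by omega) hi]; omega)
    (fun i hi Y hY h1 h2 => h.ov Y hY Z hZ (by rintro rfl; exact hno i hi ⟨h1, h2⟩)) π hπ
  let P : ℕ → Prop := fun i => i ≤ n ∧ ∃ z ∈ Z, (cone m 𝕐).d (v i) z ≤ k2 δ κ
  have far : ∀ a b, a ≤ b → b ≤ n → (∀ i, a ≤ i → i ≤ b → ¬ P i) →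
      m.d (π (v a)) (π (v b)) ≤ k0 δ κ + δ := by
    intro a b hab hb hP
    by_contra hcon
    obtain ⟨i, hi, z, hz, hd⟩ := h.contact (h.qc Z hZ) (hπ (v a)) (hπ (v b)) (by omega) (b - a)
      (fun i => v (a + i)) rfl (by simp [hab])
      (fun i j h1 h2 => by rw [hv (a + i) (a + j) (by omega) (by omega)]; omega)
    exact hP (a + i) (by omega) (by omega) ⟨by omega, z, hz, hd⟩
  by_cases hex : ∃ i, P i
  · set a := Nat.find hex with ha
    have hPa : P a := Nat.find_spec hex
    set b := Nat.findGreatest P n with hb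
    have hPb : P b := Nat.findGreatest_spec hPa.1 hPa
    have hab : a ≤ b := Nat.le_findGreatest hPa.1 hPa
    have hbn : b ≤ n := hPb.1
    obtain ⟨-, z, hz, hz'⟩ := hPa
    obtain ⟨-, z', hz₁, hz₁'⟩ := hPb
    have hba : b - a ≤ 2 * k2 δ κ + 1 := by
      have := hv a b hab hbn
      have := (cone m 𝕐).tri (v a) z (v b); have := (cone m 𝕐).tri z z' (v b)
      have := cone_in (m := m) hZ hz hz₁; have := (cone m 𝕐).symm z' (v b)
      omega
    have e1 : m.d (π (v 0)) (π (v a)) ≤ k0 δ κ + δ + k3 δ κ c := by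
      by_cases h0 : a = 0
      · rw [h0, m.d_self]; omega
      · have h1 := far 0 (a - 1) (by omega) (by omega) (fun i _ hi => Nat.find_min hex (by omega))
        have h2 := lip (a - 1) a (by omega) (by omega)
        rw [show a - (a - 1) = 1 by omega, one_mul] at h2
        have := m.tri (π (v 0)) (π (v (a - 1))) (π (v a))
        omega
    have e2 : m.d (π (v b)) (π (v n)) ≤ k0 δ κ + δ + k3 δ κ c := by
      by_cases h0 : b = n
      · rw [h0, m.d_self]; omega
      · have h1 := far (b + 1) n (by omega) le_rfl
          (fun i hi hi' => Nat.findGreatest_is_greatest (by omega) hi')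
        have h2 := lip b (b + 1) (by omega) (by omega)
        rw [show b + 1 - b = 1 by omega, one_mul] at h2
        have := m.tri (π (v b)) (π (v (b + 1))) (π (v n))
        omega
    have e3 := lip a b hab hbn
    have e4 : (b - a) * k3 δ κ c ≤ (2 * k2 δ κ + 1) * k3 δ κ c := Nat.mul_le_mul_right _ hba
    have := m.tri (π (v 0)) (π (v a)) (π (v n)); have := m.tri (π (v a)) (π (v b)) (π (v n))
    have e5 : k4 δ κ c = 2 * (k0 δ κ + δ) + (2 * k2 δ κ + 1) * k3 δ κ c + 2 * k3 δ κ c := by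
      unfold k4; ring
    omega
  · have := far 0 n (by omega) le_rfl (fun i _ _ hi => hex ⟨i, hi⟩)
    unfold k4; omega

/-- The projection constant of the cone-off: it is linear in the overlap constant `c`. -/
noncomputable def kθ (δ κ c : ℕ) : ℕ := 3 * k4 δ κ c + c + 1

theorem ConeHyp.near_cone {δ κ c : ℕ} (h : ConeHyp m 𝕐 δ κ c) {Z : Set V} (hZ : Z ∈ 𝕐)
    {x p z : V} (hp : m.Near Z x p) (hz : (cone m 𝕐).Near Z x z) : m.d p z ≤ k4 δ κ c := by
  classical
  choose π hπ using fun x => m.exists_near (h.ne Z hZ) x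
  obtain ⟨v, h0, hn, hv⟩ := (cone m 𝕐).exists_geod _ x z rfl
  let π' : V → V := fun y => if y = x then p else π y
  have hπ' : ∀ y, m.Near Z y (π' y) := by
    intro y; by_cases e : y = x
    · simpa [π', e] using hp
    · simpa [π', e] using hπ y
  have := h.bdd_image hZ π' hπ' _ v hv (fun i hi hcon => by
    have h1 := hz.2 _ hcon.1
    have h2 := hv 0 i (by omega) (by omega)
    rw [h0] at h2; omega)
  rw [h0, hn, (hπ' z).self hz.1] at this
  simpa [π'] using this

/-- If the projections of `x` and `y` to `Z ∈ 𝕐` are far apart then cone-off geodesics between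
`x` and `y` pass through `Z`. -/
theorem ConeHyp.through {δ κ c : ℕ} (h : ConeHyp m 𝕐 δ κ c) {Z : Set V} (hZ : Z ∈ 𝕐)
    {x y z z' : V} (hz : (cone m 𝕐).Near Z x z) (hz' : (cone m 𝕐).Near Z y z')
    (hd : kθ δ κ c < m.d z z') :
    (cone m 𝕐).d x y = (cone m 𝕐).d x z + 1 + (cone m 𝕐).d z' y := by
  classical
  choose π hπ using fun x => m.exists_near (h.ne Z hZ) x
  obtain ⟨v, h0, hn, hv⟩ := (cone m 𝕐).exists_geod _ x y rfl
  have h1 := h.near_cone hZ (hπ x) hz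
  have h2 := h.near_cone hZ (hπ y) hz'
  by_cases hno : ∀ i, i < (cone m 𝕐).d x y → ¬ (v i ∈ Z ∧ v (i + 1) ∈ Z)
  · exfalso
    have h3 := h.bdd_image hZ π hπ _ v hv hno
    rw [h0, hn] at h3
    have := m.tri z (π x) z'; have := m.tri (π x) (π y) z'; have := m.symm z (π x)
    unfold kθ at hd
    omega
  · push Not at hno
    obtain ⟨i, hi, hi1, hi2⟩ := hno
    have e1 := hv 0 i (by omega) (by omega)
    have e2 := hv (i + 1) _ hi le_rfl
    rw [h0] at e1; rw [hn] at e2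
    have := hz.2 _ hi1
    have := hz'.2 _ hi2
    have := (cone m 𝕐).symm y z'; have := (cone m 𝕐).symm y (v (i + 1))
    have := (cone m 𝕐).tri x z y; have := (cone m 𝕐).tri z z' y
    have := cone_in (m := m) hZ hz.1 hz'.1
    omega

theorem ConeHyp.near_diam {δ κ c : ℕ} (h : ConeHyp m 𝕐 δ κ c) {Z : Set V} (hZ : Z ∈ 𝕐)
    {x z z' : V} (hz : (cone m 𝕐).Near Z x z) (hz' : (cone m 𝕐).Near Z x z') :
    m.d z z' ≤ kθ δ κ c := by
  obtain ⟨p, hp⟩ := m.exists_near (h.ne Z hZ) x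
  have := h.near_cone hZ hp hz
  have := h.near_cone hZ hp hz'
  have := m.tri z p z'; have := m.symm z p
  unfold kθ; omega

end GMet

/-! ### Projection distances of a rotating family -/

section Rot
open scoped Pointwise

variable {V : Type} [Nonempty V] {H : Type} [Group H] [MulAction H V]

/-- A family `𝕐` of quasiconvex subsets with bounded overlap, invariant under a group of
isometries, such that nontrivial elements of the stabilizer of a member displace its points by
at least `L`. -/
structure Rot (H : Type) [Group H] [MulAction H V] (m : GMet V) (𝕐 : Set (Set V))
    (δ κ c L : ℕ) : Prop where
  cone : m.ConeHyp 𝕐 δ κ c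
  inv : ∀ (h : H) x y, m.d (h • x) (h • y) = m.d x y
  smul : ∀ (h : H), ∀ Y ∈ 𝕐, h • Y ∈ 𝕐
  long : ∀ Y ∈ 𝕐, ∀ n ∈ MulAction.stabilizer H Y, n ≠ 1 → ∀ y ∈ Y, L ≤ m.d y (n • y)

/-- The projection distance `D_Y(x, y)`: the largest distance between cone-off nearest points
of `Y` to `x` and to `y`. -/
noncomputable def pd (m : GMet V) (𝕐 : Set (Set V)) (Y : Set V) (x y : V) : ℕ :=
  sSup {n | ∃ z z', (m.cone 𝕐).Near Y x z ∧ (m.cone 𝕐).Near Y y z' ∧ m.d z z' = n}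

variable {m : GMet V} {𝕐 : Set (Set V)} {δ κ c L : ℕ}

open GMet

section PD
variable (h : m.ConeHyp 𝕐 δ κ c)
include h

theorem pd_bdd {Y : Set V} (hY : Y ∈ 𝕐) (x y : V) : BddAbove
    {n | ∃ z z', (m.cone 𝕐).Near Y x z ∧ (m.cone 𝕐).Near Y y z' ∧ m.d z z' = n} := by
  obtain ⟨a, ha⟩ := (m.cone 𝕐).exists_near (h.ne Y hY) x
  obtain ⟨b, hb⟩ := (m.cone 𝕐).exists_near (h.ne Y hY) y
  refine ⟨m.d a b + 2 * kθ δ κ c, ?_⟩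
  rintro n ⟨z, z', hz, hz', rfl⟩
  have := h.near_diam hY ha hz
  have := h.near_diam hY hb hz'
  have := m.tri z a z'; have := m.tri a b z'; have := m.symm z a
  omega

theorem pd_le {Y : Set V} (hY : Y ∈ 𝕐) {x y z z' : V} (hz : (m.cone 𝕐).Near Y x z)
    (hz' : (m.cone 𝕐).Near Y y z') : m.d z z' ≤ pd m 𝕐 Y x y :=
  le_csSup (pd_bdd h hY x y) ⟨z, z', hz, hz', rfl⟩

theorem pd_att {Y : Set V} (hY : Y ∈ 𝕐) (x y : V) : ∃ z z', (m.cone 𝕐).Near Y x z ∧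
    (m.cone 𝕐).Near Y y z' ∧ m.d z z' = pd m 𝕐 Y x y := by
  obtain ⟨a, ha⟩ := (m.cone 𝕐).exists_near (h.ne Y hY) x
  obtain ⟨b, hb⟩ := (m.cone 𝕐).exists_near (h.ne Y hY) y
  have hne : {n | ∃ z z', (m.cone 𝕐).Near Y x z ∧ (m.cone 𝕐).Near Y y z' ∧
      m.d z z' = n}.Nonempty := ⟨_, a, b, ha, hb, rfl⟩
  exact Nat.sSup_mem hne (pd_bdd h hY x y)

theorem pd_symm {Y : Set V} (hY : Y ∈ 𝕐) (x y : V) : pd m 𝕐 Y x y = pd m 𝕐 Y y x := by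
  obtain ⟨z, z', h1, h2, h3⟩ := pd_att h hY x y
  obtain ⟨w, w', h1', h2', h3'⟩ := pd_att h hY y x
  have := pd_le h hY h2 h1; have := pd_le h hY h2' h1'
  have := m.symm z z'; have := m.symm w w'
  omega

theorem pd_tri {Y : Set V} (hY : Y ∈ 𝕐) (x y w : V) :
    pd m 𝕐 Y x w ≤ pd m 𝕐 Y x y + pd m 𝕐 Y y w := by
  obtain ⟨z, z', h1, h2, h3⟩ := pd_att h hY x w
  obtain ⟨b, hb⟩ := (m.cone 𝕐).exists_near (h.ne Y hY) y
  have := pd_le h hY h1 hb; have := pd_le h hY hb h2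
  have := m.tri z b z'
  omega

theorem pd_self {Y : Set V} (hY : Y ∈ 𝕐) (x : V) : pd m 𝕐 Y x x ≤ kθ δ κ c := by
  obtain ⟨z, z', h1, h2, h3⟩ := pd_att h hY x x
  rw [← h3]; exact h.near_diam hY h1 h2

theorem pd_step {Y : Set V} (hY : Y ∈ 𝕐) {x y : V} (hxy : m.d x y ≤ 1) :
    pd m 𝕐 Y x y ≤ kθ δ κ c := by
  obtain ⟨z, z', h1, h2, h3⟩ := pd_att h hY x y
  by_contra hcon
  have h4 := h.through hY h1 h2 (by omega)
  have := cone_le m 𝕐 x y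
  obtain rfl := (m.cone 𝕐).eq_of x z (by omega)
  obtain rfl := (m.cone 𝕐).eq_of z' y (by omega)
  unfold kθ at hcon; omega

theorem pd_le_dist {Y : Set V} (hY : Y ∈ 𝕐) (x y : V) :
    pd m 𝕐 Y x y ≤ kθ δ κ c * (m.d x y + 1) := by
  induction hn : m.d x y generalizing x with
  | zero => obtain rfl := m.eq_of _ _ hn; simpa using pd_self h hY x
  | succ n ih =>
    obtain ⟨z, h1, h2⟩ := m.geo x y 1 (by omega)
    have := ih z (by omega)
    have := pd_step h hY (x := x) (y := z) (by omega)
    have := pd_tri h hY x z y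
    rw [mul_add _ (n + 1)]; omega

theorem pd_other {Y Z : Set V} (hY : Y ∈ 𝕐) (hZ : Z ∈ 𝕐) (hne : Y ≠ Z) {x y : V} (hx : x ∈ Z)
    (hy : y ∈ Z) : pd m 𝕐 Y x y ≤ kθ δ κ c := by
  obtain ⟨z, z', h1, h2, h3⟩ := pd_att h hY x y
  by_contra hcon
  have h4 := h.through hY h1 h2 (by omega)
  have := cone_in (m := m) hZ hx hy
  obtain rfl := (m.cone 𝕐).eq_of x z (by omega)
  obtain rfl := (m.cone 𝕐).eq_of z' y (by omega)
  have := h.ov Y hY Z hZ hne x h1.1 z' h2.1 x hx z' hy (by simp [m.d_self]) (by simp [m.d_self])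
  unfold kθ at hcon; omega

theorem pd_far {Y Z : Set V} (hY : Y ∈ 𝕐) (hZ : Z ∈ 𝕐) (hne : Y ≠ Z) {x y₀ : V} (hy₀ : y₀ ∈ Y)
    (hx : 3 * kθ δ κ c < pd m 𝕐 Z x y₀) {z : V} (hz : (m.cone 𝕐).Near Z x z) {y z' : V}
    (hy : y ∈ Y) (hz' : (m.cone 𝕐).Near Z y z') :
    (m.cone 𝕐).d x y = (m.cone 𝕐).d x z + 1 + (m.cone 𝕐).d z' y := by
  apply h.through hZ hz hz'
  obtain ⟨w, w', h1, h2, h3⟩ := pd_att h hZ x y₀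
  have := h.near_diam hZ h1 hz
  have := pd_other h hZ hY hne.symm hy hy₀
  have := pd_le h hZ hz' h2
  have := m.tri w z w'; have := m.tri z z' w'
  omega

/-- If `x` and `u` both project to `Z` far from the projection of `Y`, then they have the same
projections to `Y`. -/
theorem pd_ex {Y Z : Set V} (hY : Y ∈ 𝕐) (hZ : Z ∈ 𝕐) (hne : Y ≠ Z) {x u y₀ : V} (hy₀ : y₀ ∈ Y)
    (hx : 3 * kθ δ κ c < pd m 𝕐 Z x y₀) (hu : 3 * kθ δ κ c < pd m 𝕐 Z u y₀) (v : V) :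
    pd m 𝕐 Y x v = pd m 𝕐 Y u v := by
  obtain ⟨a, ha⟩ := (m.cone 𝕐).exists_near (h.ne Z hZ) x
  obtain ⟨b, hb⟩ := (m.cone 𝕐).exists_near (h.ne Z hZ) u
  choose π hπ using (m.cone 𝕐).exists_near (h.ne Z hZ)
  have e : ∀ z, (m.cone 𝕐).Near Y x z ↔ (m.cone 𝕐).Near Y u z := by
    intro z
    unfold Near
    refine and_congr_right fun hz => forall₂_congr fun q hq => ?_
    have := pd_far h hY hZ hne hy₀ hx ha hz (hπ z)
    have := pd_far h hY hZ hne hy₀ hu hb hz (hπ z)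
    have := pd_far h hY hZ hne hy₀ hx ha hq (hπ q)
    have := pd_far h hY hZ hne hy₀ hu hb hq (hπ q)
    omega
  simp only [pd, e]

/-- The Behrstock inequality. -/
theorem pd_beh {Y Z : Set V} (hY : Y ∈ 𝕐) (hZ : Z ∈ 𝕐) (hne : Y ≠ Z) {x y₀ z₀ : V} (hy₀ : y₀ ∈ Y)
    (hz₀ : z₀ ∈ Z) (hx : 3 * kθ δ κ c < pd m 𝕐 Z x y₀) : pd m 𝕐 Y x z₀ ≤ 3 * kθ δ κ c := by
  by_contra hcon
  obtain ⟨a, ha⟩ := (m.cone 𝕐).exists_near (h.ne Z hZ) x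
  obtain ⟨b, hb⟩ := (m.cone 𝕐).exists_near (h.ne Y hY) x
  obtain ⟨a', ha'⟩ := (m.cone 𝕐).exists_near (h.ne Z hZ) b
  obtain ⟨b', hb'⟩ := (m.cone 𝕐).exists_near (h.ne Y hY) a
  have := pd_far h hY hZ hne hy₀ hx ha hb.1 ha'
  have := pd_far h hZ hY hne.symm hz₀ (by omega) hb ha.1 hb'
  omega

theorem pd_mem {Y : Set V} (hY : Y ∈ 𝕐) {x y : V} (hx : x ∈ Y) (hy : y ∈ Y) :
    m.d x y ≤ pd m 𝕐 Y x y :=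
  pd_le h hY ⟨hx, fun q _ => by rw [(m.cone 𝕐).d_self]; omega⟩
    ⟨hy, fun q _ => by rw [(m.cone 𝕐).d_self]; omega⟩

end PD

variable (R : Rot H m 𝕐 δ κ c L)
include R

theorem Rot.cone_inv (h : H) (x y : V) : (m.cone 𝕐).d (h • x) (h • y) = (m.cone 𝕐).d x y := by
  have key : ∀ (h : H) x y, (m.cone 𝕐).d (h • x) (h • y) ≤ (m.cone 𝕐).d x y := fun h x y =>
    cone_map (fun x => h • x) (R.inv h) (fun Y hY => R.smul h Y hY) x y
  refine le_antisymm (key h x y) ?_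
  simpa using key h⁻¹ (h • x) (h • y)

theorem Rot.near_smul (h : H) {Y : Set V} {x z : V} (hz : (m.cone 𝕐).Near Y x z) :
    (m.cone 𝕐).Near (h • Y) (h • x) (h • z) := by
  refine ⟨Set.smul_mem_smul_set hz.1, ?_⟩
  rintro _ ⟨q, hq, rfl⟩
  simp only [R.cone_inv]
  exact hz.2 q hq

theorem Rot.pd_smul (h : H) {Y : Set V} (hY : Y ∈ 𝕐) (x y : V) :
    pd m 𝕐 (h • Y) (h • x) (h • y) = pd m 𝕐 Y x y := by
  have key : ∀ (h : H) (Y : Set V), Y ∈ 𝕐 → ∀ x y,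
      pd m 𝕐 Y x y ≤ pd m 𝕐 (h • Y) (h • x) (h • y) := by
    intro h Y hY x y
    obtain ⟨z, z', h1, h2, h3⟩ := pd_att R.cone hY x y
    have := pd_le R.cone (R.smul h Y hY) (R.near_smul h h1) (R.near_smul h h2)
    rw [R.inv] at this
    omega
  refine le_antisymm ?_ (key h Y hY x y)
  simpa using key h⁻¹ (h • Y) (R.smul h Y hY) (h • x) (h • y)

theorem Rot.pd_long {Y : Set V} (hY : Y ∈ 𝕐) {n : H} (hn : n ∈ MulAction.stabilizer H Y)
    (hn1 : n ≠ 1) (x : V) : L ≤ pd m 𝕐 Y x (n • x) := by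
  obtain ⟨z, hz⟩ := (m.cone 𝕐).exists_near (R.cone.ne Y hY) x
  have h1 := R.near_smul n hz
  rw [MulAction.mem_stabilizer_iff.1 hn] at h1
  exact (R.long Y hY n hn hn1 z hz.1).trans (pd_le R.cone hY hz h1)

/-- Rotating about `Y` a point with a distant projection to `Y` does not increase the cone-off
distance. -/
theorem Rot.fold {Y : Set V} (hY : Y ∈ 𝕐) {n : H} (hn : n ∈ MulAction.stabilizer H Y) {x y : V}
    (hxy : kθ δ κ c < pd m 𝕐 Y x y) : (m.cone 𝕐).d x (n • y) ≤ (m.cone 𝕐).d x y := by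
  obtain ⟨z, z', h1, h2, h3⟩ := pd_att R.cone hY x y
  have h4 := R.cone.through hY h1 h2 (by omega)
  have h5 := (R.near_smul n h2).1
  rw [MulAction.mem_stabilizer_iff.1 hn] at h5
  have := cone_in (m := m) hY h1.1 h5
  have := (m.cone 𝕐).tri x z (n • y); have := (m.cone 𝕐).tri z (n • z') (n • y)
  have := R.cone_inv n z' y
  omega

end Rot

/-! ### The windmill argument -/

section Windmill
open scoped Pointwise
open GMet

variable {V : Type} [Nonempty V] {H : Type} [Group H] [MulAction H V]

/-- `Red x₀ γ`: the element `γ` can be reduced to `1` by successive left multiplications by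
elements of stabilizers of members `Y` of the family, each performed at a `Y` on which `x₀` and
its image have projections more than `Λ` apart. -/
inductive Red (m : GMet V) (𝕐 : Set (Set V)) (Λ : ℕ) (x₀ : V) : H → Prop
  | one : Red m 𝕐 Λ x₀ 1
  | step (Y : Set V) (n γ : H) (hY : Y ∈ 𝕐) (hn : n ∈ MulAction.stabilizer H Y)
      (hd : Λ < pd m 𝕐 Y x₀ (γ • x₀)) (hr : Red m 𝕐 Λ x₀ (n * γ)) : Red m 𝕐 Λ x₀ γ

/-- Alternating products `m₁ ⋯ m_k γ'` with `m_j` a nontrivial element of the stabilizer of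
`Y_j ∈ 𝕍`, consecutive `Y_j` distinct, and `γ' ∈ Γ'`; the first set `Y₁` is recorded. -/
inductive Form (Γ' : Subgroup H) (𝕍 : Set (Set V)) : Set V → H → Prop
  | one (Y : Set V) (n γ : H) (hY : Y ∈ 𝕍) (hn : n ∈ MulAction.stabilizer H Y) (h1 : n ≠ 1)
      (hγ : γ ∈ Γ') : Form Γ' 𝕍 Y (n * γ)
  | cons (Y Z : Set V) (n γ : H) (hY : Y ∈ 𝕍) (hn : n ∈ MulAction.stabilizer H Y) (h1 : n ≠ 1)
      (hZ : Z ≠ Y) (hγ : Form Γ' 𝕍 Z γ) : Form Γ' 𝕍 Y (n * γ)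

/-- The subgroup generated by the stabilizers of the members of the family. -/
def rotGroup (H : Type) [Group H] [MulAction H V] (𝕐 : Set (Set V)) : Subgroup H :=
  Subgroup.closure {n | ∃ Y ∈ 𝕐, n ∈ MulAction.stabilizer H Y}

variable {m : GMet V} {𝕐 : Set (Set V)} {δ κ c L Λ : ℕ}

theorem stab_conj {h n : H} {Y : Set V} (hn : n ∈ MulAction.stabilizer H Y) :
    h * n * h⁻¹ ∈ MulAction.stabilizer H (h • Y) := by
  rw [MulAction.mem_stabilizer_iff] at *
  rw [mul_smul, inv_smul_smul, mul_smul, hn]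

/-- A stage of the windmill: an invariant set `W` for a group `Γ'` of reducible elements such
that all members of the family not yet used have bounded projections of `W`. -/
structure Wind (m : GMet V) (𝕐 : Set (Set V)) (δ κ c Λ : ℕ) (x₀ : V) (i : ℕ) (W : Set V)
    (Γ' : Subgroup H) : Prop where
  ball : ∀ x, m.d x₀ x ≤ i → x ∈ W
  inv : ∀ γ ∈ Γ', ∀ x ∈ W, γ • x ∈ W
  red : ∀ γ ∈ Γ', Red m 𝕐 Λ x₀ γ
  small : ∀ Y ∈ 𝕐, ¬ MulAction.stabilizer H Y ≤ Γ' → ∀ x ∈ W, ∀ y ∈ W,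
    pd m 𝕐 Y x y ≤ 6 * kθ δ κ c

variable (R : Rot H m 𝕐 δ κ c L)

theorem Form.mem {Γ' Γ'' : Subgroup H} {𝕍 : Set (Set V)} (h1 : Γ' ≤ Γ'')
    (h2 : ∀ Y ∈ 𝕍, MulAction.stabilizer H Y ≤ Γ'') {Y : Set V} {γ : H} (hF : Form Γ' 𝕍 Y γ) :
    γ ∈ Γ'' ∧ Y ∈ 𝕍 := by
  induction hF with
  | one Y n γ hY hn _ hγ => exact ⟨mul_mem (h2 Y hY hn) (h1 hγ), hY⟩
  | cons Y Z n γ hY hn _ _ _ ih => exact ⟨mul_mem (h2 Y hY hn) ih.1, hY⟩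

theorem Form.smul {Γ' : Subgroup H} {𝕍 : Set (Set V)} {g : H} (hg : g ∈ Γ')
    (hV : ∀ Y ∈ 𝕍, g • Y ∈ 𝕍) {Y : Set V} {γ : H} (hF : Form Γ' 𝕍 Y γ) :
    Form Γ' 𝕍 (g • Y) (g * γ) := by
  induction hF with
  | one Y n γ hY hn h1 hγ =>
    have := Form.one (Γ' := Γ') (𝕍 := 𝕍) (g • Y) (g * n * g⁻¹) (g * γ) (hV Y hY) (stab_conj hn)
      (by simpa using h1) (mul_mem hg hγ)
    simpa [mul_assoc] using this
  | cons Y Z n γ hY hn h1 hZ hγ ih =>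
    have := Form.cons (Γ' := Γ') (𝕍 := 𝕍) (g • Y) (g • Z) (g * n * g⁻¹) (g * γ) (hV Y hY)
      (stab_conj hn) (by simpa using h1) (by simpa using hZ) ih
    simpa [mul_assoc] using this

theorem Form.exists {Γ' : Subgroup H} {𝕍 : Set (Set V)}
    (hV : ∀ g ∈ Γ', ∀ Y ∈ 𝕍, g • Y ∈ 𝕍) (γ : H)
    (hγ : γ ∈ Subgroup.closure ((Γ' : Set H) ∪ {n | ∃ Y ∈ 𝕍, n ∈ MulAction.stabilizer H Y})) :
    γ ∈ Γ' ∨ ∃ Y, Form Γ' 𝕍 Y γ := by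
  have main : ∀ x ∈ ((Γ' : Set H) ∪ {n | ∃ Y ∈ 𝕍, n ∈ MulAction.stabilizer H Y}), ∀ y,
      (y ∈ Γ' ∨ ∃ Y, Form Γ' 𝕍 Y y) → (x * y ∈ Γ' ∨ ∃ Y, Form Γ' 𝕍 Y (x * y)) := by
    rintro x (hx | ⟨Y, hY, hx⟩) y hy
    · rcases hy with hy | ⟨Z, hy⟩
      · exact Or.inl (mul_mem hx hy)
      · exact Or.inr ⟨_, hy.smul hx (hV x hx)⟩
    · by_cases hx1 : x = 1
      · simpa [hx1] using hy
      rcases hy with hy | ⟨Z, hy⟩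
      · exact Or.inr ⟨Y, Form.one Y x y hY hx hx1 hy⟩
      · by_cases hZ : Z = Y
        · subst hZ
          cases hy with
          | one _ n γ _ hn h1 hγ =>
            rw [← mul_assoc]
            by_cases h2 : x * n = 1
            · rw [h2, one_mul]; exact Or.inl hγ
            · exact Or.inr ⟨Z, Form.one Z _ γ hY (mul_mem hx hn) h2 hγ⟩
          | cons _ Z' n γ _ hn h1 hZ' hγ =>
            rw [← mul_assoc]
            by_cases h2 : x * n = 1
            · rw [h2, one_mul]; exact Or.inr ⟨_, hγ⟩
            · exact Or.inr ⟨Z, Form.cons Z Z' _ γ hY (mul_mem hx hn) h2 hZ' hγ⟩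
        · exact Or.inr ⟨Y, Form.cons Y Z x y hY hx hx1 hZ hy⟩
  induction hγ using Subgroup.closure_induction_left with
  | one => exact Or.inl (one_mem _)
  | mul_left x hx y hy ih => exact main x hx y ih
  | inv_mul_cancel x hx y hy ih =>
    refine main x⁻¹ ?_ y ih
    rcases hx with hx | ⟨Y, hY, hx⟩
    · exact Or.inl (inv_mem hx)
    · exact Or.inr ⟨Y, hY, inv_mem hx⟩

include R

/-- Some point of a set with large projection to `Y` projects far from any given point. -/
theorem Rot.exists_far {U : Set V} {Y : Set V} (hY : Y ∈ 𝕐)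
    (hU : ∃ x ∈ U, ∃ z ∈ U, 6 * kθ δ κ c < pd m 𝕐 Y x z) (y : V) :
    ∃ s ∈ U, 3 * kθ δ κ c < pd m 𝕐 Y s y := by
  obtain ⟨x, hx, z, hz, hd⟩ := hU
  by_cases h : 3 * kθ δ κ c < pd m 𝕐 Y x y
  · exact ⟨x, hx, h⟩
  · refine ⟨z, hz, ?_⟩
    have := pd_tri R.cone hY x y z
    have := pd_symm R.cone hY y z
    omega

theorem Rot.form_far {U : Set V} {Γ' : Subgroup H} {𝕍 : Set (Set V)} (hVY : ∀ Y ∈ 𝕍, Y ∈ 𝕐)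
    (hL : 22 * kθ δ κ c < L)
    (hUinv : ∀ γ ∈ Γ', ∀ x ∈ U, γ • x ∈ U)
    (hUV : ∀ Y ∈ 𝕍, ∀ x ∈ U, ∀ y ∈ U, pd m 𝕐 Y x y ≤ 8 * kθ δ κ c)
    (hVU : ∀ Y ∈ 𝕍, ∃ x ∈ U, ∃ z ∈ U, 6 * kθ δ κ c < pd m 𝕐 Y x z)
    {Y : Set V} {γ : H} (hF : Form Γ' 𝕍 Y γ) :
    ∀ x ∈ U, ∀ u ∈ U, L ≤ pd m 𝕐 Y x (γ • u) + 14 * kθ δ κ c := by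
  induction hF with
  | one Y n γ hY hn h1 hγ =>
    intro x hx u hu
    have h2 := R.pd_long (hVY Y hY) hn h1 (γ • u)
    have := hUV Y hY (γ • u) (hUinv γ hγ u hu) x hx
    have := pd_tri R.cone (hVY Y hY) (γ • u) x (n • γ • u)
    rw [mul_smul]; omega
  | cons Y Z n γ hY hn h1 hZ hγ ih =>
    intro x hx u hu
    have hZV := (Form.mem (Γ'' := ⊤) le_top (fun _ _ => le_top) hγ).2
    have hYY := hVY Y hY
    have hZY := hVY Z hZV
    obtain ⟨y₀, hy₀⟩ := R.cone.ne Y hYY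
    obtain ⟨z₀, hz₀⟩ := R.cone.ne Z hZY
    obtain ⟨s, hs, hs'⟩ := R.exists_far hYY (hVU Y hY) z₀
    obtain ⟨t, ht, ht'⟩ := R.exists_far hZY (hVU Z hZV) y₀
    have b1 := pd_beh R.cone hZY hYY hZ hz₀ hy₀ hs'
    have b2 := pd_beh R.cone hYY hZY hZ.symm hy₀ hz₀ ht'
    have h2 := ih s hs u hu
    have := pd_tri R.cone hZY s y₀ (γ • u)
    have := pd_symm R.cone hZY y₀ (γ • u)
    have b3 := pd_beh R.cone hYY hZY hZ.symm hy₀ hz₀ (x := γ • u) (by omega)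
    have := pd_tri R.cone hYY t z₀ (γ • u)
    have := pd_symm R.cone hYY z₀ (γ • u)
    have h3 := R.pd_long hYY hn h1 t
    have := hUV Y hY t ht x hx
    have := pd_tri R.cone hYY t x (n • t)
    have := pd_tri R.cone hYY x (n • γ • u) (n • t)
    have e := R.pd_smul n hYY (γ • u) t
    rw [MulAction.mem_stabilizer_iff.1 hn] at e
    have := pd_symm R.cone hYY t (γ • u)
    rw [mul_smul]; omega

theorem Rot.form_small {U : Set V} {Γ' Γ'' : Subgroup H} {𝕍 : Set (Set V)}
    (hVY : ∀ Y ∈ 𝕍, Y ∈ 𝕐) (hL : 22 * kθ δ κ c < L)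
    (hUinv : ∀ γ ∈ Γ', ∀ x ∈ U, γ • x ∈ U)
    (hUV : ∀ Y ∈ 𝕍, ∀ x ∈ U, ∀ y ∈ U, pd m 𝕐 Y x y ≤ 8 * kθ δ κ c)
    (hVU : ∀ Y ∈ 𝕍, ∃ x ∈ U, ∃ z ∈ U, 6 * kθ δ κ c < pd m 𝕐 Y x z)
    (hΓ : Γ' ≤ Γ'') (hVΓ : ∀ Y ∈ 𝕍, MulAction.stabilizer H Y ≤ Γ'')
    (hU : ∀ Y ∈ 𝕐, ∀ x ∈ U, ∀ y ∈ U, 6 * kθ δ κ c < pd m 𝕐 Y x y →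
      MulAction.stabilizer H Y ≤ Γ'')
    {Y₁ : Set V} {γ : H} (hF : Form Γ' 𝕍 Y₁ γ) :
    ∀ Y ∈ 𝕐, ∀ x ∈ U, ∀ u ∈ U, 6 * kθ δ κ c < pd m 𝕐 Y x (γ • u) →
      MulAction.stabilizer H Y ≤ Γ'' := by
  -- the common part of both cases, where `γ = n γ₂` and the claim is known for `γ₂`
  have key : ∀ Y₁ (n γ₂ : H), Form Γ' 𝕍 Y₁ (n * γ₂) → Y₁ ∈ 𝕍 → n ∈ MulAction.stabilizer H Y₁ →
      (∀ Y ∈ 𝕐, ∀ x ∈ U, ∀ u ∈ U, 6 * kθ δ κ c < pd m 𝕐 Y x (γ₂ • u) →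
        MulAction.stabilizer H Y ≤ Γ'') →
      ∀ Y ∈ 𝕐, ∀ x ∈ U, ∀ u ∈ U, 6 * kθ δ κ c < pd m 𝕐 Y x ((n * γ₂) • u) →
        MulAction.stabilizer H Y ≤ Γ'' := by
    intro Y₁ n γ₂ hF hY₁ hn ih Y hY x hx u hu hd
    by_cases hYY : Y = Y₁
    · subst hYY; exact hVΓ Y hY₁
    have hY₁' := hVY Y₁ hY₁
    obtain ⟨y₀, hy₀⟩ := R.cone.ne Y hY
    have h1 := R.form_far hVY hL hUinv hUV hVU hF x hx u hu
    have t1 := pd_tri R.cone hY₁' x y₀ ((n * γ₂) • u)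
    have t2 := pd_symm R.cone hY₁' y₀ ((n * γ₂) • u)
    by_cases ha : 3 * kθ δ κ c < pd m 𝕐 Y₁ x y₀
    · by_cases hb : 3 * kθ δ κ c < pd m 𝕐 Y₁ ((n * γ₂) • u) y₀
      · -- both points project far from `Y`, so they have the same projection to `Y`
        have e := pd_ex R.cone hY hY₁' hYY hy₀ ha hb ((n * γ₂) • u)
        have := pd_self R.cone hY ((n * γ₂) • u)
        omega
      · -- replace `x` by a point of `n U`
        obtain ⟨s, hs, hs'⟩ := R.exists_far hY₁' (hVU Y₁ hY₁) (n⁻¹ • y₀)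
        have e1 := R.pd_smul n hY₁' s (n⁻¹ • y₀)
        rw [MulAction.mem_stabilizer_iff.1 hn, smul_inv_smul] at e1
        have e2 := pd_ex R.cone hY hY₁' hYY hy₀ ha (u := n • s) (by omega) ((n * γ₂) • u)
        have e3 := R.pd_smul n⁻¹ hY (n • s) ((n * γ₂) • u)
        rw [inv_smul_smul, mul_smul, inv_smul_smul] at e3
        rw [mul_smul] at e2 hd
        have h2 := ih (n⁻¹ • Y) (R.smul _ Y hY) s hs u hu (by omega)
        intro k hk
        have h3 := h2 (stab_conj (h := n⁻¹) hk)
        have hnΓ := hVΓ Y₁ hY₁ hn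
        have := mul_mem (mul_mem hnΓ h3) (inv_mem hnΓ)
        simpa [mul_assoc] using this
    · obtain ⟨s, hs, hs'⟩ := R.exists_far hY₁' (hVU Y₁ hY₁) y₀
      have e := pd_ex R.cone hY hY₁' hYY hy₀ (x := (n * γ₂) • u) (by omega) hs' x
      have := pd_symm R.cone hY ((n * γ₂) • u) x
      have := pd_symm R.cone hY s x
      exact hU Y hY x hx s hs (by omega)
  induction hF with
  | one Y₁ n γ hY₁ hn h1 hγ =>
    refine key Y₁ n γ (Form.one Y₁ n γ hY₁ hn h1 hγ) hY₁ hn ?_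
    intro Y hY x hx u hu hd
    exact hU Y hY x hx _ (hUinv γ hγ u hu) hd
  | cons Y₁ Z n γ hY₁ hn h1 hZ hγ ih =>
    exact key Y₁ n γ (Form.cons Y₁ Z n γ hY₁ hn h1 hZ hγ) hY₁ hn ih

theorem Rot.wind_step (hL : 22 * kθ δ κ c < L) (hΛ : Λ + 14 * kθ δ κ c < L) {x₀ : V} {i : ℕ}
    {W : Set V} {Γ' : Subgroup H} (w : Wind m 𝕐 δ κ c Λ x₀ i W Γ') :
    ∃ W' Γ'', Wind m 𝕐 δ κ c Λ x₀ (i + 1) W' (Γ'' : Subgroup H) := by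
  set U : Set V := {x | ∃ w ∈ W, m.d x w ≤ 1} with hUdef
  set 𝕍 : Set (Set V) := {Y | Y ∈ 𝕐 ∧ ¬ MulAction.stabilizer H Y ≤ Γ' ∧
    ∃ x ∈ U, ∃ z ∈ U, 6 * kθ δ κ c < pd m 𝕐 Y x z} with hVdef
  set Γ'' := Subgroup.closure ((Γ' : Set H) ∪ {n | ∃ Y ∈ 𝕍, n ∈ MulAction.stabilizer H Y})
    with hΓdef
  have hWU : W ⊆ U := fun x hx => ⟨x, hx, by simp [m.d_self]⟩
  have hUinv : ∀ γ ∈ Γ', ∀ x ∈ U, γ • x ∈ U := by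
    rintro γ hγ x ⟨v, hv, hd⟩
    exact ⟨γ • v, w.inv γ hγ v hv, by rwa [R.inv]⟩
  have hUs : ∀ Y ∈ 𝕐, ¬ MulAction.stabilizer H Y ≤ Γ' → ∀ x ∈ U, ∀ y ∈ U,
      pd m 𝕐 Y x y ≤ 8 * kθ δ κ c := by
    rintro Y hY hn x ⟨x', hx', hx⟩ y ⟨y', hy', hy⟩
    have := w.small Y hY hn x' hx' y' hy'
    have := pd_step R.cone hY hx; have := pd_step R.cone hY hy
    have := pd_tri R.cone hY x x' y; have := pd_tri R.cone hY x' y' y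
    have := pd_symm R.cone hY y y'
    omega
  have hVY : ∀ Y ∈ 𝕍, Y ∈ 𝕐 := fun Y hY => hY.1
  have hUV : ∀ Y ∈ 𝕍, ∀ x ∈ U, ∀ y ∈ U, pd m 𝕐 Y x y ≤ 8 * kθ δ κ c :=
    fun Y hY => hUs Y hY.1 hY.2.1
  have hVU : ∀ Y ∈ 𝕍, ∃ x ∈ U, ∃ z ∈ U, 6 * kθ δ κ c < pd m 𝕐 Y x z := fun Y hY => hY.2.2
  have hΓ : Γ' ≤ Γ'' := fun γ hγ => Subgroup.subset_closure (Or.inl hγ)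
  have hVΓ : ∀ Y ∈ 𝕍, MulAction.stabilizer H Y ≤ Γ'' := fun Y hY n hn =>
    Subgroup.subset_closure (Or.inr ⟨Y, hY, hn⟩)
  have hU : ∀ Y ∈ 𝕐, ∀ x ∈ U, ∀ y ∈ U, 6 * kθ δ κ c < pd m 𝕐 Y x y →
      MulAction.stabilizer H Y ≤ Γ'' := by
    intro Y hY x hx y hy hd
    by_cases hn : MulAction.stabilizer H Y ≤ Γ'
    · exact hn.trans hΓ
    · exact hVΓ Y ⟨hY, hn, x, hx, y, hy, hd⟩
  have conj_le : ∀ g ∈ Γ'', ∀ Y : Set V, MulAction.stabilizer H (g • Y) ≤ Γ'' →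
      MulAction.stabilizer H Y ≤ Γ'' := by
    intro g hg Y hle k hk
    have := mul_mem (mul_mem (inv_mem hg) (hle (stab_conj (h := g) hk))) hg
    simpa [mul_assoc] using this
  have hVinv : ∀ g ∈ Γ', ∀ Y ∈ 𝕍, g • Y ∈ 𝕍 := by
    rintro g hg Y ⟨hY, hn, x, hx, z, hz, hd⟩
    refine ⟨R.smul g Y hY, fun hle => hn fun k hk => ?_, g • x, hUinv g hg x hx, g • z,
      hUinv g hg z hz, by rwa [R.pd_smul g hY]⟩
    have := mul_mem (mul_mem (inv_mem hg) (hle (stab_conj (h := g) hk))) hg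
    simpa [mul_assoc] using this
  have hx₀ : x₀ ∈ U := hWU (w.ball x₀ (by simp [m.d_self]))
  refine ⟨{x | ∃ γ ∈ Γ'', ∃ u ∈ U, x = γ • u}, Γ'', ⟨?_, ?_, ?_, ?_⟩⟩
  · intro x hx
    refine ⟨1, one_mem _, x, ?_, by simp⟩
    by_cases h : m.d x₀ x ≤ i
    · exact hWU (w.ball x h)
    · obtain ⟨z, h1, h2⟩ := m.geo x₀ x i (by omega)
      exact ⟨z, w.ball z h1.le, by rw [m.symm]; omega⟩
  · rintro γ hγ _ ⟨γ', hγ', u, hu, rfl⟩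
    exact ⟨γ * γ', mul_mem hγ hγ', u, hu, by rw [mul_smul]⟩
  · intro γ hγ
    rcases Form.exists hVinv γ hγ with h | ⟨Y, h⟩
    · exact w.red γ h
    · have hfar : ∀ {Y : Set V} {γ : H}, Form Γ' 𝕍 Y γ → Λ < pd m 𝕐 Y x₀ (γ • x₀) := by
        intro Y γ hF
        have := R.form_far hVY hL hUinv hUV hVU hF x₀ hx₀ x₀ hx₀
        omega
      clear hγ
      induction h with
      | one Y n γ hY hn h1 hγ =>
        refine Red.step Y n⁻¹ _ hY.1 (inv_mem hn) (hfar (Form.one Y n γ hY hn h1 hγ)) ?_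
        rw [inv_mul_cancel_left]; exact w.red γ hγ
      | cons Y Z n γ hY hn h1 hZ hγ ih =>
        refine Red.step Y n⁻¹ _ hY.1 (inv_mem hn) (hfar (Form.cons Y Z n γ hY hn h1 hZ hγ)) ?_
        rw [inv_mul_cancel_left]; exact ih
  · rintro Y hY hn _ ⟨γ₁, hγ₁, u₁, hu₁, rfl⟩ _ ⟨γ₂, hγ₂, u₂, hu₂, rfl⟩
    by_contra hcon
    push Not at hcon
    apply hn
    apply conj_le γ₁⁻¹ (inv_mem hγ₁)
    rw [← R.pd_smul γ₁⁻¹ hY, inv_smul_smul, ← mul_smul] at hcon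
    rcases Form.exists hVinv (γ₁⁻¹ * γ₂) (mul_mem (inv_mem hγ₁) hγ₂) with h | ⟨Z, h⟩
    · exact hU _ (R.smul _ Y hY) u₁ hu₁ _ (hUinv _ h u₂ hu₂) hcon
    · exact R.form_small hVY hL hUinv hUV hVU hΓ hVΓ hU h _ (R.smul _ Y hY) u₁ hu₁ u₂ hu₂ hcon

/-- Every element of the group generated by the stabilizers of the members of the family is
reducible. -/
theorem Rot.red (hL : 22 * kθ δ κ c < L) (hΛ : Λ + 14 * kθ δ κ c < L) (x₀ : V)
    (γ : H) (hγ : γ ∈ rotGroup H 𝕐) : Red m 𝕐 Λ x₀ γ := by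
  have ex : ∀ i, ∃ W Γ', Wind m 𝕐 δ κ c Λ x₀ i W (Γ' : Subgroup H) := by
    intro i
    induction i with
    | zero =>
      refine ⟨{x₀}, ⊥, ⟨?_, ?_, ?_, ?_⟩⟩
      · intro x hx; exact (m.eq_of _ _ (by omega)).symm
      · intro γ hγ x hx; rw [Subgroup.mem_bot] at hγ; simpa [hγ] using hx
      · intro γ hγ; rw [Subgroup.mem_bot] at hγ; rw [hγ]; exact Red.one
      · rintro Y hY - x rfl y rfl
        have := pd_self R.cone hY y; omega
    | succ i ih =>
      obtain ⟨W, Γ', hw⟩ := ih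
      exact R.wind_step hL hΛ hw
  have big : ∃ i₀, ∀ i, i₀ ≤ i → ∀ W Γ', Wind m 𝕐 δ κ c Λ x₀ i W (Γ' : Subgroup H) → γ ∈ Γ' := by
    induction hγ using Subgroup.closure_induction with
    | mem n hn =>
      obtain ⟨Y, hY, hn⟩ := hn
      obtain ⟨y, hy⟩ := R.cone.ne Y hY
      refine ⟨m.d x₀ y + m.d x₀ (n • y), fun i hi W Γ' hw => ?_⟩
      by_contra hcon
      have h1 : n ≠ 1 := by rintro rfl; exact hcon (one_mem _)
      have h2 := hw.small Y hY (fun hle => hcon (hle hn)) y (hw.ball _ (by omega)) (n • y)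
        (hw.ball _ (by omega))
      have := R.pd_long hY hn h1 y
      omega
    | one => exact ⟨0, fun i _ W Γ' _ => one_mem _⟩
    | mul a b _ _ iha ihb =>
      obtain ⟨i, hi⟩ := iha
      obtain ⟨j, hj⟩ := ihb
      exact ⟨i + j, fun k hk W Γ' hw => mul_mem (hi k (by omega) W Γ' hw) (hj k (by omega) W Γ' hw)⟩
    | inv a _ iha =>
      obtain ⟨i, hi⟩ := iha
      exact ⟨i, fun k hk W Γ' hw => inv_mem (hi k hk W Γ' hw)⟩
  obtain ⟨i, hi⟩ := big
  obtain ⟨W, Γ', hw⟩ := ex i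
  exact hw.red γ (hi i le_rfl W Γ' hw)

end Windmill

/-! ### Lifting polygons from the quotient -/

section Lifts
open scoped Pointwise
open GMet

variable {V : Type} [Nonempty V] {H : Type} [Group H] [MulAction H V]
variable {m : GMet V} {𝕐 : Set (Set V)} {δ κ c L Λ : ℕ}

omit [Nonempty V] in
theorem rot_mem {Y : Set V} (hY : Y ∈ 𝕐) {n : H} (hn : n ∈ MulAction.stabilizer H Y) :
    n ∈ rotGroup H 𝕐 := Subgroup.subset_closure ⟨Y, hY, hn⟩

variable (R : Rot H m 𝕐 δ κ c L)
include R

theorem Rot.normal : (rotGroup H 𝕐).Normal := by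
  refine ⟨fun n hn g => ?_⟩
  induction hn using Subgroup.closure_induction with
  | mem n hn =>
    obtain ⟨Y, hY, hn⟩ := hn
    exact rot_mem (R.smul g Y hY) (stab_conj hn)
  | one => simp
  | mul a b _ _ iha ihb => simpa [mul_assoc] using mul_mem iha ihb
  | inv a _ iha => simpa [mul_assoc] using inv_mem iha

/-- A quadrilateral whose last vertex is `γ x₀` can be closed up by translating its vertices by
elements of the rotation group, without lengthening its sides. -/
theorem Rot.close (hΛ : 4 * kθ δ κ c ≤ Λ) {x₀ : V} {γ : H} (hr : Red m 𝕐 Λ x₀ γ) :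
    ∀ p q s, ∃ γ₁ ∈ rotGroup H 𝕐, ∃ γ₂ ∈ rotGroup H 𝕐, ∃ γ₃ ∈ rotGroup H 𝕐,
      (m.cone 𝕐).d x₀ (γ₁ • p) ≤ (m.cone 𝕐).d x₀ p ∧
      (m.cone 𝕐).d (γ₁ • p) (γ₂ • q) ≤ (m.cone 𝕐).d p q ∧
      (m.cone 𝕐).d (γ₂ • q) (γ₃ • s) ≤ (m.cone 𝕐).d q s ∧
      (m.cone 𝕐).d (γ₃ • s) x₀ ≤ (m.cone 𝕐).d s (γ • x₀) := by
  induction hr with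
  | one => intro p q s; exact ⟨1, one_mem _, 1, one_mem _, 1, one_mem _, by simp⟩
  | step Y n γ hY hn hd hr ih =>
    intro p q s
    have hnR : n ∈ rotGroup H 𝕐 := rot_mem hY hn
    have := pd_tri R.cone hY x₀ p (γ • x₀)
    have := pd_tri R.cone hY p q (γ • x₀)
    have := pd_tri R.cone hY q s (γ • x₀)
    have t := R.cone_inv n
    by_cases h1 : kθ δ κ c < pd m 𝕐 Y x₀ p
    · have f := R.fold hY hn h1
      obtain ⟨γ₁, g1, γ₂, g2, γ₃, g3, e1, e2, e3, e4⟩ := ih (n • p) (n • q) (n • s)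
      simp only [← mul_smul] at e1 e2 e3 e4
      simp only [mul_smul n, t] at e2 e3 e4
      exact ⟨_, mul_mem g1 hnR, _, mul_mem g2 hnR, _, mul_mem g3 hnR, e1.trans f, e2, e3, e4⟩
    by_cases h2 : kθ δ κ c < pd m 𝕐 Y p q
    · have f := R.fold hY hn h2
      obtain ⟨γ₁, g1, γ₂, g2, γ₃, g3, e1, e2, e3, e4⟩ := ih p (n • q) (n • s)
      simp only [← mul_smul] at e2 e3 e4
      simp only [mul_smul n, t] at e2 e3 e4
      exact ⟨_, g1, _, mul_mem g2 hnR, _, mul_mem g3 hnR, e1, e2.trans f, e3, e4⟩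
    by_cases h3 : kθ δ κ c < pd m 𝕐 Y q s
    · have f := R.fold hY hn h3
      obtain ⟨γ₁, g1, γ₂, g2, γ₃, g3, e1, e2, e3, e4⟩ := ih p q (n • s)
      simp only [← mul_smul] at e3 e4
      simp only [mul_smul n, t] at e3 e4
      exact ⟨_, g1, _, g2, _, mul_mem g3 hnR, e1, e2, e3.trans f, e4⟩
    · have f := R.fold hY hn (x := s) (y := γ • x₀) (by omega)
      obtain ⟨γ₁, g1, γ₂, g2, γ₃, g3, e1, e2, e3, e4⟩ := ih p q s
      rw [mul_smul] at e4
      exact ⟨_, g1, _, g2, _, g3, e1, e2, e3, e4.trans f⟩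

/-- The strip lemma: if `f` is tight at `o`, then an element moving both `o` and `f o` a short
distance modulo the rotation group can be corrected, simultaneously at both points. -/
theorem Rot.strip {tight : ℕ} (hΛ : 2 * tight + 2 * kθ δ κ c ≤ Λ) {o : V} {f : H}
    (hf : ∀ Y ∈ 𝕐, pd m 𝕐 Y o (f • o) ≤ tight) {γ : H} (hr : Red m 𝕐 Λ o γ) :
    ∀ k : H, ∃ γ' ∈ rotGroup H 𝕐,
      (m.cone 𝕐).d o ((γ' * k) • o) ≤ (m.cone 𝕐).d o (k • o) ∧
      (m.cone 𝕐).d ((γ' * k) • f • o) (f • o) ≤ (m.cone 𝕐).d (k • f • o) (γ • f • o) := by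
  induction hr with
  | one => intro k; exact ⟨1, one_mem _, by simp⟩
  | step Y n γ hY hn hd hr ih =>
    intro k
    have hnR : n ∈ rotGroup H 𝕐 := rot_mem hY hn
    have := pd_tri R.cone hY o (k • o) (γ • o)
    have := pd_tri R.cone hY (k • o) (k • f • o) (γ • o)
    have := pd_tri R.cone hY (k • f • o) (γ • f • o) (γ • o)
    have := pd_symm R.cone hY (γ • f • o) (γ • o)
    have tt : ∀ h : H, pd m 𝕐 Y (h • o) (h • f • o) ≤ tight := by
      intro h
      have := hf _ (R.smul h⁻¹ Y hY)
      have e := R.pd_smul h⁻¹ hY (h • o) (h • f • o)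
      rw [inv_smul_smul, inv_smul_smul] at e
      omega
    have := tt k; have := tt γ
    have t := R.cone_inv n
    by_cases h1 : kθ δ κ c < pd m 𝕐 Y o (k • o)
    · have g := R.fold hY hn h1
      obtain ⟨γ', g1, e1, e2⟩ := ih (n * k)
      rw [← mul_assoc] at e1 e2
      refine ⟨γ' * n, mul_mem g1 hnR, ?_, ?_⟩
      · rw [mul_smul n] at e1; exact e1.trans g
      · simp only [mul_smul n, t] at e2; exact e2
    · have g := R.fold hY hn (x := k • f • o) (y := γ • f • o) (by omega)
      obtain ⟨γ', g1, e1, e2⟩ := ih k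
      simp only [mul_smul n] at e2
      exact ⟨γ', g1, e1, e2.trans g⟩

/-- Nontrivial reducible elements move the base point far. -/
theorem Rot.red_far {x₀ : V} {γ : H} (hr : Red m 𝕐 Λ x₀ γ) (h1 : γ ≠ 1) :
    Λ < kθ δ κ c * (m.d x₀ (γ • x₀) + 1) := by
  cases hr with
  | one => exact absurd rfl h1
  | step Y n _ hY hn hd hr => exact hd.trans_le (pd_le_dist R.cone hY _ _)

omit R in
/-- The distance between orbits of the rotation group, measured in the cone-off. -/
noncomputable def qd (H : Type) [Group H] [MulAction H V] (m : GMet V) (𝕐 : Set (Set V))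
    (x y : V) : ℕ := sInf {n | ∃ γ ∈ rotGroup H 𝕐, (m.cone 𝕐).d x (γ • y) = n}

omit R in
theorem qd_att (x y : V) : ∃ γ ∈ rotGroup H 𝕐, (m.cone 𝕐).d x (γ • y) = qd H m 𝕐 x y := by
  have hne : {n | ∃ γ ∈ rotGroup H 𝕐, (m.cone 𝕐).d x (γ • y) = n}.Nonempty :=
    ⟨_, 1, one_mem _, rfl⟩
  exact Nat.sInf_mem hne

omit R in
theorem qd_le (x y : V) {γ : H} (hγ : γ ∈ rotGroup H 𝕐) :
    qd H m 𝕐 x y ≤ (m.cone 𝕐).d x (γ • y) := Nat.sInf_le ⟨γ, hγ, rfl⟩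

theorem Rot.qd_le₂ (x y : V) {γ γ' : H} (hγ : γ ∈ rotGroup H 𝕐) (hγ' : γ' ∈ rotGroup H 𝕐) :
    qd H m 𝕐 x y ≤ (m.cone 𝕐).d (γ • x) (γ' • y) := by
  refine (qd_le x y (mul_mem (inv_mem hγ) hγ')).trans ?_
  rw [mul_smul, ← R.cone_inv γ, smul_inv_smul]

theorem Rot.qd_symm (x y : V) : qd H m 𝕐 x y = qd H m 𝕐 y x := by
  have key : ∀ x y, qd H m 𝕐 x y ≤ qd H m 𝕐 y x := by
    intro x y
    obtain ⟨γ, h1, h2⟩ := qd_att (H := H) (m := m) (𝕐 := 𝕐) y x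
    rw [← h2, (m.cone 𝕐).symm]
    have := R.qd_le₂ x y h1 (one_mem _)
    rwa [one_smul] at this
  exact le_antisymm (key x y) (key y x)

theorem Rot.qd_tri (x y z : V) : qd H m 𝕐 x z ≤ qd H m 𝕐 x y + qd H m 𝕐 y z := by
  obtain ⟨γ, h1, h2⟩ := qd_att (H := H) (m := m) (𝕐 := 𝕐) x y
  obtain ⟨γ', h3, h4⟩ := qd_att (H := H) (m := m) (𝕐 := 𝕐) y z
  have := qd_le (m := m) x z (mul_mem h1 h3)
  have := (m.cone 𝕐).tri x (γ • y) ((γ * γ') • z)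
  rw [mul_smul, R.cone_inv] at this
  rw [mul_smul] at *
  omega

theorem Rot.qd_inv (h : H) (x y : V) : qd H m 𝕐 (h • x) (h • y) = qd H m 𝕐 x y := by
  have key : ∀ (h : H) x y, qd H m 𝕐 (h • x) (h • y) ≤ qd H m 𝕐 x y := by
    intro h x y
    obtain ⟨γ, h1, h2⟩ := qd_att (H := H) (m := m) (𝕐 := 𝕐) x y
    have := qd_le (m := m) (h • x) (h • y) (R.normal.conj_mem γ h1 h)
    rw [← mul_smul, inv_mul_cancel_right, mul_smul, R.cone_inv] at this
    omega
  refine le_antisymm (key h x y) ?_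
  simpa using key h⁻¹ (h • x) (h • y)

/-- The orbit distance satisfies the four-point condition with the constant of the cone-off. -/
theorem Rot.qd_hyp (hL : 22 * kθ δ κ c < L) (hΛ : 4 * kθ δ κ c ≤ Λ)
    (hΛL : Λ + 14 * kθ δ κ c < L) {D : ℕ} (hD : (m.cone 𝕐).Hyp D) (x y z w : V) :
    qd H m 𝕐 x y + qd H m 𝕐 z w ≤ qd H m 𝕐 x z + qd H m 𝕐 y w + D ∨
    qd H m 𝕐 x y + qd H m 𝕐 z w ≤ qd H m 𝕐 x w + qd H m 𝕐 y z + D := by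
  obtain ⟨a, ha, ha'⟩ := qd_att (H := H) (m := m) (𝕐 := 𝕐) x z
  obtain ⟨b, hb, hb'⟩ := qd_att (H := H) (m := m) (𝕐 := 𝕐) z y
  obtain ⟨e, he, he'⟩ := qd_att (H := H) (m := m) (𝕐 := 𝕐) y w
  obtain ⟨f, hf, hf'⟩ := qd_att (H := H) (m := m) (𝕐 := 𝕐) w x
  have hr := R.red hL hΛL x (a * b * e * f) (mul_mem (mul_mem (mul_mem ha hb) he) hf)
  obtain ⟨γ₁, g1, γ₂, g2, γ₃, g3, e1, e2, e3, e4⟩ :=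
    R.close hΛ hr (a • z) ((a * b) • y) ((a * b * e) • w)
  simp only [← mul_smul] at e1 e2 e3 e4
  rw [mul_smul a b, R.cone_inv] at e2
  rw [mul_smul (a * b) e, R.cone_inv] at e3
  rw [mul_smul (a * b * e) f, R.cone_inv] at e4
  have h1 := qd_le (m := m) x y (mul_mem g2 (mul_mem ha hb))
  have h2 := R.qd_le₂ z w (mul_mem g1 ha) (mul_mem g3 (mul_mem (mul_mem ha hb) he))
  have := R.qd_symm z y; have := R.qd_symm w x
  have s1 := (m.cone 𝕐).symm x ((γ₃ * (a * b * e)) • w)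
  have s2 := (m.cone 𝕐).symm ((γ₁ * a) • z) ((γ₂ * (a * b)) • y)
  rcases hD x ((γ₂ * (a * b)) • y) ((γ₁ * a) • z) ((γ₃ * (a * b * e)) • w) with h | h
  · left; omega
  · right; omega

end Lifts

/-! ### Loxodromic elements -/

section Lox
open GMet

variable {V : Type} {m : GMet V} {δ : ℕ}

/-- In an unbounded hyperbolic group some element `g` satisfies `|g²| ≥ |g| + K`. Otherwise the
products of the prefixes of a long geodesic act almost as translations along its middle part. -/
theorem exists_sq_large {G : Type} [Group G] {m : GMet G} (hm : m.Hyp δ)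
    (inv : ∀ g x y : G, m.d (g * x) (g * y) = m.d x y) (unb : ∀ n, ∃ g, n ≤ m.d 1 g) (K : ℕ) :
    ∃ g : G, m.d 1 g + K ≤ m.d 1 (g * g) := by
  by_contra hcon
  push Not at hcon
  obtain ⟨l, hl⟩ : ∃ l, l = 13 * δ + K := ⟨_, rfl⟩
  obtain ⟨i, hi⟩ : ∃ i, i = K + δ + 2 * l := ⟨_, rfl⟩
  obtain ⟨u, hu⟩ := unb (2 * (i + l))
  choose! g hg hg' using fun t => m.geo 1 u t
  have lo : ∀ s t, s ≤ t → t ≤ 2 * (i + l) → t ≤ m.d (g s) (g t) + s := by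
    intro s t h1 h2
    have := hg t (by omega); have := hg s (by omega)
    have := m.tri 1 (g s) (g t); omega
  have up : ∀ s t, s ≤ t → t ≤ 2 * (i + l) → m.d (g s) (g t) + s ≤ t + δ := by
    intro s t h1 h2
    have := hg t (by omega); have := hg s (by omega)
    have := hg' t (by omega); have := hg' s (by omega)
    have := hm 1 u (g s) (g t)
    have := m.symm u (g s); have := m.symm u (g t)
    omega
  have key : ∀ j s, j ≤ i + l → s + K + δ ≤ j → m.d (g (2 * j) * g s) (g (2 * j - s)) ≤ 4 * δ := by
    intro j s hj hs
    have a1 := hg (2 * j) (by omega)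
    have a2 := hg s (by omega)
    have a3 := hg (2 * j - s) (by omega)
    have b1 := lo s (2 * j) (by omega) (by omega)
    have b2 := up s (2 * j) (by omega) (by omega)
    have b3 := lo (2 * j - s) (2 * j) (by omega) (by omega)
    have b4 := up (2 * j - s) (2 * j) (by omega) (by omega)
    have e1 := inv (g (2 * j)) 1 (g s)
    have e2 := inv (g (2 * j)) (g s) (g (2 * j))
    have e3 := inv (g (2 * j)) 1 (g (2 * j))
    rw [mul_one] at e1 e3
    have h1 : m.Btw δ (g (2 * j)) (g (2 * j) * g s) (g (2 * j) * g (2 * j)) := by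
      unfold GMet.Btw; omega
    have h2 := hcon (g (2 * j))
    have s1 := m.symm (g (2 * j - s)) (g (2 * j))
    have s2 := m.symm 1 (g (2 * j))
    have s3 := m.symm 1 (g (2 * j - s))
    have t1 := m.tri 1 (g (2 * j) * g s) (g (2 * j))
    have s4 := m.symm (g (2 * j)) (g (2 * j) * g s)
    rcases hm.thin_btw 1 h1 with h3 | h3
    · have h4 : m.Btw (2 * δ) (g (2 * j)) (g (2 * j - s)) 1 := by unfold GMet.Btw; omega
      have := hm.btw_close (h3.mono (by omega)) h4 (e := δ) (by omega) (by omega)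
      omega
    · unfold GMet.Btw at h3; omega
  set h := g (2 * (i + l)) * (g (2 * i))⁻¹ with hh
  have tr : ∀ t, i + K + δ ≤ t → t ≤ 2 * i → m.d (h * g t) (g (t + 2 * l)) ≤ 8 * δ := by
    intro t h1 h2
    have k1 := key i (2 * i - t) (by omega) (by omega)
    have k2 := key (i + l) (2 * i - t) (by omega) (by omega)
    rw [show 2 * i - (2 * i - t) = t by omega] at k1
    rw [show 2 * (i + l) - (2 * i - t) = t + 2 * l by omega] at k2
    have e := inv h (g (2 * i) * g (2 * i - t)) (g t)
    rw [hh, ← mul_assoc, inv_mul_cancel_right, ← hh] at e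
    have := m.tri (h * g t) (g (2 * (i + l)) * g (2 * i - t)) (g (t + 2 * l))
    have := m.symm (h * g t) (g (2 * (i + l)) * g (2 * i - t))
    omega
  obtain ⟨t, ht⟩ : ∃ t, t = i + K + δ := ⟨_, rfl⟩
  have c1 := tr t (by omega) (by omega)
  have c2 := tr (t + 2 * l) (by omega) (by omega)
  rw [show t + 2 * l + 2 * l = t + 4 * l by omega] at c2
  have c3 := inv h (h * g t) (g (t + 2 * l))
  have c4 := up t (t + 2 * l) (by omega) (by omega)
  have c5 := lo t (t + 4 * l) (by omega) (by omega)
  have c6 := hcon ((g t)⁻¹ * h * g t)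
  have c7 := inv (g t) 1 ((g t)⁻¹ * h * g t)
  have c8 := inv (g t) 1 ((g t)⁻¹ * h * g t * ((g t)⁻¹ * h * g t))
  simp only [mul_assoc, mul_inv_cancel_left, mul_one] at c6 c7 c8
  have := m.tri (g t) (g (t + 2 * l)) (h * g t)
  have := m.symm (g (t + 2 * l)) (h * g t)
  have := m.tri (g t) (h * (h * g t)) (g (t + 4 * l))
  have := m.tri (h * (h * g t)) (h * g (t + 2 * l)) (g (t + 4 * l))
  omega

variable {H : Type} [Group H] [MulAction H V]

/-- The orbit of `o` under an element `a` with `|a²| ≥ |a| + 2δ + 1` is a quasigeodesic. -/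
theorem lox_btw (hm : m.Hyp δ) (inv : ∀ (h : H) x y, m.d (h • x) (h • y) = m.d x y) {o : V} {a : H}
    (ha : m.d o (a • o) + 2 * δ + 1 ≤ m.d o (a • a • o)) {i j k : ℤ} (hij : i ≤ j) (hjk : j ≤ k) :
    m.Btw (2 * m.d o (a • o)) (a ^ i • o) (a ^ j • o) (a ^ k • o) := by
  have nat : ∀ j k : ℕ, j ≤ k → m.Btw (2 * m.d o (a • o)) o (a ^ j • o) (a ^ k • o) := by
    intro j k hjk
    have t := m.tri o (a • o) (a • a • o)
    rw [inv] at t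
    have e1 : ∀ i, m.d (a ^ i • o) (a ^ (i + 1) • o) = m.d o (a • o) := by
      intro i; rw [pow_succ, mul_smul, inv]
    have e2 : ∀ i, m.d (a ^ i • o) (a ^ (i + 2) • o) = m.d o (a • a • o) := by
      intro i; rw [pow_succ, pow_succ, mul_assoc, mul_smul, mul_smul, inv]
    have := hm.chain (C := 2 * m.d o (a • o) - m.d o (a • a • o)) (fun i => a ^ i • o) k
      (fun i hi => by
        unfold GMet.Btw
        have := e1 i; have := e1 (i + 1); have := e2 i
        rw [show i + 1 + 1 = i + 2 by omega] at *
        omega)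
      (fun i hi => by have := e1 (i + 1); rw [show i + 1 + 1 = i + 2 by omega] at *; omega)
      0 j k (by omega) hjk le_rfl
    simp only [pow_zero, one_smul] at this
    refine this.mono ?_
    omega
  obtain ⟨p, hp⟩ := Int.eq_ofNat_of_zero_le (show 0 ≤ j - i by omega)
  obtain ⟨q, hq⟩ := Int.eq_ofNat_of_zero_le (show 0 ≤ k - i by omega)
  have := nat p q (by omega)
  obtain rfl : j = i + p := by omega
  obtain rfl : k = i + q := by omega
  unfold GMet.Btw at *
  simp only [zpow_add, mul_smul, zpow_natCast, inv]
  exact this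

/-- Linear growth of the orbit of `a`. -/
theorem lox_grow (hm : m.Hyp δ) (inv : ∀ (h : H) x y, m.d (h • x) (h • y) = m.d x y) {o : V} {a : H}
    (ha : m.d o (a • o) + 2 * δ + 1 ≤ m.d o (a • a • o)) (k : ℕ) :
    k ≤ m.d o (a ^ k • o) := by
  have t := m.tri o (a • o) (a • a • o)
  rw [inv] at t
  have e1 : ∀ i, m.d (a ^ i • o) (a ^ (i + 1) • o) = m.d o (a • o) := by
    intro i; rw [pow_succ, mul_smul, inv]
  have e2 : ∀ i, m.d (a ^ i • o) (a ^ (i + 2) • o) = m.d o (a • a • o) := by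
    intro i; rw [pow_succ, pow_succ, mul_assoc, mul_smul, mul_smul, inv]
  induction k with
  | zero => omega
  | succ k ih =>
    rcases k with _ | k
    · simp only [zero_add, pow_one]
      omega
    have := hm.chain_fwd (C := 2 * m.d o (a • o) - m.d o (a • a • o)) (fun i => a ^ i • o) (k + 2)
      (fun i hi => by
        unfold GMet.Btw
        have := e1 i; have := e1 (i + 1); have := e2 i
        rw [show i + 1 + 1 = i + 2 by omega] at *
        omega)
      (fun i hi => by have := e1 (i + 1); rw [show i + 1 + 1 = i + 2 by omega] at *; omega)
      k (by omega)
    simp only [pow_zero, one_smul] at this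
    unfold GMet.Btw at this
    have := e1 (k + 1); rw [show k + 1 + 1 = k + 2 by omega] at *
    omega

/-- Some power of an element with linear growth satisfies the hypothesis of `lox_btw`. -/
theorem lox_power {o : V} {a : H} {lam : ℕ} (hl : ∀ k : ℕ, k ≤ lam * m.d o (a ^ k • o)) (K : ℕ) :
    ∃ N : ℕ, 0 < N ∧ m.d o (a ^ N • o) + K ≤ m.d o (a ^ N • a ^ N • o) := by
  by_contra hcon
  push Not at hcon
  have h1 : ∀ k : ℕ, m.d o (a ^ (2 ^ k) • o) ≤ m.d o (a • o) + k * K := by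
    intro k
    induction k with
    | zero => simp
    | succ k ih =>
      have := hcon (2 ^ k) (by positivity)
      rw [← mul_smul, ← pow_add, ← two_mul, ← pow_succ'] at this
      rw [add_mul]; omega
  have h2 : ∀ k : ℕ, 2 ^ k ≤ lam * m.d o (a • o) + k * (lam * K) := fun k =>
    (hl (2 ^ k)).trans ((Nat.mul_le_mul_left _ (h1 k)).trans (le_of_eq (by ring)))
  -- exponential growth beats linear growth
  set p := lam * m.d o (a • o)
  set q := lam * K
  have h3 : ∀ n : ℕ, n + 1 ≤ 2 ^ n := fun n => Nat.lt_two_pow_self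
  obtain ⟨s, hs⟩ : ∃ s, s = p + q + 3 := ⟨_, rfl⟩
  have h4 := h2 (s + s + s)
  rw [pow_add, pow_add] at h4
  have h5 := h3 s
  have h6 := Nat.mul_le_mul (Nat.mul_le_mul h5 h5) h5
  have h7 : (s + s + s) * q ≤ (s + s + s) * s := Nat.mul_le_mul_left _ (by omega)
  nlinarith

end Lox
section LoxG
open GMet

variable {ι : Type} [DecidableEq ι] {G : Type} [Group G] {p : FreeGroup ι →* G}

theorem wmet_inv (hp : Surjective p) (g x y : G) :
    (wmet p hp).d (g * x) (g * y) = (wmet p hp).d x y := by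
  simp [wmet, mul_assoc]

theorem wmet_hyp (hp : Surjective p) {δ : ℝ} (h : MarkedHyperbolic p δ) :
    (wmet p hp).Hyp ⌈2 * δ⌉₊ := by
  intro x y z w
  have h1 := h x y z w
  have h2 : 2 * δ ≤ ⌈2 * δ⌉₊ := Nat.le_ceil _
  simp only [wmet]
  rcases max_cases ((wlen p (x⁻¹ * z) : ℝ) + (wlen p (y⁻¹ * w) : ℝ))
    ((wlen p (x⁻¹ * w) : ℝ) + (wlen p (y⁻¹ * z) : ℝ)) with ⟨h3, -⟩ | ⟨h3, -⟩
  · left; rw [h3] at h1; have := h1.trans (add_le_add_right h2 _); exact_mod_cast this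
  · right; rw [h3] at h1; have := h1.trans (add_le_add_right h2 _); exact_mod_cast this

theorem wlen_ball_finite [Fintype ι] (hp : Surjective p) (n : ℕ) : {g | wlen p g ≤ n}.Finite := by
  have h1 : {w : FreeGroup ι | w.norm ≤ n}.Finite :=
    (List.finite_length_le (ι × Bool) n).preimage FreeGroup.toWord_injective.injOn
  refine (h1.image p).subset ?_
  intro g hg
  obtain ⟨w, hw, hw'⟩ := wlen_spec hp g
  exact ⟨w, by rw [mem_ofPred_eq, hw']; exact hg, hw⟩

/-- An infinite hyperbolic group contains an element with linear growth. -/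
theorem exists_lox [Fintype ι] (hp : Surjective p) {δ : ℝ} (h : MarkedHyperbolic p δ)
    [Infinite G] : ∃ g : G, ∀ k : ℕ, k ≤ wlen p (g ^ k) := by
  have hm := wmet_hyp hp h
  obtain ⟨g, hg⟩ := exists_sq_large hm (wmet_inv hp) (fun n => by
    by_contra hcon
    push Not at hcon
    refine Set.infinite_univ ((wlen_ball_finite hp n).subset fun g _ => ?_)
    have := hcon g
    simp only [wmet, inv_one, one_mul] at this
    exact this.le) (2 * ⌈2 * δ⌉₊ + 1)
  refine ⟨g, fun k => ?_⟩
  have := lox_grow (H := G) hm (wmet_inv hp) (o := 1) (a := g) (by simpa [add_assoc] using hg) k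
  simpa [wmet] using this

end LoxG

/-! ### The elementary subgroup of a loxodromic element -/

section Elem
open GMet

variable {V : Type} {H : Type} [Group H] [MulAction H V]

/-- The elementary closure of `a`: all elements conjugating some nontrivial power of `a` to a
nontrivial power of `a`. -/
def elem (a : H) : Subgroup H where
  carrier := {h | ∃ p q : ℤ, p ≠ 0 ∧ q ≠ 0 ∧ h * a ^ p = a ^ q * h}
  one_mem' := ⟨1, 1, one_ne_zero, one_ne_zero, by simp⟩
  mul_mem' := by
    rintro x y ⟨p, q, hp, hq, hx⟩ ⟨p', q', hp', hq', hy⟩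
    refine ⟨p' * p, q * q', mul_ne_zero hp' hp, mul_ne_zero hq hq', ?_⟩
    have hx' : x * a ^ p * x⁻¹ = a ^ q := by rw [hx, mul_inv_cancel_right]
    have hy' : y * a ^ p' * y⁻¹ = a ^ q' := by rw [hy, mul_inv_cancel_right]
    have e1 : y * a ^ (p' * p) * y⁻¹ = a ^ (q' * p) := by
      rw [zpow_mul, ← conj_zpow, hy', ← zpow_mul]
    have e2 : x * a ^ (q' * p) * x⁻¹ = a ^ (q * q') := by
      rw [mul_comm q', zpow_mul, ← conj_zpow, hx', ← zpow_mul]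
    rw [← e2, ← e1]; group
  inv_mem' := by
    rintro x ⟨p, q, hp, hq, hx⟩
    refine ⟨q, p, hq, hp, ?_⟩
    have : a ^ q = x * a ^ p * x⁻¹ := by rw [hx, mul_inv_cancel_right]
    rw [this]; group

theorem mem_elem {a h : H} :
    h ∈ elem a ↔ ∃ p q : ℤ, p ≠ 0 ∧ q ≠ 0 ∧ h * a ^ p = a ^ q * h := Iff.rfl

theorem elem_zpow (a : H) (k : ℤ) : a ^ k ∈ elem a :=
  ⟨1, 1, one_ne_zero, one_ne_zero, by rw [← zpow_add, ← zpow_add, add_comm]⟩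

theorem elem_pow (a : H) {N : ℤ} (hN : N ≠ 0) : elem (a ^ N) = elem a := by
  ext h
  constructor
  · rintro ⟨p, q, hp, hq, e⟩
    exact ⟨N * p, N * q, mul_ne_zero hN hp, mul_ne_zero hN hq, by simpa [zpow_mul] using e⟩
  · rintro ⟨p, q, hp, hq, e⟩
    refine ⟨p, q, hp, hq, ?_⟩
    have e' : h * a ^ p * h⁻¹ = a ^ q := by rw [e, mul_inv_cancel_right]
    have : h * a ^ (p * N) * h⁻¹ = a ^ (q * N) := by
      rw [zpow_mul, ← conj_zpow, e', ← zpow_mul]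
    rw [← zpow_mul, ← zpow_mul, mul_comm N p, mul_comm N q, ← this]; group

/-- A loxodromic element `a` of a group acting properly by isometries on a hyperbolic space, with
base point `o`. -/
structure Lox (m : GMet V) (δ : ℕ) (o : V) (a : H) : Prop where
  hyp : m.Hyp δ
  inv : ∀ (h : H) x y, m.d (h • x) (h • y) = m.d x y
  proper : ∀ n, {h : H | m.d o (h • o) ≤ n}.Finite
  sq : m.d o (a • o) + 2 * δ + 1 ≤ m.d o (a • a • o)

variable {m : GMet V} {δ : ℕ} {o : V} {a : H}

namespace Lox
variable (X : Lox m δ o a)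
include X

theorem btw {i j k : ℤ} (hij : i ≤ j) (hjk : j ≤ k) :
    m.Btw (2 * m.d o (a • o)) (a ^ i • o) (a ^ j • o) (a ^ k • o) :=
  lox_btw X.hyp X.inv X.sq hij hjk

theorem dz (i j : ℤ) : m.d (a ^ i • o) (a ^ j • o) = m.d o (a ^ (j - i) • o) := by
  rw [← X.inv (a ^ i) o, ← mul_smul, ← zpow_add]; congr 3; omega

theorem dz_neg (i : ℤ) : m.d o (a ^ (-i) • o) = m.d o (a ^ i • o) := by
  have := X.dz i 0
  rw [zpow_zero, one_smul, zero_sub] at this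
  rw [← this, m.symm]

theorem grow (i : ℤ) : i.natAbs ≤ m.d o (a ^ i • o) := by
  have h := lox_grow X.hyp X.inv X.sq i.natAbs
  rcases Int.natAbs_eq i with h1 | h1
  · rw [h1, zpow_natCast, Int.natAbs_natCast]; exact h
  · rw [h1, X.dz_neg, zpow_natCast, Int.natAbs_neg, Int.natAbs_natCast]; exact h

theorem up (i : ℤ) : m.d o (a ^ i • o) ≤ i.natAbs * m.d o (a • o) := by
  have h : ∀ n : ℕ, m.d o (a ^ n • o) ≤ n * m.d o (a • o) := by
    intro n
    induction n with
    | zero => simp [m.d_self]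
    | succ n ih =>
      have := m.tri o (a ^ n • o) (a ^ (n + 1) • o)
      rw [pow_succ, mul_smul, X.inv] at this
      rw [pow_succ, mul_smul, add_mul]; omega
  rcases Int.natAbs_eq i with h1 | h1
  · rw [h1, zpow_natCast, Int.natAbs_natCast]; exact h _
  · rw [h1, X.dz_neg, zpow_natCast, Int.natAbs_neg, Int.natAbs_natCast]; exact h _

theorem inj {i j : ℤ} (h : a ^ i = a ^ j) : i = j := by
  have := X.grow (i - j)
  rw [zpow_sub, h, mul_inv_cancel, one_smul, m.d_self] at this
  omega

/-- Points between two orbit points are near the orbit, at intermediate exponents. -/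
theorem near {C : ℕ} {i j : ℤ} (hij : i ≤ j) {z : V} (hz : m.Btw C (a ^ i • o) z (a ^ j • o)) :
    ∃ s : ℤ, i ≤ s ∧ s ≤ j ∧ m.d z (a ^ s • o) ≤ C + 3 * δ + 5 * m.d o (a • o) := by
  obtain ⟨z', h1, h2⟩ := X.hyp.btw_near hz
  obtain ⟨n, hn⟩ := Int.eq_ofNat_of_zero_le (show 0 ≤ j - i by omega)
  obtain rfl : j = i + n := by omega
  rcases Nat.eq_zero_or_pos n with rfl | hn
  · refine ⟨i, le_rfl, by omega, ?_⟩
    simp only [Int.ofNat_zero, add_zero, GMet.Btw] at h1 ⊢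
    simp only [m.d_self] at h1
    have := m.tri z z' (a ^ i • o); have := m.symm z' (a ^ i • o)
    omega
  obtain ⟨s, h3, h4⟩ := X.hyp.chain_near (C := 2 * m.d o (a • o))
    (fun s => a ^ (i + s : ℤ) • o) n hn
    (fun s hs => by
      have := X.btw (i := i) (j := i + s) (k := i + n) (by omega) (by omega)
      simpa using this) z' (by simpa using h1)
  refine ⟨i + s, by omega, by omega, ?_⟩
  have e := X.dz (i + s) (i + (s + 1 : ℕ))
  rw [show (i + (s + 1 : ℕ) - (i + s) : ℤ) = 1 by push_cast; ring, zpow_one] at e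
  have := m.tri z z' (a ^ (i + s : ℤ) • o)
  have := m.symm z' (a ^ (i + s : ℤ) • o)
  unfold GMet.Btw at h4
  omega

/-- The distances to the base point along the orbit are separated like the exponents. -/
theorem sep {i j : ℤ} (hi : 0 ≤ i) (hij : i ≤ j) :
    m.d o (a ^ i • o) + (j - i).natAbs ≤ m.d o (a ^ j • o) + 2 * m.d o (a • o) := by
  have h1 := X.btw hi hij
  have h2 := X.grow (j - i)
  rw [← X.dz i j] at h2
  rw [zpow_zero, one_smul] at h1
  unfold GMet.Btw at h1; omega

/-- Long overlaps between the orbit `⟨a⟩ o` and its translate by `h` force `h` to lie in the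
elementary closure. -/
theorem overlap (K : ℕ) : ∃ T : ℕ, ∀ (h : H) (i i' j j' : ℤ), T ≤ (i - i').natAbs →
    m.d (a ^ i • o) (h • a ^ j • o) ≤ K → m.d (a ^ i' • o) (h • a ^ j' • o) ≤ K → h ∈ elem a := by
  set K2 := 6 * K + 3 * δ + 7 * m.d o (a • o) with hK2
  have fin := X.proper K2
  refine ⟨fin.toFinset.card + 1, ?_⟩
  -- the normalized situation
  have main : ∀ (h : H) (n : ℕ) (j : ℤ), fin.toFinset.card ≤ n →
      m.d o (h • o) ≤ K → m.d (a ^ (n : ℤ) • o) (h • a ^ j • o) ≤ K → h ∈ elem a := by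
    intro h n j hn h1 h2
    have ex : ∀ t : ℕ, ∃ s : ℤ, t ≤ n → m.d o ((a ^ (-(t : ℤ)) * h * a ^ s) • o) ≤ K2 := by
      intro t
      by_cases ht : t ≤ n
      swap
      · exact ⟨0, fun h => absurd h ht⟩
      have b := X.btw (i := 0) (j := t) (k := n) (by omega) (by omega)
      have b2 := b.move (e := K) (h • o) (h • a ^ j • o) (a ^ (t : ℤ) • o) (by simpa using h1) h2
        (by simp [m.d_self])
      have b3 : m.Btw (2 * m.d o (a • o) + 6 * K) o (h⁻¹ • a ^ (t : ℤ) • o) (a ^ j • o) := by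
        unfold GMet.Btw at *
        rw [← X.inv h o, ← X.inv h _ (a ^ j • o), ← X.inv h o (a ^ j • o), smul_inv_smul]
        exact b2
      obtain ⟨s, hs⟩ : ∃ s : ℤ, m.d (h⁻¹ • a ^ (t : ℤ) • o) (a ^ s • o) ≤ K2 := by
        rcases le_total 0 j with hj | hj
        · obtain ⟨s, -, -, hs⟩ := X.near (z := h⁻¹ • a ^ (t : ℤ) • o)
            (C := 2 * m.d o (a • o) + 6 * K) (i := 0) hj
            (by simpa using b3)
          exact ⟨s, by omega⟩
        · obtain ⟨s, -, -, hs⟩ := X.near (z := h⁻¹ • a ^ (t : ℤ) • o)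
            (C := 2 * m.d o (a • o) + 6 * K) (j := 0) hj
            (by simpa using b3.symm)
          exact ⟨s, by omega⟩
      refine ⟨s, fun _ => ?_⟩
      rw [← X.inv h, smul_inv_smul, ← X.inv (a ^ (-(t : ℤ)))] at hs
      simpa [← mul_smul, mul_assoc] using hs
    choose s hs using ex
    obtain ⟨t, ht, t', ht', hne, heq⟩ := Finset.exists_ne_map_eq_of_card_lt_of_maps_to
      (s := Finset.range (n + 1)) (t := fin.toFinset) (by rw [Finset.card_range]; omega)
      (f := fun t => a ^ (-(t : ℤ)) * h * a ^ s t)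
      (fun t ht => by
        simp only [Finset.coe_range, Set.mem_Iio] at ht
        simpa using hs t (by omega))
    have e : h * a ^ (s t - s t') = a ^ ((t : ℤ) - t') * h := by
      have e1 : a ^ (-(t : ℤ)) * h * a ^ s t = a ^ (-(t' : ℤ)) * h * a ^ s t' := heq
      have e2 : h * a ^ s t = a ^ (t : ℤ) * (a ^ (-(t' : ℤ)) * h * a ^ s t') := by
        rw [← e1]; group
      rw [zpow_sub, ← mul_assoc, e2, zpow_sub, zpow_neg]; group
    refine ⟨_, _, ?_, sub_ne_zero.2 (by exact_mod_cast hne), e⟩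
    intro h0
    rw [h0, zpow_zero, mul_one] at e
    have : a ^ ((t : ℤ) - t') = a ^ (0 : ℤ) := by
      rw [zpow_zero]; exact (mul_eq_right.1 e.symm)
    have := X.inj this
    omega
  have main' : ∀ (h : H) (i i' j j' : ℤ), i ≤ i' → fin.toFinset.card ≤ (i - i').natAbs →
      m.d (a ^ i • o) (h • a ^ j • o) ≤ K → m.d (a ^ i' • o) (h • a ^ j' • o) ≤ K →
      h ∈ elem a := by
    intro h i i' j j' hi hn h1 h2
    have := main (a ^ (-i) * h * a ^ j) (i - i').natAbs (j' - j) hn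
      (by rw [← X.inv (a ^ i)]; simpa [← mul_smul, mul_assoc] using h1)
      (by
        rw [← X.inv (a ^ i), ← mul_smul, ← zpow_add, show i + ((i - i').natAbs : ℤ) = i' by omega,
          ← mul_smul, ← mul_smul]
        rw [← mul_smul] at h2
        convert h2 using 3
        group)
    have := mul_mem (mul_mem (elem_zpow a i) this) (elem_zpow a (-j))
    convert this using 1
    group
  intro h i i' j j' hn h1 h2
  rcases le_total i i' with hi | hi
  · exact main' h i i' j j' hi (by omega) h1 h2
  · exact main' h i' i j' j hi (by omega) h2 h1

end Lox
end Elem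

section Elem2
open GMet
open scoped Pointwise

variable {V : Type} {H : Type} [Group H] [MulAction H V]
variable {m : GMet V} {δ : ℕ} {o : V} {a : H}

namespace Lox
variable (X : Lox m δ o a)
include X

/-- Elements of the elementary closure move the base point close to the axis. -/
theorem elem_near {h : H} (hh : h ∈ elem a) :
    ∃ s : ℤ, m.d (h • o) (a ^ s • o) ≤ 5 * δ + 7 * m.d o (a • o) := by
  obtain ⟨p, q, hp, hq, e⟩ := hh
  set R := m.d o (h • o) with hR
  set n : ℤ := R + 2 * m.d o (a • o) + 2 * δ + 1 with hn
  have comm : ∀ k : ℤ, h * a ^ (p * k) = a ^ (q * k) * h := by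
    intro k
    have e' : h * a ^ p * h⁻¹ = a ^ q := by rw [e, mul_inv_cancel_right]
    rw [zpow_mul a q, ← e', conj_zpow, ← zpow_mul]; group
  have far : ∀ k : ℤ, k ≠ 0 → R + 2 * m.d o (a • o) + 2 * δ + 1 ≤ m.d o (a ^ (k * n) • o) ∧
      R + 2 * m.d o (a • o) + 2 * δ + 1 ≤ m.d o (a ^ (k * -n) • o) := by
    intro k hk
    have h1 := X.grow (k * n)
    have h2 := X.grow (k * -n)
    rw [Int.natAbs_mul] at h1 h2
    have : 1 ≤ k.natAbs := by omega
    have h3 : 1 * n.natAbs ≤ k.natAbs * n.natAbs := Nat.mul_le_mul_right _ this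
    rw [Int.natAbs_neg] at h2
    omega
  have dR : ∀ k : ℤ, m.d (a ^ (q * k) • o) (h • a ^ (p * k) • o) = R := by
    intro k
    rw [← mul_smul, comm, mul_smul, X.inv]
  -- the long quadrilateral with narrow ends
  have key : ∀ n' : ℤ, (n' = n ∨ n' = -n) →
      m.Btw (2 * m.d o (a • o)) (h • a ^ (p * n') • o) (h • o) (h • a ^ (p * -n') • o) →
      ∃ s : ℤ, m.d (h • o) (a ^ s • o) ≤ 5 * δ + 7 * m.d o (a • o) := by
    intro n' hn' b
    have f1 : R + 2 * m.d o (a • o) + 2 * δ + 1 ≤ m.d o (a ^ (p * n') • o) ∧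
        R + 2 * m.d o (a • o) + 2 * δ + 1 ≤ m.d o (a ^ (p * -n') • o) := by
      rcases hn' with rfl | rfl
      · exact far p hp
      · rw [neg_neg]; exact (far p hp).symm
    have i1 := X.inv h o (a ^ (p * n') • o)
    have i2 := X.inv h o (a ^ (p * -n') • o)
    have d1 := dR n'
    have d2 := dR (-n')
    rcases X.hyp.thin_btw (a ^ (q * n') • o) b with b | b
    · unfold GMet.Btw at b
      have := m.symm (h • a ^ (p * n') • o) (h • o)
      have := m.symm (h • a ^ (p * n') • o) (a ^ (q * n') • o)
      omega
    rcases X.hyp.thin_btw (a ^ (q * -n') • o) b with b | b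
    · obtain ⟨s, hs⟩ : ∃ s : ℤ, m.d (h • o) (a ^ s • o) ≤
          2 * m.d o (a • o) + δ + δ + 3 * δ + 5 * m.d o (a • o) := by
        rcases le_total (q * n') (q * -n') with hl | hl
        · obtain ⟨s, -, -, hs⟩ := X.near hl b
          exact ⟨s, hs⟩
        · obtain ⟨s, -, -, hs⟩ := X.near hl b.symm
          exact ⟨s, hs⟩
      exact ⟨s, by omega⟩
    · unfold GMet.Btw at b
      omega
  have b0 : ∀ i j : ℤ, i ≤ 0 → 0 ≤ j →
      m.Btw (2 * m.d o (a • o)) (h • a ^ i • o) (h • o) (h • a ^ j • o) := by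
    intro i j hi hj
    have := X.btw hi hj
    rw [zpow_zero, one_smul] at this
    unfold GMet.Btw at *
    simpa only [X.inv] using this
  have hn0 : 0 ≤ n := by omega
  rcases le_total 0 p with hp0 | hp0
  · exact key (-n) (Or.inr rfl) (b0 _ _ (by nlinarith) (by nlinarith))
  · exact key n (Or.inl rfl) (b0 _ _ (by nlinarith) (by nlinarith))

/-- Conjugation by an element of the elementary closure preserves the absolute values of
exponents. -/
theorem elem_abs {h : H} {p q : ℤ} (e : h * a ^ p = a ^ q * h) : p.natAbs ≤ q.natAbs := by
  by_contra hlt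
  push Not at hlt
  set n : ℕ := 2 * m.d o (h • o) + 2 * m.d o (a • o) + 1 with hn
  have e1 : h * a ^ (p * n) * h⁻¹ = a ^ (q * n) := by
    have e' : h * a ^ p * h⁻¹ = a ^ q := by rw [e, mul_inv_cancel_right]
    rw [zpow_mul a q, ← e', conj_zpow, ← zpow_mul]
  have e2 : h * a ^ (p * n) = a ^ (q * n) * h := by rw [← e1]; group
  have t1 := m.tri (h • o) (h • a ^ (p * n) • o) o
  have t2 := m.tri (h • o) o (a ^ (q * n) • o)
  have t3 := m.tri (h • o) (a ^ (q * n) • o) (a ^ (q * n) • h • o)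
  rw [X.inv] at t3
  have t4 : m.d (h • o) (a ^ (q * n) • h • o) = m.d o (a ^ (p * n) • o) := by
    rw [← mul_smul, ← e2, mul_smul, X.inv]
  rw [t4] at t3
  rw [m.symm (h • o) o] at t2
  have abs : ∀ k : ℤ, m.d o (a ^ k • o) = m.d o (a ^ (k.natAbs : ℤ) • o) := by
    intro k
    rcases Int.natAbs_eq k with h1 | h1
    · rw [← h1]
    · conv_lhs => rw [h1, X.dz_neg]
  have a1 := abs (p * n)
  have a2 := abs (q * n)
  rw [Int.natAbs_mul, Int.natAbs_natCast] at a1 a2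
  have hm : q.natAbs * n + n ≤ p.natAbs * n := by
    have : (q.natAbs + 1) * n ≤ p.natAbs * n := Nat.mul_le_mul_right _ hlt
    linarith
  have s := X.sep (i := (q.natAbs * n : ℕ)) (j := (p.natAbs * n : ℕ)) (by omega) (by omega)
  omega

theorem elem_eq {h : H} {p q : ℤ} (e : h * a ^ p = a ^ q * h) :
    h * a ^ p * h⁻¹ = a ^ p ∨ h * a ^ p * h⁻¹ = a ^ (-p) := by
  have h1 := X.elem_abs e
  have e' : h⁻¹ * a ^ q = a ^ p * h⁻¹ := by
    have : a ^ q = h * a ^ p * h⁻¹ := by rw [e, mul_inv_cancel_right]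
    rw [this]; group
  have h2 := X.elem_abs e'
  have : q = p ∨ q = -p := by omega
  rw [e, mul_inv_cancel_right]
  rcases this with rfl | rfl
  · exact Or.inl rfl
  · exact Or.inr rfl

/-- A uniform power of `a` is conjugated to itself or its inverse by the elementary closure. -/
theorem elem_uniform : ∃ N : ℕ, 0 < N ∧ ∀ h ∈ elem a,
    h * a ^ N * h⁻¹ = a ^ N ∨ h * a ^ N * h⁻¹ = (a ^ N)⁻¹ := by
  classical
  have fin := X.proper (5 * δ + 7 * m.d o (a • o))
  have ex : ∀ h : H, ∃ p : ℕ, 0 < p ∧ (h ∈ elem a →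
      h * a ^ p * h⁻¹ = a ^ p ∨ h * a ^ p * h⁻¹ = (a ^ p)⁻¹) := by
    intro h
    by_cases hh : h ∈ elem a
    swap
    · exact ⟨1, one_pos, fun h => absurd h hh⟩
    obtain ⟨p, q, hp, hq, e⟩ := hh
    refine ⟨p.natAbs, by omega, fun _ => ?_⟩
    have h1 := X.elem_eq e
    rcases Int.natAbs_eq p with h2 | h2
    · rw [h2, zpow_neg, zpow_natCast] at h1; exact h1
    · rw [h2, neg_neg, zpow_neg, zpow_natCast, ← conj_inv] at h1
      rcases h1 with h1 | h1
      · left; exact inv_injective h1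
      · right; rw [← inv_inv (h * a ^ p.natAbs * h⁻¹), h1]
  choose p hp hpe using ex
  refine ⟨∏ f ∈ fin.toFinset, p f, Finset.prod_pos fun f _ => hp f, fun h hh => ?_⟩
  obtain ⟨s, hs⟩ := X.elem_near hh
  have hf : a ^ (-s) * h ∈ elem a := mul_mem (elem_zpow a _) hh
  have hd : p (a ^ (-s) * h) ∣ ∏ f ∈ fin.toFinset, p f := by
    refine Finset.dvd_prod_of_mem _ (fin.mem_toFinset.2 ?_)
    change m.d o ((a ^ (-s) * h) • o) ≤ _
    rwa [← X.inv (a ^ s), ← mul_smul, ← mul_assoc, ← zpow_add, add_neg_cancel, zpow_zero,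
      one_mul, m.symm]
  obtain ⟨k, hk⟩ := hd
  rw [hk]
  have c := hpe _ hf
  have c1 : ∀ x : H, (a ^ (-s) * h) * x * (a ^ (-s) * h)⁻¹ = a ^ (-s) * (h * x * h⁻¹) * a ^ s := by
    intro x; group
  have c2 : ∀ y z : H, a ^ (-s) * y * a ^ s = z → y = a ^ s * z * a ^ (-s) := by
    rintro y z rfl; group
  have c3 : h * a ^ p (a ^ (-s) * h) * h⁻¹ = a ^ p (a ^ (-s) * h) ∨
      h * a ^ p (a ^ (-s) * h) * h⁻¹ = (a ^ p (a ^ (-s) * h))⁻¹ := by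
    rcases c with c | c
    · left
      rw [c1] at c
      rw [c2 _ _ c, ← zpow_natCast]; group
    · right
      rw [c1] at c
      rw [c2 _ _ c, ← zpow_natCast]; group
  rcases c3 with c3 | c3
  · left; rw [pow_mul, ← conj_pow, c3]
  · right; rw [pow_mul, ← conj_pow, c3, inv_pow]

end Lox

/-- A loxodromic element which is conjugated to itself or its inverse by its whole elementary
closure. -/
structure LoxC (m : GMet V) (δ : ℕ) (o : V) (a : H) : Prop extends Lox m δ o a where
  com : ∀ h ∈ elem a, h * a * h⁻¹ = a ∨ h * a * h⁻¹ = a⁻¹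

/-- An element of linear growth has a power satisfying `LoxC`. -/
theorem exists_LoxC (hyp : m.Hyp δ) (inv : ∀ (h : H) x y, m.d (h • x) (h • y) = m.d x y)
    (proper : ∀ n, {h : H | m.d o (h • o) ≤ n}.Finite) {lam : ℕ}
    (hl : ∀ k : ℕ, k ≤ lam * m.d o (a ^ k • o)) :
    ∃ N : ℕ, 0 < N ∧ LoxC m δ o (a ^ N) := by
  obtain ⟨N1, h1, h2⟩ := lox_power hl (2 * δ + 1)
  have X1 : Lox m δ o (a ^ N1) := ⟨hyp, inv, proper, by omega⟩
  obtain ⟨N2, h3, h4⟩ := X1.elem_uniform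
  obtain ⟨N3, h5, h6⟩ := lox_power (o := o) (m := m) (a := (a ^ N1) ^ N2) (lam := lam) (fun k => by
    rw [← pow_mul, ← pow_mul]
    refine le_trans ?_ (hl _)
    rw [← mul_assoc]
    exact Nat.le_mul_of_pos_left k (Nat.mul_pos h1 h3)) (2 * δ + 1)
  refine ⟨N1 * N2 * N3, Nat.mul_pos (Nat.mul_pos h1 h3) h5, ?_⟩
  rw [pow_mul, pow_mul]
  have e : elem (((a ^ N1) ^ N2) ^ N3) = elem (a ^ N1) := by
    have e1 := elem_pow (a ^ N1) (N := N2) (by omega)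
    have e2 := elem_pow ((a ^ N1) ^ N2) (N := N3) (by omega)
    rw [zpow_natCast] at e1 e2
    rw [e2, e1]
  refine ⟨⟨hyp, inv, proper, by omega⟩, fun h hh => ?_⟩
  rw [e] at hh
  rcases h4 h hh with c | c
  · left; rw [← conj_pow, c]
  · right; rw [← conj_pow, c, inv_pow]

namespace LoxC
variable (X : LoxC m δ o a)
include X

theorem comm_of {h : H} {k : ℤ} (hk : k ≠ 0) (e : h * a ^ k = a ^ k * h) : h * a = a * h := by
  rcases X.com h ⟨k, k, hk, hk, e⟩ with c | c
  · rw [mul_inv_eq_iff_eq_mul] at c; exact c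
  · exfalso
    have : a ^ k = a ^ (-k) := by
      rw [zpow_neg, ← inv_zpow, ← c, conj_zpow, e, mul_inv_cancel_right]
    have := X.inj this
    omega

/-- The torsion part of the centralizer of `a` is finite. -/
theorem tors_finite : {e : H | e * a = a * e ∧ IsOfFinOrder e}.Finite := by
  have ex : ∀ e : H, ∃ s : ℤ, e * a = a * e →
      m.d (e • o) (a ^ s • o) ≤ 5 * δ + 7 * m.d o (a • o) := by
    intro e
    by_cases he : e * a = a * e
    · obtain ⟨s, hs⟩ := X.toLox.elem_near (h := e) ⟨1, 1, one_ne_zero, one_ne_zero, by simpa using he⟩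
      exact ⟨s, fun _ => hs⟩
    · exact ⟨0, fun h => absurd h he⟩
  choose s hs using ex
  refine Set.Finite.of_finite_image (f := fun e => a ^ (-s e) * e)
    ((X.proper (5 * δ + 7 * m.d o (a • o))).subset ?_) ?_
  · rintro _ ⟨e, ⟨he, -⟩, rfl⟩
    change m.d o ((a ^ (-s e) * e) • o) ≤ _
    rw [← X.inv (a ^ s e), ← mul_smul, ← mul_assoc, ← zpow_add, add_neg_cancel, zpow_zero,
      one_mul, m.symm]
    exact hs e he
  · rintro e ⟨he, fe⟩ e' ⟨he', fe'⟩ h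
    have h' : a ^ (-s e) * e = a ^ (-s e') * e' := h
    have c1 : Commute e a := he
    have h2 : a ^ (s e' - s e) * e = e' := by
      rw [sub_eq_add_neg, zpow_add, mul_assoc, h', ← mul_assoc, ← zpow_add, add_neg_cancel,
        zpow_zero, one_mul]
    have h3 : a ^ (s e' - s e) = e' * e⁻¹ := eq_mul_inv_of_mul_eq h2
    have c2 : Commute e' e⁻¹ := by
      rw [← h2]
      exact ((c1.zpow_right _).symm.mul_left (Commute.refl e)).inv_right
    have h4 := c2.isOfFinOrder_mul fe' fe.inv
    rw [← h3] at h4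
    obtain ⟨n, hn, h5⟩ := isOfFinOrder_iff_pow_eq_one.1 h4
    rw [← zpow_natCast, ← zpow_mul] at h5
    have h6 := X.inj (h5.trans (zpow_zero a).symm)
    have h7 : s e' - s e = 0 := by
      rcases mul_eq_zero.1 h6 with h | h
      · exact h
      · omega
    rw [h7, zpow_zero, one_mul] at h2
    exact h2

/-- If the torsion centralizing `a` has infinite orbits under conjugation by `G`, some element
`g` of `G` lies outside the elementary closure and conjugates no nontrivial torsion element
centralizing `a` to another one. -/
theorem exists_g {G : Type} [Group G] (pr : G →* H) {α : G} (hα : pr α = a)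
    (hne : ¬ (Subgroup.zpowers α).FiniteIndex) (hpr : Injective pr)
    (hinf : ∀ e : H, e ≠ 1 → e ∈ elem a → ¬ (Set.range fun x : G => pr x * e * (pr x)⁻¹).Finite) :
    ∃ g : G, pr g ∉ elem a ∧ ∀ e e' : H, e * a = a * e → e' * a = a * e' → IsOfFinOrder e →
      IsOfFinOrder e' → pr g * e' = e * pr g → e = 1 := by
  classical
  by_contra hcon
  push Not at hcon
  have finK := X.tors_finite
  have finF := X.proper (5 * δ + 7 * m.d o (a • o))
  -- one coset for each element close to the base point and for each pair of torsion elements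
  let C : H → Subgroup G := fun e' => (Subgroup.centralizer {e'}).comap pr
  let S : Finset (H ⊕ (H × H)) :=
    finF.toFinset.disjSum ((finK.toFinset ×ˢ finK.toFinset).filter fun x => x.2 ≠ 1)
  let K : H ⊕ (H × H) → Subgroup G := Sum.elim (fun _ => Subgroup.zpowers α) (fun x => C x.2)
  let c : H ⊕ (H × H) → G := Sum.elim (fun f => invFun pr f⁻¹)
    (fun x => Classical.epsilon fun g => pr g * x.2 = x.1 * pr g)
  have cover : ⋃ i ∈ S, c i • (K i : Set G) = Set.univ := by
    refine Set.eq_univ_of_forall fun g => ?_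
    simp only [Set.mem_iUnion]
    by_cases hg : pr g ∈ elem a
    · obtain ⟨s, hs⟩ := X.toLox.elem_near (inv_mem hg)
      refine ⟨Sum.inl (a ^ (-s) * (pr g)⁻¹), ?_, ?_⟩
      · refine Finset.inl_mem_disjSum.2 (finF.mem_toFinset.2 ?_)
        change m.d o ((a ^ (-s) * (pr g)⁻¹) • o) ≤ _
        rwa [← X.inv (a ^ s), ← mul_smul, ← mul_assoc, ← zpow_add, add_neg_cancel, zpow_zero,
          one_mul, m.symm]
      · rw [mem_leftCoset_iff]
        have e1 : invFun pr (a ^ (-s) * (pr g)⁻¹)⁻¹ = g * α ^ s := by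
          have : (a ^ (-s) * (pr g)⁻¹)⁻¹ = pr (g * α ^ s) := by
            rw [map_mul, map_zpow, hα]; group
          rw [this, leftInverse_invFun hpr]
        change (invFun pr (a ^ (-s) * (pr g)⁻¹)⁻¹)⁻¹ * g ∈ Subgroup.zpowers α
        rw [e1]
        refine ⟨-s, ?_⟩
        change α ^ (-s) = _
        group
    · obtain ⟨e, e', h1, h2, h3, h4, h5, h6⟩ := hcon g hg
      refine ⟨Sum.inr (e, e'), ?_, ?_⟩
      · refine Finset.inr_mem_disjSum.2 (Finset.mem_filter.2 ⟨Finset.mem_product.2 ⟨?_, ?_⟩, ?_⟩)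
        · exact finK.mem_toFinset.2 ⟨h1, h3⟩
        · exact finK.mem_toFinset.2 ⟨h2, h4⟩
        · rintro h7
          rw [show e' = 1 from h7, mul_one] at h5
          exact h6 (right_eq_mul.1 h5)
      · rw [mem_leftCoset_iff]
        have h7 := Classical.epsilon_spec (p := fun g => pr g * e' = e * pr g) ⟨g, h5⟩
        set y := Classical.epsilon fun g => pr g * e' = e * pr g
        change y⁻¹ * g ∈ C e'
        rw [Subgroup.mem_comap, Subgroup.mem_centralizer_singleton_iff, map_mul, map_inv]
        have h8 : (pr y)⁻¹ * e = e' * (pr y)⁻¹ := by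
          have : e = pr y * e' * (pr y)⁻¹ := by rw [h7, mul_inv_cancel_right]
          rw [this]; group
        rw [mul_assoc, h5, ← mul_assoc, h8, mul_assoc]
  obtain ⟨i, hi, hfi⟩ := Subgroup.exists_finiteIndex_of_leftCoset_cover cover
  rcases i with f | ⟨e, e'⟩
  · exact hne hfi
  · obtain ⟨h1, h2⟩ := Finset.mem_filter.1 (Finset.inr_mem_disjSum.1 hi)
    rw [Finset.mem_product] at h1
    obtain ⟨h3, h4⟩ := h1
    have h5 := (finK.mem_toFinset.1 h4).1
    refine hinf e' h2 ⟨1, 1, one_ne_zero, one_ne_zero, by simpa using h5⟩ ?_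
    change (C e').FiniteIndex at hfi
    refine (Set.finite_range fun q : G ⧸ C e' => pr q.out * e' * (pr q.out)⁻¹).subset ?_
    rintro _ ⟨x, rfl⟩
    refine ⟨(x : G ⧸ C e'), ?_⟩
    have h6 : (x : G ⧸ C e').out⁻¹ * x ∈ C e' :=
      QuotientGroup.eq.1 (Quotient.out_eq' (x : G ⧸ C e'))
    set y := (x : G ⧸ C e').out
    rw [Subgroup.mem_comap, Subgroup.mem_centralizer_singleton_iff, map_mul, map_inv] at h6
    have h7 : pr x = pr y * ((pr y)⁻¹ * pr x) := by group
    change pr y * e' * (pr y)⁻¹ = pr x * e' * (pr x)⁻¹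
    have h8 : pr x * e' = pr y * e' * ((pr y)⁻¹ * pr x) := by
      rw [mul_assoc, ← h6]; group
    rw [h8]; group

end LoxC
end Elem2

/-! ### Broken lines along translates of an axis -/

section Corner
open GMet

variable {V : Type} {H : Type} [Group H] [MulAction H V]
variable {m : GMet V} {δ : ℕ} {o : V} {a : H}

theorem GMet.Btw.trans_r {c c' : ℕ} {x z y w : V} (h : m.Btw c x z y) (h2 : m.Btw c' z w y) :
    m.Btw (c + c') x w y := by
  unfold GMet.Btw at *
  have := m.tri x z w
  omega

theorem GMet.Btw.trans_l {c c' : ℕ} {x z y w : V} (h : m.Btw c x z y) (h2 : m.Btw c' x w z) :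
    m.Btw (c + c') x w y := by
  unfold GMet.Btw at *
  have := m.tri w z y
  omega

/-- An element outside the elementary closure makes a definite angle between two half-axes. -/
theorem LoxC.corner (X : LoxC m δ o a) {c : H} (hc : c ∉ elem a) :
    ∃ C, ∀ k l : ℤ, m.Btw C (c⁻¹ • a ^ k • o) o (a ^ l • o) := by
  set ℓ := m.d o (a • o) with hℓ
  set D := m.d o (c⁻¹ • o) with hD
  set K := 2 * ℓ + δ + 6 * D + 3 * δ + 5 * ℓ + D with hK
  obtain ⟨T, hT⟩ := X.toLox.overlap K
  refine ⟨2 * ℓ + δ + 2 * (T * ℓ), fun k l => ?_⟩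
  by_cases hl : l.natAbs ≤ T
  · have h1 := X.toLox.up l
    have h2 : l.natAbs * ℓ ≤ T * ℓ := Nat.mul_le_mul_right _ hl
    have h3 := m.tri (c⁻¹ • a ^ k • o) (a ^ l • o) o
    have h4 := m.symm o (a ^ l • o)
    rw [← hℓ] at h1
    unfold GMet.Btw
    omega
  push Not at hl
  obtain ⟨t, ht, hb⟩ : ∃ t : ℤ, t.natAbs = T ∧ m.Btw (2 * ℓ) o (a ^ t • o) (a ^ l • o) := by
    rcases le_total 0 l with h0 | h0
    · refine ⟨T, by omega, ?_⟩
      simpa using X.toLox.btw (i := 0) (j := T) (k := l) (by omega) (by omega)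
    · refine ⟨-T, by omega, ?_⟩
      simpa using (X.toLox.btw (i := l) (j := -T) (k := 0) (by omega) (by omega)).symm
  rcases X.hyp.thin_btw (c⁻¹ • a ^ k • o) hb with b | b
  · exfalso
    have b2 : m.Btw (2 * ℓ + δ + 6 * D) o (c • a ^ t • o) (a ^ k • o) := by
      have := b.move (e := D) (c⁻¹ • o) (c⁻¹ • a ^ k • o) (a ^ t • o) le_rfl (by simp [m.d_self])
        (by simp [m.d_self])
      unfold GMet.Btw at *
      rw [← X.inv c, ← X.inv c _ (c⁻¹ • a ^ k • o), ← X.inv c (c⁻¹ • o)] at this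
      simpa only [smul_inv_smul] using this
    obtain ⟨s, hs⟩ : ∃ s : ℤ, m.d (c • a ^ t • o) (a ^ s • o) ≤ K := by
      rcases le_total 0 k with h0 | h0
      · obtain ⟨s, -, -, hs⟩ := X.toLox.near (z := c • a ^ t • o) (i := 0) (j := k)
          (C := 2 * ℓ + δ + 6 * D) h0 (by simpa using b2)
        exact ⟨s, by omega⟩
      · obtain ⟨s, -, -, hs⟩ := X.toLox.near (z := c • a ^ t • o) (i := k) (j := 0)
          (C := 2 * ℓ + δ + 6 * D) h0 (by simpa using b2.symm)
        exact ⟨s, by omega⟩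
    have := hT c⁻¹ 0 t 0 s (by omega) (by simp only [zpow_zero, one_smul]; omega)
      (by rw [← X.inv c, smul_inv_smul]; exact hs)
    exact hc (by simpa using inv_mem this)
  · have h1 := X.toLox.up t
    rw [ht, ← hℓ] at h1
    have h3 := m.tri (c⁻¹ • a ^ k • o) (a ^ t • o) o
    have h4 := m.tri o (a ^ t • o) (a ^ l • o)
    have h5 := m.symm o (a ^ t • o)
    unfold GMet.Btw at *
    omega

/-- A loxodromic element together with a set `F` of corner elements outside its elementary
closure; `D` bounds displacements of the base point and `C` the defect of the corners. -/
structure Crn (m : GMet V) (δ : ℕ) (o : V) (a : H) (F : Set H) (D C : ℕ) : Prop where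
  lox : LoxC m δ o a
  disj : ∀ c ∈ F, c ∉ elem a
  la : m.d o (a • o) ≤ D
  bd : ∀ c ∈ F, m.d o (c • o) ≤ D
  corner : ∀ c ∈ F, ∀ k l : ℤ, ∀ d : H, (d = 1 ∨ d ∈ F) →
    m.Btw C (c⁻¹ • a ^ k • o) o (a ^ l • d • o)

theorem exists_Crn (X : LoxC m δ o a) (F : Set H) (hF : F.Finite) (hd : ∀ c ∈ F, c ∉ elem a) :
    ∃ D C, Crn m δ o a F D C := by
  obtain ⟨D, hD⟩ : ∃ D, ∀ c ∈ F, m.d o (c • o) ≤ D := by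
    obtain ⟨D, hD⟩ := (hF.image fun c => m.d o (c • o)).bddAbove
    exact ⟨D, fun c hc => hD ⟨c, hc, rfl⟩⟩
  have ex : ∀ c : H, ∃ C, c ∈ F → ∀ k l : ℤ, m.Btw C (c⁻¹ • a ^ k • o) o (a ^ l • o) := by
    intro c
    by_cases hc : c ∈ F
    · obtain ⟨C, h⟩ := X.corner (hd c hc)
      exact ⟨C, fun _ => h⟩
    · exact ⟨0, fun h => absurd h hc⟩
  choose C hC using ex
  obtain ⟨C', hC'⟩ := (hF.image C).bddAbove
  refine ⟨D + m.d o (a • o), C' + 2 * D, X, hd, by omega, fun c hc => (hD c hc).trans (by omega),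
    fun c hc k l d hd => ?_⟩
  have h1 := hC c hc k l
  have h2 : C c ≤ C' := hC' ⟨c, hc, rfl⟩
  have h3 : m.d (a ^ l • o) (a ^ l • d • o) ≤ D := by
    rw [X.inv]
    rcases hd with rfl | hd
    · simp [m.d_self]
    · exact hD d hd
  unfold GMet.Btw at *
  have := m.tri o (a ^ l • o) (a ^ l • d • o)
  have := m.tri (c⁻¹ • a ^ k • o) (a ^ l • d • o) (a ^ l • o)
  have := m.symm (a ^ l • o) (a ^ l • d • o)
  omega

/-- A broken line: a bi-infinite product of long powers of `a` and corner elements. -/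
structure Line (a : H) (F : Set H) (E : ℕ) (e : ℤ → ℕ) (c : ℤ → H) (U : ℤ → H) : Prop where
  step : ∀ q, U (q + 1) = U q * a ^ (e q : ℤ) * c q
  mem : ∀ q, c q ∈ F
  big : ∀ q, E ≤ e q

variable {F : Set H} {D C E : ℕ} {e e' : ℤ → ℕ} {c c' : ℤ → H} {U U' : ℤ → H}

theorem Line.smul (hU : Line a F E e c U) (h : H) : Line a F E e c (fun q => h * U q) :=
  ⟨fun q => by rw [hU.step, mul_assoc, mul_assoc, mul_assoc], hU.mem, hU.big⟩

theorem Line.mono {E' : ℕ} (hU : Line a F E e c U) (h : E' ≤ E) : Line a F E' e c U :=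
  ⟨hU.step, hU.mem, fun q => h.trans (hU.big q)⟩

theorem Line.next (hU : Line a F E e c U) (o : V) (q : ℤ) :
    U (q + 1) • o = U q • a ^ (e q : ℤ) • c q • o := by
  rw [hU.step, mul_smul, mul_smul]

theorem Line.prev (hU : Line a F E e c U) (o : V) (q i : ℤ) :
    U q • a ^ i • o = U (q + 1) • (c q)⁻¹ • a ^ (i - e q) • o := by
  rw [hU.step, mul_smul, mul_smul, smul_inv_smul, ← mul_smul (a ^ (e q : ℤ)), ← zpow_add,
    add_sub_cancel]

namespace Crn
variable (X : Crn m δ o a F D C)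
include X

/-- The corner, its predecessor and its successor on the broken line do not all lie near one
translate of the axis. -/
theorem three (K : ℕ) : ∃ T : ℕ, ∀ c ∈ F, ∀ (h : H) (i j k : ℤ), m.d o (h • a ^ i • o) ≤ K →
    m.d (c⁻¹ • a ^ (-(T : ℤ)) • o) (h • a ^ j • o) ≤ K → m.d (a ^ (T : ℤ) • o) (h • a ^ k • o) ≤ K →
    False := by
  obtain ⟨T, hT⟩ := X.lox.toLox.overlap (K + D)
  refine ⟨T, fun c hc h i j k h1 h2 h3 => X.disj c hc ?_⟩
  have e1 : h ∈ elem a := hT h 0 T i k (by omega) (by simpa using h1.trans (by omega))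
    (h3.trans (by omega))
  have e2 : c * h ∈ elem a := by
    refine hT (c * h) 0 (-T) i j (by omega) ?_ ?_
    · have t := m.tri o (c • o) (c • h • a ^ i • o)
      rw [X.lox.inv] at t
      have := X.bd c hc
      simp only [zpow_zero, one_smul, mul_smul]
      omega
    · rw [← X.lox.inv c, smul_inv_smul] at h2
      rw [mul_smul]
      omega
  simpa using mul_mem e2 (inv_mem e1)

section OneLine
variable (hU : Line a F E e c U)
include hU

theorem next_near (q : ℤ) : m.d (U (q + 1) • o) (U q • a ^ (e q : ℤ) • o) ≤ D := by
  rw [hU.next o, X.lox.inv, X.lox.inv, m.symm]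
  exact X.bd _ (hU.mem q)

theorem len (q : ℤ) : e q ≤ m.d (U q • o) (U (q + 1) • o) + D := by
  have h1 := X.next_near hU q
  have h2 := X.lox.toLox.grow (e q)
  have h3 := m.tri (U q • o) (U (q + 1) • o) (U q • a ^ (e q : ℤ) • o)
  rw [X.lox.inv] at h3
  omega

/-- The chain of corners between two points of a broken line. -/
theorem line_btw (hE : C + 2 * δ + D < E) (q : ℤ) (n : ℕ) (i j : ℤ) (p : ℕ → V)
    (h0 : p 0 = U q • a ^ i • o) (hn : p (n + 1) = U (q + n) • a ^ j • o)
    (hp : ∀ k, 0 < k → k ≤ n → p k = U (q + k) • o) :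
    ∀ i j k, i ≤ j → j ≤ k → k ≤ n + 1 → m.Btw (C + 2 * δ) (p i) (p j) (p k) := by
  refine X.lox.hyp.chain p (n + 1) (fun k hk => ?_) (fun k hk => ?_)
  · have l : ∃ i' : ℤ, p k = U (q + k) • a ^ i' • o := by
      rcases Nat.eq_zero_or_pos k with rfl | h
      · exact ⟨i, by simpa using h0⟩
      · exact ⟨0, by simpa using hp k h (by omega)⟩
    have r : ∃ j' d, (d = 1 ∨ d ∈ F) ∧ p (k + 2) = U (q + k + 1) • a ^ (j' : ℤ) • d • o := by
      rcases (show k + 1 ≤ n by omega).eq_or_lt with h | h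
      · subst h
        exact ⟨j, 1, Or.inl rfl, by rw [hn, one_smul]; push_cast; rw [add_assoc]⟩
      · refine ⟨e (q + k + 1), c (q + k + 1), Or.inr (hU.mem _), ?_⟩
        rw [hp (k + 2) (by omega) (by omega), ← hU.next o]
        congr 2; push_cast; ring
    obtain ⟨i', hi'⟩ := l
    obtain ⟨j', d, hd, hj'⟩ := r
    rw [hi', hj', hp (k + 1) (by omega) (by omega), hU.prev o]
    have := X.corner (c (q + k)) (hU.mem _) (i' - e (q + k)) j' d hd
    unfold GMet.Btw at *
    rw [show q + (k + 1 : ℕ) = q + k + 1 by push_cast; ring]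
    simpa only [X.lox.inv] using this
  · rw [hp (k + 1) (by omega) (by omega), hp (k + 2) (by omega) (by omega)]
    have h1 := X.len hU (q + (k + 1 : ℕ))
    have h2 := hU.big (q + (k + 1 : ℕ))
    rw [show q + (k + 1 : ℕ) + 1 = q + (k + 2 : ℕ) by push_cast; ring] at h1
    omega

/-- Corners lie between points on both sides of them. -/
theorem corner_btw (hE : C + 2 * δ + D < E) {q k r : ℤ} (hqk : q < k) (hkr : k ≤ r) (i j : ℤ) :
    m.Btw (C + 2 * δ) (U q • a ^ i • o) (U k • o) (U r • a ^ j • o) := by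
  obtain ⟨n, hn⟩ := Int.eq_ofNat_of_zero_le (show 0 ≤ r - q by omega)
  obtain ⟨l, hl⟩ := Int.eq_ofNat_of_zero_le (show 0 ≤ k - q by omega)
  obtain rfl : r = q + n := by omega
  obtain rfl : k = q + l := by omega
  have := X.line_btw hU hE q n i j
    (fun k => if k = 0 then U q • a ^ i • o else if k = n + 1 then U (q + n) • a ^ j • o
      else U (q + k) • o) (by simp) (by simp)
    (fun k h1 h2 => by rw [if_neg (by omega), if_neg (by omega)]) 0 l (n + 1) (by omega) (by omega)
    le_rfl
  simpa [show l ≠ 0 by omega, show l ≠ n + 1 by omega] using this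

end OneLine


/-- Points between two points of an axis are near the axis. -/
theorem axis_near {K : ℕ} {h : H} {i j : ℤ} {z : V}
    (hz : m.Btw K (h • a ^ i • o) z (h • a ^ j • o)) :
    ∃ s, ((i ≤ s ∧ s ≤ j) ∨ (j ≤ s ∧ s ≤ i)) ∧ m.d z (h • a ^ s • o) ≤ K + 3 * δ + 5 * D := by
  have hl := X.la
  have hz' : m.Btw K (a ^ i • o) (h⁻¹ • z) (a ^ j • o) := by
    unfold GMet.Btw at *
    rw [← X.lox.inv h, ← X.lox.inv h _ (a ^ j • o), ← X.lox.inv h (a ^ i • o) (a ^ j • o),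
      smul_inv_smul]
    exact hz
  have fin : ∀ s : ℤ, m.d (h⁻¹ • z) (a ^ s • o) = m.d z (h • a ^ s • o) := fun s => by
    rw [← X.lox.inv h, smul_inv_smul]
  rcases le_total i j with h0 | h0
  · obtain ⟨s, h1, h2, h3⟩ := X.lox.toLox.near h0 hz'
    rw [fin] at h3
    exact ⟨s, Or.inl ⟨h1, h2⟩, by omega⟩
  · obtain ⟨s, h1, h2, h3⟩ := X.lox.toLox.near h0 hz'.symm
    rw [fin] at h3
    exact ⟨s, Or.inr ⟨h1, h2⟩, by omega⟩

section OneLine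
variable (hU : Line a F E e c U)
include hU

theorem seg_btw {k i s : ℤ} (his : i ≤ s) (hs : s ≤ e k) :
    m.Btw (4 * D) (U k • a ^ i • o) (U k • a ^ s • o) (U (k + 1) • o) := by
  have h1 := X.lox.toLox.btw his hs
  have h2 := X.next_near hU k
  have h3 := X.la
  have t1 := m.tri (U k • a ^ s • o) (U k • a ^ (e k : ℤ) • o) (U (k + 1) • o)
  have t2 := m.tri (U k • a ^ i • o) (U (k + 1) • o) (U k • a ^ (e k : ℤ) • o)
  have t3 := m.symm (U k • a ^ (e k : ℤ) • o) (U (k + 1) • o)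
  unfold GMet.Btw at *
  rw [X.lox.inv] at t1 t2 ⊢
  omega

omit hU in
/-- Points between two points of a segment of a broken line are near that segment. -/
theorem seg_near {k i j : ℤ} (hi : 0 ≤ i) (hi' : i ≤ e k) (hj : 0 ≤ j) (hj' : j ≤ e k) {y z : V}
    (hy : m.d y (U k • a ^ j • o) ≤ D) {K : ℕ} (hz : m.Btw K (U k • a ^ i • o) z y) :
    ∃ s : ℤ, 0 ≤ s ∧ s ≤ e k ∧ m.d z (U k • a ^ s • o) ≤ K + 3 * δ + 7 * D := by
  have hz' : m.Btw (K + 2 * D) (U k • a ^ i • o) z (U k • a ^ j • o) := by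
    unfold GMet.Btw at *
    have := m.tri z y (U k • a ^ j • o)
    have := m.tri (U k • a ^ i • o) (U k • a ^ j • o) y
    have := m.symm y (U k • a ^ j • o)
    omega
  obtain ⟨s, h1, h2⟩ := X.axis_near hz'
  exact ⟨s, by omega, by omega, by omega⟩

/-- Points between two points of a broken line are near the broken line. -/
theorem line_near (hE : C + 2 * δ + D < E) {q r i j : ℤ} (hqr : q ≤ r) (hi : 0 ≤ i) (hi' : i ≤ e q)
    (hj : 0 ≤ j) (hj' : j ≤ e r) {z : V} (hz : m.Btw 0 (U q • a ^ i • o) z (U r • a ^ j • o)) :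
    ∃ k s : ℤ, q ≤ k ∧ k ≤ r ∧ 0 ≤ s ∧ s ≤ e k ∧
      m.d z (U k • a ^ s • o) ≤ 2 * C + 9 * δ + 7 * D := by
  obtain ⟨n, hn⟩ := Int.eq_ofNat_of_zero_le (show 0 ≤ r - q by omega)
  obtain rfl : r = q + n := by omega
  set p : ℕ → V := fun k => if k = 0 then U q • a ^ i • o else
    if k = n + 1 then U (q + n) • a ^ j • o else U (q + k) • o with hp
  have h0 : p 0 = U q • a ^ i • o := by simp [hp]
  have hn : p (n + 1) = U (q + n) • a ^ j • o := by simp [hp]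
  have hk : ∀ k, 0 < k → k ≤ n → p k = U (q + k) • o := fun k h1 h2 => by
    simp only [hp]; rw [if_neg (by omega), if_neg (by omega)]
  have hb := X.line_btw hU hE q n i j p h0 hn hk
  obtain ⟨k, hkn, hz2⟩ := X.lox.hyp.chain_near p (n + 1) (by omega)
    (fun k hk => hb 0 k (n + 1) (by omega) hk le_rfl) z (by rw [h0, hn]; exact hz)
  obtain ⟨i', hi1, hi2, hi3⟩ : ∃ i' : ℤ, 0 ≤ i' ∧ i' ≤ e (q + k) ∧
      p k = U (q + k) • a ^ i' • o := by
    rcases Nat.eq_zero_or_pos k with rfl | h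
    · exact ⟨i, hi, by simpa using hi', by simpa using h0⟩
    · exact ⟨0, le_rfl, by omega, by simpa using hk k h (by omega)⟩
  obtain ⟨j', hj1, hj2, hj3⟩ : ∃ j' : ℤ, 0 ≤ j' ∧ j' ≤ e (q + k) ∧
      m.d (p (k + 1)) (U (q + k) • a ^ j' • o) ≤ D := by
    rcases (show k ≤ n by omega).eq_or_lt with h | h
    · subst h
      exact ⟨j, hj, hj', by rw [hn, m.d_self]; omega⟩
    · refine ⟨e (q + k), by omega, le_rfl, ?_⟩
      rw [hk (k + 1) (by omega) (by omega)]
      have := X.next_near hU (q + k)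
      rwa [show q + (k + 1 : ℕ) = q + k + 1 by push_cast; ring]
  rw [hi3] at hz2
  obtain ⟨s, h1, h2, h3⟩ := X.seg_near hi1 hi2 hj1 hj2 hj3 hz2
  exact ⟨q + k, s, by omega, by omega, h1, h2, by omega⟩

/-- A corner, and the points at distance `T` before and after it, lie between points of the
broken line on both sides. -/
theorem tri_btw (hE : C + 2 * δ + D < E) {T : ℕ} (hT : T ≤ E) {q k r i : ℤ} (j : ℤ)
    (hqk : q < k) (hkr : k < r) (hi : q + 1 < k ∨ i + T ≤ e q) :
    m.Btw (2 * C + 4 * δ + 4 * D) (U q • a ^ i • o) (U k • o) (U r • a ^ j • o) ∧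
    m.Btw (2 * C + 4 * δ + 4 * D) (U q • a ^ i • o) (U k • (c (k - 1))⁻¹ • a ^ (-(T : ℤ)) • o)
      (U r • a ^ j • o) ∧
    m.Btw (2 * C + 4 * δ + 4 * D) (U q • a ^ i • o) (U k • a ^ (T : ℤ) • o) (U r • a ^ j • o) := by
  have b1 := X.corner_btw hU hE hqk hkr.le i j
  refine ⟨b1.mono (by omega), ?_, ?_⟩
  · have e1 := hU.prev o (k - 1) (e (k - 1) - T)
    rw [sub_add_cancel, show (e (k - 1) - T : ℤ) - e (k - 1) = -T by ring] at e1
    rw [← e1]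
    have bk := hU.big (k - 1)
    by_cases hq : q + 1 < k
    · have b2 := X.corner_btw hU hE (q := q) (k := k - 1) (r := k) (by omega) (by omega) i 0
      have b3 := X.seg_btw hU (k := k - 1) (i := 0) (s := e (k - 1) - T) (by omega) (by omega)
      rw [zpow_zero, one_smul] at b2 b3
      rw [sub_add_cancel] at b3
      exact (b1.trans_l (b2.trans_r b3)).mono (by omega)
    · obtain rfl : q = k - 1 := by omega
      have b3 := X.seg_btw hU (k := k - 1) (i := i) (s := e (k - 1) - T) (by omega) (by omega)
      rw [sub_add_cancel] at b3
      exact (b1.trans_l b3).mono (by omega)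
  · have bk := hU.big k
    have b2 := X.corner_btw hU hE (q := k) (k := k + 1) (r := r) (by omega) (by omega) 0 j
    have b3 := X.seg_btw hU (k := k) (i := 0) (s := T) (by omega) (by omega)
    rw [zpow_zero, one_smul] at b2 b3
    exact (b1.trans_r (b2.trans_l b3)).mono (by omega)

end OneLine

/-- A broken line does not stay near an axis through an interior corner. -/
theorem no_axis (K : ℕ) : ∃ T : ℕ, ∀ {E : ℕ} {e : ℤ → ℕ} {c U : ℤ → H}, Line a F E e c U →
    C + 2 * δ + D < E → T ≤ E → ∀ (q k r i j : ℤ) (h : H) (i' j' : ℤ), q < k → k < r →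
    (q + 1 < k ∨ i + T ≤ e q) → m.d (U q • a ^ i • o) (h • a ^ i' • o) ≤ K →
    m.d (U r • a ^ j • o) (h • a ^ j' • o) ≤ K → False := by
  obtain ⟨T, hT⟩ := X.three (2 * C + 4 * δ + 4 * D + 6 * K + 3 * δ + 5 * D)
  refine ⟨T, fun {E e c U} hU hE hTE q k r i j h i' j' hqk hkr hi h1 h2 => ?_⟩
  obtain ⟨b1, b2, b3⟩ := X.tri_btw hU hE hTE j hqk hkr hi
  have near : ∀ z, m.Btw (2 * C + 4 * δ + 4 * D) (U q • a ^ i • o) z (U r • a ^ j • o) →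
      ∃ s : ℤ, m.d z (h • a ^ s • o) ≤ 2 * C + 4 * δ + 4 * D + 6 * K + 3 * δ + 5 * D := by
    intro z hz
    obtain ⟨s, -, hs⟩ := X.axis_near (hz.move _ _ z h1 h2 (by simp [m.d_self]))
    exact ⟨s, hs⟩
  obtain ⟨s1, h1⟩ := near _ b1
  obtain ⟨s2, h2⟩ := near _ b2
  obtain ⟨s3, h3⟩ := near _ b3
  have tr : ∀ (z : V) (s : ℤ), m.d (U k • z) (h • a ^ s • o) =
      m.d z (((U k)⁻¹ * h) • a ^ s • o) := fun z s => by
    rw [← X.lox.inv (U k) z, ← mul_smul (U k), mul_inv_cancel_left]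
  rw [tr] at h1 h2 h3
  exact hT _ (hU.mem (k - 1)) _ _ _ _ h1 h2 h3

end Crn
end Corner

/-! ### Overlaps of broken lines -/

section Match
open GMet

variable {V : Type} {H : Type} [Group H] [MulAction H V]
variable {m : GMet V} {δ : ℕ} {o : V} {a : H}

/-- Elements of the elementary closure have a power in `⟨a⟩`. -/
theorem Lox.elem_root (X : Lox m δ o a) {h : H} (hh : h ∈ elem a) :
    ∃ k l : ℤ, k ≠ 0 ∧ h ^ k = a ^ l := by
  have ex : ∀ n : ℕ, ∃ s : ℤ, m.d o ((a ^ (-s) * h ^ n) • o) ≤ 5 * δ + 7 * m.d o (a • o) := by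
    intro n
    obtain ⟨s, hs⟩ := X.elem_near (pow_mem hh n)
    refine ⟨s, ?_⟩
    rwa [← X.inv (a ^ s), ← mul_smul, ← mul_assoc, ← zpow_add, add_neg_cancel, zpow_zero,
      one_mul, m.symm]
  choose s hs using ex
  have fin := X.proper (5 * δ + 7 * m.d o (a • o))
  have := fin.to_subtype
  obtain ⟨n, n', hne, heq⟩ := Finite.exists_ne_map_eq_of_infinite
    (fun n : ℕ => (⟨a ^ (-s n) * h ^ n, hs n⟩ : {h : H | m.d o (h • o) ≤ _}))
  have e1 : a ^ (-s n) * h ^ n = a ^ (-s n') * h ^ n' := congrArg Subtype.val heq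
  refine ⟨(n : ℤ) - n', s n - s n', sub_ne_zero.2 (by exact_mod_cast hne), ?_⟩
  have e2 : h ^ n = a ^ s n * (a ^ (-s n') * h ^ n') := by rw [← e1]; group
  rw [zpow_sub, zpow_natCast, zpow_natCast, e2]; group

namespace LoxC
variable (X : LoxC m δ o a)
include X

/-- An element moving two far away points of the axis a little commutes with `a`. -/
theorem comm_near (K : ℕ) : ∃ T : ℕ, ∀ (h : H) (n : ℕ), T ≤ n → m.d o (h • o) ≤ K →
    m.d (a ^ (n : ℤ) • o) (h • a ^ (n : ℤ) • o) ≤ K → h * a = a * h := by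
  obtain ⟨T, hT⟩ := X.toLox.overlap K
  refine ⟨T + K + 1, fun h n hn h1 h2 => ?_⟩
  have hh : h ∈ elem a := hT h 0 n 0 n (by omega) (by simpa using h1) h2
  rcases X.com h hh with c | c
  · rwa [mul_inv_eq_iff_eq_mul] at c
  · exfalso
    have e1 : h * a ^ (n : ℤ) = a ^ (-n : ℤ) * h := by
      rw [zpow_neg, ← inv_zpow, ← c, conj_zpow]; group
    rw [← mul_smul, e1, mul_smul] at h2
    have t := m.tri (a ^ (n : ℤ) • o) (a ^ (-n : ℤ) • h • o) (a ^ (-n : ℤ) • o)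
    rw [X.inv, m.symm (h • o) o, X.toLox.dz] at t
    have := X.toLox.grow (-n - n)
    omega

/-- Two commuting-with-`a` elements conjugate by an element outside the elementary closure are
torsion. -/
theorem tors_of_conj {h h' c : H} (e : h * a = a * h) (e' : h' * a = a * h') (hc : c ∉ elem a)
    (hcc : c * h' = h * c) : IsOfFinOrder h ∧ IsOfFinOrder h' := by
  have conj : c * h' * c⁻¹ = h := by rw [hcc, mul_inv_cancel_right]
  have iff : IsOfFinOrder h → IsOfFinOrder h' := by
    intro hf
    rw [isOfFinOrder_iff_pow_eq_one] at hf ⊢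
    obtain ⟨n, hn, h1⟩ := hf
    refine ⟨n, hn, ?_⟩
    rw [← conj, conj_pow] at h1
    exact conj_eq_one_iff.1 h1
  by_contra hcon
  have inf : ¬ IsOfFinOrder h := fun hf => hcon ⟨hf, iff hf⟩
  have me : ∀ {x : H}, x * a = a * x → x ∈ elem a := fun {x} hx =>
    ⟨1, 1, one_ne_zero, one_ne_zero, by simpa using hx⟩
  obtain ⟨k, l, hk, h1⟩ := X.toLox.elem_root (me e)
  obtain ⟨k', l', hk', h2⟩ := X.toLox.elem_root (me e')
  have ord : ∀ n : ℤ, n ≠ 0 → h ^ n ≠ 1 := fun n hn h0 =>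
    inf (isOfFinOrder_iff_zpow_eq_one.2 ⟨n, hn, h0⟩)
  have hl : l ≠ 0 := by
    rintro rfl
    exact ord k hk (by rw [h1, zpow_zero])
  have hl' : l' ≠ 0 := by
    rintro rfl
    refine ord k' hk' ?_
    rw [← conj, conj_zpow, h2]; simp
  refine hc ⟨l' * k, l * k', mul_ne_zero hl' hk, mul_ne_zero hl hk', ?_⟩
  have e3 : c * h' ^ (k' * k) * c⁻¹ = h ^ (k' * k) := by rw [← conj_zpow, conj]
  rw [zpow_mul h', h2, ← zpow_mul, mul_comm k' k, zpow_mul h, h1, ← zpow_mul] at e3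
  rw [← e3, inv_mul_cancel_right]

end LoxC

variable {F : Set H} {D C : ℕ}

namespace Crn
variable (X : Crn m δ o a F D C)
include X

/-- A corner of a broken line in the interior of an overlap with another broken line is near a
corner of the latter. -/
theorem corner_corner (K : ℕ) : ∃ T T1 : ℕ, ∀ {E : ℕ} {e e' : ℤ → ℕ} {c c' U U' : ℤ → H},
    Line a F E e c U → Line a F E e' c' U' → C + 2 * δ + D < E → T ≤ E →
    ∀ (q k r i j q' r' i' j' : ℤ), q + 1 < k → k < r → 0 ≤ i' → i' ≤ e' q' → 0 ≤ j' → j' ≤ e' r' →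
    m.d (U q • a ^ i • o) (U' q' • a ^ i' • o) ≤ K →
    m.d (U r • a ^ j • o) (U' r' • a ^ j' • o) ≤ K → ∃ k', m.d (U k • o) (U' k' • o) ≤ T1 := by
  set K' := 2 * C + 4 * δ + 4 * D + 6 * K + δ + (2 * C + 9 * δ + 7 * D) with hK'
  obtain ⟨T, hT⟩ := X.three K'
  refine ⟨T, 3 * K' + T * D + D + C + 2 * δ, fun {E e e' c c' U U'} hU hU' hE hTE q k r i j q' r'
    i' j' hqk hkr hi hi' hj hj' h1 h2 => ?_⟩
  obtain ⟨b1, b2, b3⟩ := X.tri_btw hU hE hTE (q := q) (i := i) j (by omega) hkr (Or.inl hqk)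
  have near : ∀ z, m.Btw (2 * C + 4 * δ + 4 * D) (U q • a ^ i • o) z (U r • a ^ j • o) →
      ∃ r s : ℤ, 0 ≤ s ∧ s ≤ e' r ∧ m.d z (U' r • a ^ s • o) ≤ K' := by
    intro z hz
    obtain ⟨z', hz1, hz2⟩ := X.lox.hyp.btw_near (hz.move _ _ z h1 h2 (by simp [m.d_self]))
    have t := fun y => m.tri z z' y
    rcases le_total q' r' with hl | hl
    · obtain ⟨k, s, -, -, h3, h4, h5⟩ := X.line_near hU' hE hl hi hi' hj hj' hz1
      have := t (U' k • a ^ s • o)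
      exact ⟨k, s, h3, h4, by omega⟩
    · obtain ⟨k, s, -, -, h3, h4, h5⟩ := X.line_near hU' hE hl hj hj' hi hi' hz1.symm
      have := t (U' k • a ^ s • o)
      exact ⟨k, s, h3, h4, by omega⟩
  obtain ⟨r1, s1, -, -, n1⟩ := near _ b1
  obtain ⟨r2, s2, -, -, n2⟩ := near _ b2
  obtain ⟨r3, s3, -, -, n3⟩ := near _ b3
  -- two points on different segments are separated by a corner
  have sepc : ∀ (z : V) (r2 s2 : ℤ), m.d (U k • o) z ≤ T * D + D →
      m.d z (U' r2 • a ^ s2 • o) ≤ K' → r1 ≠ r2 →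
      ∃ k', m.d (U k • o) (U' k' • o) ≤ 3 * K' + T * D + D + C + 2 * δ := by
    intro z r2 s2 hz n2 hne
    have t1 := m.tri (U' r1 • a ^ s1 • o) (U k • o) (U' r2 • a ^ s2 • o)
    have t2 := m.tri (U k • o) z (U' r2 • a ^ s2 • o)
    have t3 := m.symm (U' r1 • a ^ s1 • o) (U k • o)
    rcases lt_or_gt_of_ne hne with h | h
    · have b := X.corner_btw hU' hE h le_rfl s1 s2
      have t4 := m.tri (U k • o) (U' r1 • a ^ s1 • o) (U' r2 • o)
      refine ⟨r2, ?_⟩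
      unfold GMet.Btw at b
      omega
    · have b := X.corner_btw hU' hE h le_rfl s2 s1
      have t4 := m.tri (U k • o) (U' r1 • a ^ s1 • o) (U' r1 • o)
      have t5 := m.symm (U' r1 • o) (U' r1 • a ^ s1 • o)
      have t6 := m.symm (U' r2 • a ^ s2 • o) (U' r1 • a ^ s1 • o)
      refine ⟨r1, ?_⟩
      unfold GMet.Btw at b
      omega
  have up : ∀ s : ℤ, s.natAbs = T → m.d o (a ^ s • o) ≤ T * D := by
    intro s hs
    refine (X.lox.toLox.up s).trans ?_
    rw [hs]
    exact Nat.mul_le_mul_left _ X.la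
  by_cases h12 : r1 = r2
  swap
  · refine sepc _ r2 s2 ?_ n2 h12
    have t := m.tri o ((c (k - 1))⁻¹ • o) ((c (k - 1))⁻¹ • a ^ (-(T : ℤ)) • o)
    have t2 := X.bd _ (hU.mem (k - 1))
    have t3 := X.lox.inv (c (k - 1)) o ((c (k - 1))⁻¹ • o)
    rw [smul_inv_smul, m.symm] at t3
    rw [X.lox.inv (c (k - 1))⁻¹] at t
    rw [X.lox.inv]
    have := up (-T) (by omega)
    omega
  by_cases h13 : r1 = r3
  swap
  · refine sepc _ r3 s3 ?_ n3 h13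
    rw [X.lox.inv]
    have := up T (by omega)
    omega
  subst h12 h13
  exfalso
  have tr : ∀ (z : V) (s : ℤ), m.d (U k • z) (U' r1 • a ^ s • o) =
      m.d z (((U k)⁻¹ * U' r1) • a ^ s • o) := fun z s => by
    rw [← X.lox.inv (U k) z, ← mul_smul (U k), mul_inv_cancel_left]
  rw [tr] at n1 n2 n3
  exact hT _ (hU.mem (k - 1)) _ _ _ _ n1 n2 n3

/-- Matching corners: consecutive corners match consecutive corners. -/
theorem consec (T1 : ℕ) : ∃ T : ℕ, ∀ {E : ℕ} {e e' : ℤ → ℕ} {c c' U U' : ℤ → H},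
    Line a F E e c U → Line a F E e' c' U' → C + 2 * δ + D < E → T ≤ E →
    ∀ (q r r' : ℤ), m.d (U q • o) (U' r • o) ≤ T1 → m.d (U (q + 1) • o) (U' r' • o) ≤ T1 →
    r' = r + 1 ∨ r' = r - 1 := by
  obtain ⟨T, hT⟩ := X.no_axis (T1 + D)
  refine ⟨T + 2 * T1 + D + 1, fun {E e e' c c' U U'} hU hU' hE hTE q r r' h1 h2 => ?_⟩
  have n := X.next_near hU q
  have t := m.tri (U' r' • o) (U (q + 1) • o) (U q • a ^ (e q : ℤ) • o)
  have t2 := m.symm (U' r' • o) (U (q + 1) • o)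
  have t3 := m.symm (U' r • o) (U q • o)
  by_contra hcon
  rcases lt_trichotomy r r' with h | h | h
  · refine hT hU' hE (by omega) r (r + 1) r' 0 0 (U q) 0 (e q) (by omega) (by omega)
      (Or.inr (by have := hU'.big r; omega)) ?_ ?_
    · simp only [zpow_zero, one_smul]; omega
    · simp only [zpow_zero, one_smul]; omega
  · subst h
    have l := X.len hU q
    have := hU.big q
    have t4 := m.tri (U q • o) (U' r • o) (U (q + 1) • o)
    omega
  · refine hT hU' hE (by omega) r' (r' + 1) r 0 0 (U q) (e q) 0 (by omega) (by omega)
      (Or.inr (by have := hU'.big r'; omega)) ?_ ?_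
    · simp only [zpow_zero, one_smul]; omega
    · simp only [zpow_zero, one_smul]; omega

/-- The exponent of a segment is determined by the distance between its corners. -/
theorem exps {E : ℕ} {e e' : ℤ → ℕ} {c c' U U' : ℤ → H} (hU : Line a F E e c U)
    (hU' : Line a F E e' c' U') {T1 : ℕ} (q r : ℤ)
    (h : m.d (U q • o) (U (q + 1) • o) ≤ m.d (U' r • o) (U' (r + 1) • o) + 2 * T1) :
    e q ≤ e' r + 2 * T1 + 4 * D := by
  by_contra hcon
  have n := X.next_near hU q
  have n' := X.next_near hU' r
  have t := m.tri (U q • o) (U (q + 1) • o) (U q • a ^ (e q : ℤ) • o)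
  have t' := m.tri (U' r • o) (U' r • a ^ (e' r : ℤ) • o) (U' (r + 1) • o)
  have t2 := m.symm (U' (r + 1) • o) (U' r • a ^ (e' r : ℤ) • o)
  rw [X.lox.inv] at t t'
  have := X.lox.toLox.sep (i := e' r) (j := e q) (by omega) (by omega)
  have := X.la
  omega

/-- Matched segments of equal length run along the same axis, up to an element commuting
with `a`. -/
theorem seg_comm (T1 : ℕ) : ∃ T : ℕ, ∀ {E : ℕ} {e e' : ℤ → ℕ} {c c' U U' : ℤ → H},
    Line a F E e c U → Line a F E e' c' U' → T ≤ E → ∀ q r : ℤ, e q = e' r →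
    m.d (U q • o) (U' r • o) ≤ T1 → m.d (U (q + 1) • o) (U' (r + 1) • o) ≤ T1 →
    ((U q)⁻¹ * U' r) * a = a * ((U q)⁻¹ * U' r) := by
  obtain ⟨T, hT⟩ := X.lox.comm_near (T1 + 2 * D)
  refine ⟨T, fun {E e e' c c' U U'} hU hU' hTE q r he h1 h2 => ?_⟩
  have tr : ∀ z z' : V, m.d z (((U q)⁻¹ * U' r) • z') = m.d (U q • z) (U' r • z') := fun z z' => by
    rw [← X.lox.inv (U q) z, ← mul_smul (U q), mul_inv_cancel_left]
  refine hT _ (e q) (hTE.trans (hU.big q)) (by rw [tr]; omega) ?_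
  rw [tr]
  have n := X.next_near hU q
  have n' := X.next_near hU' r
  rw [← he] at n'
  have t1 := m.tri (U q • a ^ (e q : ℤ) • o) (U (q + 1) • o) (U' r • a ^ (e q : ℤ) • o)
  have t2 := m.tri (U (q + 1) • o) (U' (r + 1) • o) (U' r • a ^ (e q : ℤ) • o)
  have t3 := m.symm (U q • a ^ (e q : ℤ) • o) (U (q + 1) • o)
  omega

end Crn
end Match

/-! ### Relator lines -/

section Relator
open GMet
open scoped Pointwise

variable {V : Type} {H : Type} [Group H] [MulAction H V]
variable {m : GMet V} {δ : ℕ} {o : V} {a g : H}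

/-- The exponents of the relator number `i`: all exponents of all relators are distinct. -/
def rexp (s M i : ℕ) (q : ℤ) : ℕ := M * (s * (i + 1) + (q % s).toNat)

/-- The corner elements of a relator with `s` syllables ending in `t`. -/
def rcor (g t : H) (s : ℕ) (q : ℤ) : H := if q % s = s - 1 then t else g

/-- Prefixes of the relator number `i`. -/
def rpre (a g t : H) (s M i : ℕ) : ℕ → H
  | 0 => 1
  | k + 1 => rpre a g t s M i k * a ^ (rexp s M i k : ℤ) * rcor g t s k

/-- The relator number `i`. -/
def rel (a g t : H) (s M i : ℕ) : H := rpre a g t s M i s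

/-- The corners of the axis of the relator number `i`. -/
def rlin (a g t : H) (s M i : ℕ) (q : ℤ) : H :=
  rel a g t s M i ^ (q / s) * rpre a g t s M i (q % s).toNat

theorem rlin_add (t : H) {s : ℕ} (hs : 0 < s) (M i : ℕ) (q k : ℤ) :
    rlin a g t s M i (q + s * k) = rel a g t s M i ^ k * rlin a g t s M i q := by
  unfold rlin
  rw [Int.add_mul_emod_self_left, Int.add_mul_ediv_left _ _ (by omega), ← mul_assoc, ← zpow_add,
    add_comm k]

theorem rlin_zero (t : H) (s M i : ℕ) : rlin a g t s M i 0 = 1 := by simp [rlin, rpre]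

theorem rlin_step (t : H) {s : ℕ} (hs : 0 < s) (M i : ℕ) (q : ℤ) :
    rlin a g t s M i (q + 1) = rlin a g t s M i q * a ^ (rexp s M i q : ℤ) * rcor g t s q := by
  have h1 := Int.emod_nonneg q (show (s : ℤ) ≠ 0 by omega)
  have h2 := Int.emod_lt_of_pos q (show (0 : ℤ) < s by omega)
  obtain ⟨r, hr⟩ := Int.eq_ofNat_of_zero_le h1
  have e : q + 1 = (r + 1 : ℕ) + s * (q / s) := by
    have := Int.emod_add_mul_ediv q s
    push_cast; omega
  have e1 : rexp s M i q = rexp s M i r := by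
    unfold rexp; rw [hr, Int.emod_eq_of_lt (by omega) (by omega)]
  have e2 : rcor g t s q = rcor g t s r := by
    unfold rcor; rw [hr, Int.emod_eq_of_lt (by omega) (by omega)]
  have e3 : rlin a g t s M i q * a ^ (rexp s M i q : ℤ) * rcor g t s q =
      rel a g t s M i ^ (q / s) * rpre a g t s M i (r + 1) := by
    rw [e1, e2]
    simp only [rlin, rpre, hr, Int.toNat_natCast, mul_assoc]
  rw [e3, e, rlin_add t hs]
  congr 1
  unfold rlin
  rcases lt_or_eq_of_le (show r + 1 ≤ s by omega) with h | h
  · rw [Int.emod_eq_of_lt (by omega) (by omega), Int.ediv_eq_zero_of_lt (by omega) (by omega)]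
    simp
  · rw [h, Int.emod_self, Int.ediv_self (by omega)]
    simp [rel, rpre]

theorem rexp_big {s : ℕ} (M i : ℕ) (q : ℤ) : M * s ≤ rexp s M i q :=
  Nat.mul_le_mul_left _ (by nlinarith [Nat.zero_le (s * i)])

theorem rexp_le {s : ℕ} (hs : 0 < s) (M : ℕ) {i n : ℕ} (hi : i < n) (q : ℤ) :
    rexp s M i q ≤ M * (s * (n + 1)) := by
  have h2 := Int.emod_lt_of_pos q (show (0 : ℤ) < s by omega)
  refine Nat.mul_le_mul_left _ ?_
  have : s * (i + 1) ≤ s * n := Nat.mul_le_mul_left _ hi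
  rw [mul_add] at this ⊢
  rw [mul_add s n]
  omega

theorem rexp_inj {s M i i' x : ℕ} {q q' : ℤ} (hs : 0 < s) (hx : x < M)
    (h1 : rexp s M i q ≤ rexp s M i' q' + x) (h2 : rexp s M i' q' ≤ rexp s M i q + x) :
    i = i' ∧ q % s = q' % s := by
  unfold rexp at h1 h2
  have a1 := Int.emod_nonneg q (show (s : ℤ) ≠ 0 by omega)
  have a2 := Int.emod_lt_of_pos q (show (0 : ℤ) < s by omega)
  have b1 := Int.emod_nonneg q' (show (s : ℤ) ≠ 0 by omega)
  have b2 := Int.emod_lt_of_pos q' (show (0 : ℤ) < s by omega)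
  generalize hu : (q % s).toNat = u at h1 h2
  generalize hv : (q' % s).toNat = v at h1 h2
  have key : ∀ {y z : ℕ}, M * y ≤ M * z + x → y ≤ z := by
    intro y z h
    by_contra hc
    have : M * (z + 1) ≤ M * y := Nat.mul_le_mul_left _ (by omega)
    rw [mul_add] at this
    omega
  have e : s * (i + 1) + u = s * (i' + 1) + v := le_antisymm (key h1) (key h2)
  have hi : i = i' := by
    rcases lt_trichotomy i i' with h | h | h
    · have : s * (i + 1 + 1) ≤ s * (i' + 1) := Nat.mul_le_mul_left _ (by omega)
      rw [mul_add s (i + 1)] at this; omega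
    · exact h
    · have : s * (i' + 1 + 1) ≤ s * (i + 1) := Nat.mul_le_mul_left _ (by omega)
      rw [mul_add s (i' + 1)] at this; omega
  subst hi
  exact ⟨rfl, by omega⟩

variable {n : ℕ} {t : Fin n → H} {D C : ℕ}

theorem rline (t : Fin n → H) {s : ℕ} (hs : 0 < s) (M : ℕ) (i : Fin n) :
    Line a (insert g (range t)) (M * s) (rexp s M i) (rcor g (t i) s) (rlin a g (t i) s M i) :=
  ⟨rlin_step _ hs M i, fun q => by
    unfold rcor
    split_ifs
    · exact Or.inr ⟨i, rfl⟩
    · exact Or.inl rfl, rexp_big M i⟩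

namespace Crn
variable (X : Crn m δ o a (insert g (range t)) D C)
include X

/-- The small cancellation property: two relator lines with a long overlap coincide. -/
theorem relmatch (hg : ∀ e e' : H, e * a = a * e → e' * a = a * e' → IsOfFinOrder e →
      IsOfFinOrder e' → g * e' = e * g → e = 1) (K : ℕ) :
    ∃ T : ℕ, ∀ s M : ℕ, 3 ≤ s → T ≤ M → ∀ (i i' : Fin n) (h h' : H) (q r k j q' r' k' j' : ℤ),
      q + 6 ≤ r → 0 ≤ k' → k' ≤ rexp s M i' q' → 0 ≤ j' → j' ≤ rexp s M i' r' →
      m.d (h • rlin a g (t i) s M i q • a ^ k • o)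
        (h' • rlin a g (t i') s M i' q' • a ^ k' • o) ≤ K →
      m.d (h • rlin a g (t i) s M i r • a ^ j • o)
        (h' • rlin a g (t i') s M i' r' • a ^ j' • o) ≤ K →
      i = i' ∧ ∃ l : ℤ, h' = h * rel a g (t i) s M i ^ l := by
  obtain ⟨T1, T2, hcc⟩ := X.corner_corner K
  obtain ⟨T3, hco⟩ := X.consec T2
  obtain ⟨T4, hse⟩ := X.seg_comm T2
  refine ⟨T1 + T3 + T4 + 2 * T2 + 4 * D + 2 * C + 4 * δ + 1, fun s M hs hM i i' h h' q r k j q' r'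
    k' j' hqr hk0 hk hj0 hj hd1 hd2 => ?_⟩
  have hs0 : 0 < s := by omega
  have hMs : M ≤ M * s := Nat.le_mul_of_pos_right _ hs0
  have hU := (rline (a := a) (g := g) t hs0 M i).smul h
  have hU' := (rline (a := a) (g := g) t hs0 M i').smul h'
  set U : ℤ → H := fun q => h * rlin a g (t i) s M i q with hUd
  set U' : ℤ → H := fun q => h' * rlin a g (t i') s M i' q with hUd'
  have hE : C + 2 * δ + D < M * s := by omega
  have cor : ∀ k, q + 1 < k → k < r → ∃ k', m.d (U k • o) (U' k' • o) ≤ T2 := fun x hx hx' =>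
    hcc hU hU' hE (by omega) q x r k j q' r' k' j' hx hx' hk0 hk hj0 hj
      (by simpa only [hUd, hUd', mul_smul] using hd1) (by simpa only [hUd, hUd', mul_smul] using hd2)
  obtain ⟨r0, h0⟩ := cor (q + 2) (by omega) (by omega)
  obtain ⟨r1, h1⟩ := cor (q + 2 + 1) (by omega) (by omega)
  obtain ⟨r2, h2⟩ := cor (q + 2 + 1 + 1) (by omega) (by omega)
  obtain ⟨r3, h3⟩ := cor (q + 2 + 1 + 1 + 1) (by omega) (by omega)
  have c1 := hco hU hU' hE (by omega) _ _ _ h0 h1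
  have c2 := hco hU hU' hE (by omega) _ _ _ h1 h2
  have c3 := hco hU hU' hE (by omega) _ _ _ h2 h3
  have noback : ∀ q r0 : ℤ, m.d (U q • o) (U' r0 • o) ≤ T2 →
      m.d (U (q + 1 + 1) • o) (U' r0 • o) ≤ T2 → False := by
    intro q r0 x1 x2
    have b := X.corner_btw hU hE (q := q) (k := q + 1) (r := q + 1 + 1) (by omega) (by omega) 0 0
    have l := X.len hU q
    have l' := hU.big q
    have tt := m.tri (U q • o) (U' r0 • o) (U (q + 1 + 1) • o)
    have t2 := m.symm (U (q + 1 + 1) • o) (U' r0 • o)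
    simp only [zpow_zero, one_smul] at b
    unfold GMet.Btw at b
    omega
  have n1 : r2 ≠ r0 := fun e => noback _ _ h0 (e ▸ h2)
  have n2 : r3 ≠ r1 := fun e => noback _ _ h1 (e ▸ h3)
  -- exponents of matched segments
  have ex : ∀ q r, m.d (U q • o) (U (q + 1) • o) ≤ m.d (U' r • o) (U' (r + 1) • o) + 2 * T2 →
      m.d (U' r • o) (U' (r + 1) • o) ≤ m.d (U q • o) (U (q + 1) • o) + 2 * T2 →
      i = i' ∧ q % s = r % s := by
    intro q r x1 x2
    have := X.exps hU hU' q r x1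
    have := X.exps hU' hU r q x2
    obtain ⟨e1, e2⟩ := rexp_inj (x := 2 * T2 + 4 * D) (M := M) hs0 (by omega) (i := i) (i' := i')
      (q := q) (q' := r) (by omega) (by omega)
    exact ⟨Fin.ext e1, e2⟩
  have quad : ∀ x y x' y' : V, m.d x x' ≤ T2 → m.d y y' ≤ T2 → m.d x y ≤ m.d x' y' + 2 * T2 ∧
      m.d x' y' ≤ m.d x y + 2 * T2 := by
    intro x y x' y' e1 e2
    have := m.tri x x' y
    have := m.tri x' y' y
    have := m.tri x' x y'
    have := m.tri x y y'
    have := m.symm y y'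
    have := m.symm x x'
    omega
  rcases c1 with rfl | rfl
  swap
  · obtain rfl : r2 = r0 - 1 - 1 := by omega
    exfalso
    have q1 := quad _ _ _ _ h0 h1
    have q2 := quad _ _ _ _ h1 h2
    have e1 := ex (q + 2) (r0 - 1) (by
      rw [sub_add_cancel, m.symm (U' (r0 - 1) • o)]; exact q1.1) (by
      rw [sub_add_cancel, m.symm (U' (r0 - 1) • o)]; exact q1.2)
    have e2 := ex (q + 2 + 1) (r0 - 1 - 1) (by
      rw [sub_add_cancel, m.symm (U' (r0 - 1 - 1) • o)]; exact q2.1) (by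
      rw [sub_add_cancel, m.symm (U' (r0 - 1 - 1) • o)]; exact q2.2)
    have d1 := Int.ModEq.dvd e1.2
    have d2 := Int.ModEq.dvd e2.2
    have d3 := dvd_sub d1 d2
    have := Int.le_of_dvd (by omega) d3
    omega
  obtain rfl : r2 = r0 + 1 + 1 := by omega
  obtain rfl : r3 = r0 + 1 + 1 + 1 := by omega
  have fin : ∀ q r : ℤ, q % s ≠ s - 1 → m.d (U q • o) (U' r • o) ≤ T2 →
      m.d (U (q + 1) • o) (U' (r + 1) • o) ≤ T2 →
      m.d (U (q + 1 + 1) • o) (U' (r + 1 + 1) • o) ≤ T2 →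
      i = i' ∧ ∃ l : ℤ, h' = h * rel a g (t i) s M i ^ l := by
    intro q r hq h0 h1 h2
    have q1 := quad _ _ _ _ h0 h1
    have q2 := quad _ _ _ _ h1 h2
    obtain ⟨rfl, e1⟩ := ex q r q1.1 q1.2
    obtain ⟨-, e2⟩ := ex (q + 1) (r + 1) q2.1 q2.2
    refine ⟨rfl, ?_⟩
    have f1 : rexp s M i q = rexp s M i r := by unfold rexp; rw [e1]
    have f2 : rexp s M i (q + 1) = rexp s M i (r + 1) := by unfold rexp; rw [e2]
    have k1 := hse hU hU' (by omega) q r f1 h0 h1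
    have k2 := hse hU hU' (by omega) (q + 1) (r + 1) f2 h1 h2
    have cq : rcor g (t i) s q = g := if_neg hq
    have cr : rcor g (t i) s r = g := if_neg (by rwa [← e1])
    have key : g * ((U (q + 1))⁻¹ * U' (r + 1)) = ((U q)⁻¹ * U' r) * g := by
      rw [hU.step, hU'.step, cq, cr, ← f1]
      have : ((U q)⁻¹ * U' r) * a ^ (rexp s M i q : ℤ) = a ^ (rexp s M i q : ℤ) * ((U q)⁻¹ * U' r) :=
        (Commute.zpow_right (show Commute ((U q)⁻¹ * U' r) a from k1) _)
      calc g * ((U q * a ^ (rexp s M i q : ℤ) * g)⁻¹ * (U' r * a ^ (rexp s M i q : ℤ) * g))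
          = (a ^ (rexp s M i q : ℤ))⁻¹ * (((U q)⁻¹ * U' r) * a ^ (rexp s M i q : ℤ)) * g := by group
        _ = ((U q)⁻¹ * U' r) * g := by rw [this]; group
    obtain ⟨o1, o2⟩ := X.lox.tors_of_conj k1 k2 (X.disj g (Or.inl rfl)) key
    have one := hg _ _ k1 k2 o1 o2 key
    have eU : U q = U' r := by rwa [inv_mul_eq_one] at one
    simp only [hUd, hUd', rlin, e1] at eU
    refine ⟨q / s - r / s, ?_⟩
    rw [← mul_assoc, ← mul_assoc] at eU
    have eU := mul_right_cancel eU
    rw [zpow_sub, ← mul_assoc, eU, mul_inv_cancel_right]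
  by_cases hq : (q + 2) % s = s - 1
  · refine fin _ _ ?_ h1 h2 h3
    intro hq'
    have d1 := Int.ModEq.dvd (hq.trans hq'.symm)
    have := Int.le_of_dvd (by omega) d1
    omega
  · exact fin _ _ hq h0 h1 h2

/-- Points far apart in the order of a broken line are far apart. -/
theorem line_long {E : ℕ} {e : ℤ → ℕ} {c U : ℤ → H} (hU : Line a (insert g (range t)) E e c U)
    (hE : 2 * C + 4 * δ + D < E) (q i : ℤ) : ∀ (k : ℕ) (j : ℤ),
    k * (E - (2 * C + 4 * δ + D)) ≤ m.d (U q • a ^ i • o) (U (q + k + 1) • a ^ j • o) := by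
  intro k
  induction k with
  | zero => intro j; simp
  | succ k ih =>
    intro j
    have b1 := X.corner_btw hU (by omega) (q := q) (k := q + k + 1) (r := q + (k + 1 : ℕ) + 1)
      (by omega) (by push_cast; omega) i j
    have b2 := X.corner_btw hU (by omega) (q := q + k + 1) (k := q + (k + 1 : ℕ) + 1)
      (r := q + (k + 1 : ℕ) + 1) (by push_cast; omega) le_rfl 0 j
    have l := X.len hU (q + k + 1)
    have l2 := hU.big (q + k + 1)
    have := ih 0
    simp only [zpow_zero, one_smul] at b1 b2 this
    rw [show q + k + 1 + 1 = q + (k + 1 : ℕ) + 1 by push_cast; ring] at l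
    unfold GMet.Btw at b1 b2
    rw [add_mul]
    omega

/-- Points close in the order of a broken line are close. -/
theorem line_short {E B : ℕ} {e : ℤ → ℕ} {c U : ℤ → H} (hU : Line a (insert g (range t)) E e c U)
    (hB : ∀ q, e q ≤ B) {q r i j : ℤ} {k : ℕ} (h1 : q ≤ r) (h2 : r ≤ q + k) (hi : 0 ≤ i)
    (hi' : i ≤ e q) (hj : 0 ≤ j) (hj' : j ≤ e r) :
    m.d (U q • a ^ i • o) (U r • a ^ j • o) ≤ (k + 2) * ((B + 1) * D) := by
  have up : ∀ q i : ℤ, 0 ≤ i → i ≤ e q → m.d (U q • o) (U q • a ^ i • o) ≤ B * D := by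
    intro q i hi hi'
    rw [X.lox.inv]
    have := hB q
    exact (X.lox.toLox.up i).trans (Nat.mul_le_mul (by omega) X.la)
  have cor : ∀ l : ℕ, m.d (U q • o) (U (q + l) • o) ≤ l * ((B + 1) * D) := by
    intro l
    induction l with
    | zero => simp [m.d_self]
    | succ l ih =>
      have t1 := m.tri (U q • o) (U (q + l) • o) (U (q + (l + 1 : ℕ)) • o)
      have t2 := m.tri (U (q + l) • o) (U (q + l) • a ^ (e (q + l) : ℤ) • o) (U (q + l + 1) • o)
      have t3 := up (q + l) (e (q + l)) (by omega) le_rfl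
      have t4 := X.next_near hU (q + l)
      rw [m.symm] at t4
      rw [show q + (l + 1 : ℕ) = q + l + 1 by push_cast; ring] at t1 ⊢
      rw [add_mul, one_mul]
      have : (B + 1) * D = B * D + D := by ring
      omega
  obtain ⟨l, rfl⟩ : ∃ l : ℕ, r = q + l := ⟨(r - q).toNat, by omega⟩
  have t1 := m.tri (U q • a ^ i • o) (U q • o) (U (q + l) • a ^ j • o)
  have t2 := m.tri (U q • o) (U (q + l) • o) (U (q + l) • a ^ j • o)
  have t3 := up q i hi hi'
  have t4 := up _ j hj hj'
  rw [m.symm] at t3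
  have t5 := cor l
  have t6 : l * ((B + 1) * D) ≤ k * ((B + 1) * D) := Nat.mul_le_mul_right _ (by omega)
  have : (B + 1) * D = B * D + D := by ring
  rw [add_mul k 2]
  omega

end Crn
end Relator

/-! ### The rotating family of the relators -/

section RelFam
open GMet
open scoped Pointwise

variable {V : Type} {H : Type} [Group H] [MulAction H V]
variable {m : GMet V} {δ : ℕ} {o : V} {a g : H} {n : ℕ} {t : Fin n → H} {D C : ℕ}

/-- The axis of the relator number `i`. -/
def rset (o : V) (a g t : H) (s M i : ℕ) : Set V :=
  {z | ∃ q k : ℤ, 0 ≤ k ∧ k ≤ rexp s M i q ∧ rlin a g t s M i q • a ^ k • o = z}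

/-- All translates of the axes of the relators. -/
def rfam (o : V) (a g : H) (t : Fin n → H) (s M : ℕ) : Set (Set V) :=
  {Y | ∃ (h : H) (i : Fin n), h • rset o a g (t i) s M i = Y}

theorem rset_zpow (t : H) {s : ℕ} (hs : 0 < s) (M i : ℕ) (l : ℤ) :
    rel a g t s M i ^ l • rset o a g t s M i = rset o a g t s M i := by
  have sub : ∀ l : ℤ, rel a g t s M i ^ l • rset o a g t s M i ⊆ rset o a g t s M i := by
    rintro l _ ⟨_, ⟨q, k, h1, h2, rfl⟩, rfl⟩
    refine ⟨q + s * l, k, h1, ?_, ?_⟩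
    · unfold rexp at h2 ⊢
      rwa [Int.add_mul_emod_self_left]
    · rw [rlin_add t hs, mul_smul]
  refine (sub l).antisymm fun x hx => ?_
  rw [Set.mem_smul_set_iff_inv_smul_mem, ← zpow_neg]
  exact sub (-l) (Set.smul_mem_smul_set hx)

/-- The axis of a relator is covered by the translates of a finite set. -/
theorem rset_fin (o : V) (a g t : H) {s : ℕ} (hs : 0 < s) (M i : ℕ) : ∃ S : Set V, S.Finite ∧
    ∀ z ∈ rset o a g t s M i, ∃ l : ℤ, ∃ x ∈ S, z = rel a g t s M i ^ l • x := by
  refine ⟨(fun p : ℤ × ℤ => rlin a g t s M i p.1 • a ^ p.2 • o) ''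
    (Set.Icc 0 (s : ℤ) ×ˢ Set.Icc (0 : ℤ) ((M * (s * (i + 1 + 1)) : ℕ) : ℤ)),
    ((Set.finite_Icc _ _).prod (Set.finite_Icc _ _)).image _, ?_⟩
  rintro _ ⟨q, k, h1, h2, rfl⟩
  have a1 := Int.emod_nonneg q (show (s : ℤ) ≠ 0 by omega)
  have a2 := Int.emod_lt_of_pos q (show (0 : ℤ) < s by omega)
  have h3 := rexp_le hs M (Nat.lt_succ_self i) q
  refine ⟨q / s, _, ⟨(q % s, k), ⟨⟨a1, a2.le⟩, h1, ?_⟩, rfl⟩, ?_⟩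
  · exact h2.trans (by exact_mod_cast h3)
  · rw [← mul_smul (rel a g t s M i ^ (q / s)), ← rlin_add t hs, Int.emod_add_mul_ediv]

namespace Crn
variable (X : Crn m δ o a (insert g (range t)) D C)
include X

/-- The relators with sufficiently many syllables define a rotating family with an arbitrarily
large ratio between the displacement `L` and the overlap `c`. -/
theorem relRot (hg : ∀ e e' : H, e * a = a * e → e' * a = a * e' → IsOfFinOrder e →
      IsOfFinOrder e' → g * e' = e * g → e = 1) (Q : ℕ) :
    ∃ s M c L : ℕ, 0 < s ∧ Rot H m (rfam o a g t s M) δ (2 * C + 9 * δ + 7 * D) c L ∧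
      Q * (c + 1) ≤ L ∧
      (∀ i : Fin n, ∀ x ∈ MulAction.stabilizer H (rset o a g (t i) s M i),
        ∃ l : ℤ, x = rel a g (t i) s M i ^ l) ∧
      (∀ (h : H), ∀ Y ∈ rfam o a g t s M, m.Ov (k1 δ (2 * C + 9 * δ + 7 * D)) c Y
        (range fun k : ℤ => h • a ^ k • o)) := by
  set κ := 2 * C + 9 * δ + 7 * D with hκ
  set K := k1 δ κ with hK
  obtain ⟨T0, hm0⟩ := X.relmatch hg 0
  obtain ⟨T1, hm⟩ := X.relmatch hg K
  obtain ⟨T2, hax⟩ := X.no_axis K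
  set P := 2 * C + 4 * δ + D with hP
  set M := T0 + T1 + T2 + P + 1 with hM
  set A := 7 * ((M * (n + 1) + 1) * D) + 2 * K + 1 with hA
  set s := Q * A + 3 with hs
  have hs3 : 3 ≤ s := by omega
  have hs0 : 0 < s := by omega
  set B := M * (s * (n + 1)) with hB
  set c := 7 * ((B + 1) * D) + 2 * K with hc
  have hMs : M ≤ M * s := Nat.le_mul_of_pos_right _ hs0
  have hE : C + 2 * δ + D < M * s := by omega
  have line := fun (h : H) (i : Fin n) => (rline (a := a) (g := g) t hs0 M i).smul h
  have hBe : ∀ (i : Fin n) q, rexp s M i q ≤ B := fun i q => rexp_le hs0 M i.2 q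
  have stab : ∀ i : Fin n, ∀ x ∈ MulAction.stabilizer H (rset o a g (t i) s M i),
      ∃ l : ℤ, x = rel a g (t i) s M i ^ l := by
    intro i x hx
    rw [MulAction.mem_stabilizer_iff] at hx
    have pt : ∀ q : ℤ, ∃ q' k' : ℤ, 0 ≤ k' ∧ k' ≤ rexp s M i q' ∧
        m.d ((1 : H) • rlin a g (t i) s M i q • a ^ (0 : ℤ) • o)
        (x • rlin a g (t i) s M i q' • a ^ k' • o) ≤ 0 := by
      intro q
      have : rlin a g (t i) s M i q • a ^ (0 : ℤ) • o ∈ rset o a g (t i) s M i :=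
        ⟨q, 0, le_rfl, by omega, rfl⟩
      rw [← hx] at this
      obtain ⟨_, ⟨q', k', h1, h2, rfl⟩, h3⟩ := this
      have h3 : x • rlin a g (t i) s M i q' • a ^ k' • o = _ := h3
      exact ⟨q', k', h1, h2, by rw [h3, one_smul, m.d_self]⟩
    obtain ⟨q1, k1, a1, a2, a3⟩ := pt 0
    obtain ⟨q2, k2, b1, b2, b3⟩ := pt 6
    obtain ⟨-, l, hl⟩ := hm0 s M hs3 (by omega) i i 1 x 0 6 0 0 q1 q2 k1 k2 (by omega) a1 a2 b1 b2
      a3 b3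
    exact ⟨l, by rw [hl, one_mul]⟩
  -- points in a few consecutive blocks are close
  have close : ∀ (h : H) (i : Fin n) (q r k j : ℤ), q ≤ r → r ≤ q + 5 → 0 ≤ k →
      k ≤ rexp s M i q → 0 ≤ j → j ≤ rexp s M i r →
      m.d (h • rlin a g (t i) s M i q • a ^ k • o) (h • rlin a g (t i) s M i r • a ^ j • o) ≤
        7 * ((B + 1) * D) := by
    intro h i q r k j h1 h2 h3 h4 h5 h6
    have := X.line_short (line h i) (hBe i) (k := 5) h1 (by omega) h3 h4 h5 h6
    simpa only [mul_smul] using this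
  refine ⟨s, M, c, (s - 1) * (M * s - P), hs0, ⟨⟨X.lox.hyp, ?_, ?_, ?_⟩, X.lox.inv, ?_, ?_⟩, ?_,
    stab, ?_⟩
  · rintro _ ⟨h, i, rfl⟩ _ ⟨_, ⟨q, k, h1, h2, rfl⟩, rfl⟩ _ ⟨_, ⟨r, j, h3, h4, rfl⟩, rfl⟩ z hz
    have hz : m.Btw 0 (h • rlin a g (t i) s M i q • a ^ k • o) z
      (h • rlin a g (t i) s M i r • a ^ j • o) := hz
    rw [← mul_smul h, ← mul_smul h] at hz
    obtain ⟨q', k', a1, a2, a3⟩ : ∃ q' k' : ℤ, 0 ≤ k' ∧ k' ≤ rexp s M i q' ∧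
        m.d z ((h * rlin a g (t i) s M i q') • a ^ k' • o) ≤ κ := by
      rcases le_total q r with hl | hl
      · obtain ⟨q', k', -, -, a⟩ := X.line_near (line h i) hE hl h1 h2 h3 h4 hz
        exact ⟨q', k', a⟩
      · obtain ⟨q', k', -, -, a⟩ := X.line_near (line h i) hE hl h3 h4 h1 h2 hz.symm
        exact ⟨q', k', a⟩
    exact ⟨_, Set.smul_mem_smul_set ⟨q', k', a1, a2, rfl⟩, by rwa [← mul_smul h]⟩
  · rintro _ ⟨h, i, rfl⟩
    exact ⟨_, Set.smul_mem_smul_set ⟨0, 0, le_rfl, by omega, rfl⟩⟩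
  · rintro _ ⟨h, i, rfl⟩ _ ⟨h', i', rfl⟩ hne _ ⟨_, ⟨q, k, h1, h2, rfl⟩, rfl⟩ _
      ⟨_, ⟨r, j, h3, h4, rfl⟩, rfl⟩ _ ⟨_, ⟨q', k', h5, h6, rfl⟩, rfl⟩ _
      ⟨_, ⟨r', j', h7, h8, rfl⟩, rfl⟩ d1 d2
    simp only at d1 d2 ⊢
    have no : ∀ q r k j q' r' k' j' : ℤ, 0 ≤ k' → k' ≤ rexp s M i' q' → 0 ≤ j' →
        j' ≤ rexp s M i' r' → m.d (h • rlin a g (t i) s M i q • a ^ k • o)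
        (h' • rlin a g (t i') s M i' q' • a ^ k' • o) ≤ K →
      m.d (h • rlin a g (t i) s M i r • a ^ j • o)
        (h' • rlin a g (t i') s M i' r' • a ^ j' • o) ≤ K → r ≤ q + 5 := by
      intro q r k j q' r' k' j' e1 e2 e3 e4 e5 e6
      by_contra hcon
      obtain ⟨rfl, l, rfl⟩ := hm s M hs3 (by omega) i i' h h' q r k j q' r' k' j' (by omega) e1 e2
        e3 e4 e5 e6
      rw [mul_smul, rset_zpow _ hs0] at hne
      exact hne rfl
    have c1 := no q r k j q' r' k' j' h5 h6 h7 h8 d1 d2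
    have c2 := no r q j k r' q' j' k' h7 h8 h5 h6 d2 d1
    have t1 := m.tri (h' • rlin a g (t i') s M i' q' • a ^ k' • o)
      (h • rlin a g (t i) s M i q • a ^ k • o) (h' • rlin a g (t i') s M i' r' • a ^ j' • o)
    have t2 := m.tri (h • rlin a g (t i) s M i q • a ^ k • o)
      (h • rlin a g (t i) s M i r • a ^ j • o) (h' • rlin a g (t i') s M i' r' • a ^ j' • o)
    rw [m.symm] at d1
    have : m.d (h • rlin a g (t i) s M i q • a ^ k • o) (h • rlin a g (t i) s M i r • a ^ j • o) ≤
        7 * ((B + 1) * D) := by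
      rcases le_total q r with hl | hl
      · exact close h i q r k j hl c1 h1 h2 h3 h4
      · rw [m.symm]; exact close h i r q j k hl c2 h3 h4 h1 h2
    omega
  · rintro h' _ ⟨h, i, rfl⟩
    exact ⟨h' * h, i, mul_smul _ _ _⟩
  · rintro _ ⟨h, i, rfl⟩ x hx hx1 _ ⟨_, ⟨q, k, h1, h2, rfl⟩, rfl⟩
    have hx' : h⁻¹ * x * h ∈ MulAction.stabilizer H (rset o a g (t i) s M i) := by
      rw [MulAction.mem_stabilizer_iff] at hx ⊢
      rw [mul_smul, mul_smul, hx, inv_smul_smul]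
    obtain ⟨l, hl⟩ := stab i _ hx'
    have hl0 : l ≠ 0 := by
      rintro rfl
      rw [zpow_zero, mul_assoc, inv_mul_eq_one] at hl
      exact hx1 (mul_eq_right.1 hl.symm)
    have key : ∀ (l : ℤ) q, 0 < l → (s - 1) * (M * s - P) ≤
        m.d (rlin a g (t i) s M i q • a ^ k • o)
          (rel a g (t i) s M i ^ l • rlin a g (t i) s M i q • a ^ k • o) := by
      intro l q hl
      have := X.line_long (rline (a := a) (g := g) t hs0 M i) (by omega) q k (s * l - 1).toNat k
      have pos : (s : ℤ) ≤ s * l := by nlinarith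
      rw [show q + ((s * l - 1).toNat : ℤ) + 1 = q + s * l by omega, rlin_add _ hs0, mul_smul]
        at this
      exact (Nat.mul_le_mul_right _ (by omega)).trans this
    have hxx : x • h • rlin a g (t i) s M i q • a ^ k • o =
        h • rel a g (t i) s M i ^ l • rlin a g (t i) s M i q • a ^ k • o := by
      rw [← hl, mul_assoc, mul_smul h⁻¹, smul_inv_smul, mul_smul]
    change _ ≤ m.d (h • _) (x • h • _)
    rw [hxx, X.lox.inv]
    rcases lt_or_gt_of_ne hl0 with hn | hp
    · have := key (-l) q (by omega)
      rw [m.symm, ← X.lox.inv (rel a g (t i) s M i ^ l), ← mul_smul (rel a g (t i) s M i ^ l),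
        ← zpow_add, add_neg_cancel, zpow_zero, one_smul] at this
      exact this
    · exact key l q hp
  · have e1 : c + 1 ≤ A * s := by
      have : (B + 1) * D ≤ ((M * (n + 1) + 1) * D) * s := by
        rw [hB]
        calc (M * (s * (n + 1)) + 1) * D ≤ (M * (s * (n + 1)) + s) * D :=
              Nat.mul_le_mul_right _ (by omega)
          _ = _ := by ring
      have h2 : 2 * K + 1 ≤ (2 * K + 1) * s := Nat.le_mul_of_pos_right _ hs0
      rw [hA, add_assoc (7 * _), add_assoc (7 * _), add_mul (7 * _) _ s, mul_assoc 7]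
      generalize (B + 1) * D = z at *
      omega
    have e2 : s ≤ M * s - P := by
      have h3 : (P + 1) * s ≤ M * s := Nat.mul_le_mul_right _ (by omega)
      have : P ≤ P * s := Nat.le_mul_of_pos_right _ hs0
      rw [add_mul] at h3
      omega
    calc Q * (c + 1) ≤ Q * (A * s) := Nat.mul_le_mul_left _ e1
      _ = (Q * A) * s := by ring
      _ ≤ (s - 1) * (M * s - P) := Nat.mul_le_mul (by omega) e2
  · rintro h' _ ⟨h, i, rfl⟩ _ ⟨_, ⟨q, k, h1, h2, rfl⟩, rfl⟩ _ ⟨_, ⟨r, j, h3, h4, rfl⟩, rfl⟩ _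
      ⟨k', rfl⟩ _ ⟨j', rfl⟩ d1 d2
    simp only at d1 d2 ⊢
    have no : ∀ q r k j k' j' : ℤ, m.d (h • rlin a g (t i) s M i q • a ^ k • o)
        (h' • a ^ k' • o) ≤ K → m.d (h • rlin a g (t i) s M i r • a ^ j • o)
        (h' • a ^ j' • o) ≤ K → r ≤ q + 5 := by
      intro q r k j k' j' e1 e2
      by_contra hcon
      refine hax (line h i) hE (by omega) q (q + 2) r k j h' k' j' (by omega) (by omega)
        (Or.inl (by omega)) ?_ ?_
      · simpa only [mul_smul] using e1
      · simpa only [mul_smul] using e2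
    have c1 := no q r k j k' j' d1 d2
    have c2 := no r q j k j' k' d2 d1
    have t1 := m.tri (h' • a ^ k' • o)
      (h • rlin a g (t i) s M i q • a ^ k • o) (h' • a ^ j' • o)
    have t2 := m.tri (h • rlin a g (t i) s M i q • a ^ k • o)
      (h • rlin a g (t i) s M i r • a ^ j • o) (h' • a ^ j' • o)
    rw [m.symm] at d1
    have : m.d (h • rlin a g (t i) s M i q • a ^ k • o) (h • rlin a g (t i) s M i r • a ^ j • o) ≤
        7 * ((B + 1) * D) := by
      rcases le_total q r with hl | hl
      · exact close h i q r k j hl c1 h1 h2 h3 h4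
      · rw [m.symm]; exact close h i r q j k hl c2 h3 h4 h1 h2
    omega

end Crn
end RelFam

/-! ### Elements acting on the quotient by a bounded amount -/

section Core
open GMet

variable {V : Type} [Nonempty V] {H : Type} [Group H] [MulAction H V]
variable {m : GMet V} {δ : ℕ} {o : V} {a g : H} {F : Set H} {D C : ℕ}
variable {𝕐 : Set (Set V)} {κ c L Λ : ℕ}

omit [Nonempty V] in
theorem Crn.axis_qc (X : Crn m δ o a F D C) (hκ : 3 * δ + 5 * D ≤ κ) (h : H) :
    m.QC κ (range fun k : ℤ => h • a ^ k • o) := by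
  rintro _ ⟨i, rfl⟩ _ ⟨j, rfl⟩ z hz
  obtain ⟨s, -, hs⟩ := X.axis_near hz
  exact ⟨_, ⟨s, rfl⟩, hs.trans (by omega)⟩

/-- Two points of a quasi-convex set `Z` having small overlaps with the rotating family have
close projections to every member of the family. -/
theorem Rot.pd_qc (R : Rot H m 𝕐 δ κ c L) {Z : Set V} (hO : ∀ Y ∈ 𝕐, m.Ov (k1 δ κ) c Y Z)
    (hZ : m.QC κ Z) {Y : Set V} (hY : Y ∈ 𝕐) {x y : V} (hx : x ∈ Z) (hy : y ∈ Z) :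
    pd m 𝕐 Y x y ≤ kθ δ κ c + 2 * k1 δ κ := by
  obtain ⟨z, z', h1, h2, h3⟩ := pd_att R.cone hY x y
  obtain ⟨p, hp⟩ := m.exists_near (R.cone.ne Y hY) x
  obtain ⟨q, hq⟩ := m.exists_near (R.cone.ne Y hY) y
  have ov : m.Ov (k1 δ κ) (c + 2 * k1 δ κ) Z Y := by
    intro x hx x' hx' y hy y' hy' hxy hxy'
    have e1 := hO Y hY y hy y' hy' x hx x' hx' (by rw [m.symm]; exact hxy)
      (by rw [m.symm]; exact hxy')
    have := m.tri y x y'; have := m.tri x x' y'; have := m.symm y x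
    omega
  have e := R.cone.hyp.near_lip (R.cone.qc Y hY) hp hq (Or.inr ⟨Z, hZ, ov, hx, hy⟩)
  have e1 := R.cone.near_cone hY hp h1
  have e2 := R.cone.near_cone hY hq h2
  have := m.tri z p z'; have := m.tri p q z'; have := m.symm p z
  have : 2 * k0 δ κ ≤ k4 δ κ c ∧ δ ≤ k4 δ κ c ∧ 2 * k0 δ κ + δ ≤ k4 δ κ c := by
    unfold k4; omega
  unfold kθ
  omega

/-- An element moving two far apart points of the axis of `a` by a bounded amount in the cone-off
commutes with `a`. -/
theorem Crn.cone_comm (X : Crn m δ o a F D C) (R : Rot H m 𝕐 δ κ c L) (hκ : 3 * δ + 5 * D ≤ κ)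
    (hA : ∀ h : H, ∀ Y ∈ 𝕐, m.Ov (k1 δ κ) c Y (range fun k : ℤ => h • a ^ k • o)) (C' : ℕ) :
    ∃ T : ℕ, ∀ (x : H) (n : ℕ), T ≤ n → (m.cone 𝕐).d o (x • o) ≤ C' →
      (m.cone 𝕐).d (a ^ (n : ℤ) • o) (x • a ^ (n : ℤ) • o) ≤ C' → x * a = a * x := by
  set A : Set V := range fun k : ℤ => a ^ k • o with hAdef
  have hO : ∀ Y ∈ 𝕐, m.Ov (k1 δ κ) c Y A := by simpa using hA 1
  have hQ : m.QC κ A := by simpa using X.axis_qc hκ 1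
  have ne : A.Nonempty := ⟨_, 0, rfl⟩
  choose π hπ using fun x => m.exists_near ne x
  have lip := R.cone.proj_lip hQ hO π hπ
  have fix : ∀ k : ℤ, π (a ^ k • o) = a ^ k • o := fun k => (hπ _).self ⟨k, rfl⟩
  have fix0 : π o = o := by simpa using fix 0
  set K' := (C' + 5 * δ + 7 * D) * k3 δ κ c + 5 * δ + 7 * D with hK'
  have hla := X.la
  -- elements of the elementary closure moving a point of the axis a little in the cone-off
  have small : ∀ x ∈ elem a, (m.cone 𝕐).d o (x • o) ≤ C' → m.d o (x • o) ≤ K' := by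
    intro x hx hd
    obtain ⟨s, hs⟩ := X.lox.toLox.elem_near hx
    have h1 := (m.cone_le 𝕐 _ _).trans hs
    have h2 := (m.cone 𝕐).tri o (x • o) (a ^ s • o)
    have h3 := lip o (a ^ s • o)
    rw [fix, fix0] at h3
    have h4 : (m.cone 𝕐).d o (a ^ s • o) * k3 δ κ c ≤ (C' + 5 * δ + 7 * D) * k3 δ κ c :=
      Nat.mul_le_mul_right _ (by omega)
    have := m.tri o (a ^ s • o) (x • o); have := m.symm (a ^ s • o) (x • o)
    omega
  obtain ⟨T1, hT1⟩ := X.lox.comm_near K'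
  set K1 := C' * k3 δ κ c + (2 * k0 δ κ + δ) + 3 * δ + 5 * D with hK1
  obtain ⟨T2, hT2⟩ := X.lox.toLox.overlap K1
  refine ⟨T1 + T2 + 2 * (C' * k3 δ κ c) + k0 δ κ + δ + 1, fun x n hn h1 h2 => ?_⟩
  have l1 := lip o (x • o)
  have l2 := lip (a ^ (n : ℤ) • o) (x • a ^ (n : ℤ) • o)
  rw [fix0] at l1
  rw [fix] at l2
  have m1 : (m.cone 𝕐).d o (x • o) * k3 δ κ c ≤ C' * k3 δ κ c := Nat.mul_le_mul_right _ h1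
  have m2 : (m.cone 𝕐).d (a ^ (n : ℤ) • o) (x • a ^ (n : ℤ) • o) * k3 δ κ c ≤ C' * k3 δ κ c :=
    Nat.mul_le_mul_right _ h2
  have gr := X.lox.toLox.grow n
  rw [Int.natAbs_natCast] at gr
  set P := π (x • o)
  set P' := π (x • a ^ (n : ℤ) • o)
  have nn := R.cone.hyp.near_near hQ (hπ (x • o)) (hπ (x • a ^ (n : ℤ) • o)) (by
    have := m.tri o P (a ^ (n : ℤ) • o); have := m.tri P P' (a ^ (n : ℤ) • o)
    have := m.symm P' (a ^ (n : ℤ) • o)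
    change _ < m.d P P'
    omega)
  change m.d (x • o) P + m.d P P' + m.d P' (x • a ^ (n : ℤ) • o) ≤ _ at nn
  have b1 : m.Btw (2 * k0 δ κ + δ) (x • a ^ (0 : ℤ) • o) P (x • a ^ (n : ℤ) • o) := by
    unfold GMet.Btw
    rw [zpow_zero, one_smul]
    have := m.tri P P' (x • a ^ (n : ℤ) • o)
    omega
  have b2 : m.Btw (2 * k0 δ κ + δ) (x • a ^ (0 : ℤ) • o) P' (x • a ^ (n : ℤ) • o) := by
    unfold GMet.Btw
    rw [zpow_zero, one_smul]
    have := m.tri (x • o) P P'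
    omega
  obtain ⟨s, -, hs⟩ := X.axis_near b1
  obtain ⟨s', -, hs'⟩ := X.axis_near b2
  have hx : x ∈ elem a := by
    refine hT2 x 0 n s s' (by omega) ?_ ?_
    · rw [zpow_zero, one_smul]
      have := m.tri o P (x • a ^ s • o)
      omega
    · have := m.tri (a ^ (n : ℤ) • o) P' (x • a ^ s' • o)
      omega
  refine hT1 x n (by omega) (small x hx h1) ?_
  have e := small (a ^ (-(n : ℤ)) * x * a ^ (n : ℤ))
    (mul_mem (mul_mem (elem_zpow a _) hx) (elem_zpow a _)) (by
      rwa [← R.cone_inv (a ^ (n : ℤ)), ← mul_smul (a ^ (n : ℤ)) (_ * _), mul_assoc,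
        zpow_neg, mul_inv_cancel_left, mul_smul])
  rwa [← X.lox.inv (a ^ (n : ℤ)), ← mul_smul (a ^ (n : ℤ)) (_ * _), mul_assoc,
    zpow_neg, mul_inv_cancel_left, mul_smul] at e

/-- An element of `H` moving the points `o` and `a ^ k * g * a ^ k • o` by a bounded amount modulo
the rotation group belongs to the rotation group. -/
theorem Crn.mem_rot (X : Crn m δ o a F D C) (hgF : g ∈ F) (R : Rot H m 𝕐 δ κ c L)
    (hκ : 3 * δ + 5 * D ≤ κ)
    (hA : ∀ h : H, ∀ Y ∈ 𝕐, m.Ov (k1 δ κ) c Y (range fun k : ℤ => h • a ^ k • o))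
    (hg : ∀ e e' : H, e * a = a * e → e' * a = a * e' → IsOfFinOrder e →
      IsOfFinOrder e' → g * e' = e * g → e = 1)
    (hL : 22 * kθ δ κ c < L) (hΛL : Λ + 14 * kθ δ κ c < L)
    (hΛ : 2 * (2 * (kθ δ κ c + 2 * k1 δ κ) + kθ δ κ c * (D + 1)) + 2 * kθ δ κ c ≤ Λ)
    {h : H} {C' : ℕ} (ho : qd H m 𝕐 o (h • o) ≤ C')
    (hf : ∀ k : ℕ, qd H m 𝕐 ((a ^ (k : ℤ) * g * a ^ (k : ℤ)) • o)
      (h • (a ^ (k : ℤ) * g * a ^ (k : ℤ)) • o) ≤ C') : h ∈ rotGroup H 𝕐 := by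
  set E0 := C + 2 * D + δ + kD δ κ with hE0
  set C2 := 7 * C' + kD δ κ + 2 * E0 with hC2
  obtain ⟨T, hT⟩ := X.cone_comm R hκ hA C2
  set b : H := a ^ (T : ℤ) with hb
  set f : H := b * g * b with hfdef
  have hfT := hf T
  rw [← hb, ← hfdef] at hfT
  have hgD := X.bd g hgF
  have hZ : ∀ (u : H), m.QC κ (range fun k : ℤ => u • a ^ k • o) := X.axis_qc hκ
  -- the segment from `o` to `f • o` is tight
  have tight : ∀ Y ∈ 𝕐, pd m 𝕐 Y o (f • o) ≤
      2 * (kθ δ κ c + 2 * k1 δ κ) + kθ δ κ c * (D + 1) := by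
    intro Y hY
    have e1 := R.pd_qc (hA 1) (hZ 1) hY (x := o) (y := b • o) ⟨0, by simp⟩ ⟨T, by simp [hb]⟩
    have e2 := R.pd_qc (hA (b * g)) (hZ (b * g)) hY (x := (b * g) • o) (y := f • o) ⟨0, by simp⟩
      ⟨T, by simp [hfdef, hb, mul_smul]⟩
    have e3 := pd_le_dist R.cone hY (b • o) ((b * g) • o)
    rw [mul_smul b g, X.lox.inv, ← mul_smul b g] at e3
    have e4 : kθ δ κ c * (m.d o (g • o) + 1) ≤ kθ δ κ c * (D + 1) :=
      Nat.mul_le_mul_left _ (by omega)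
    have := pd_tri R.cone hY o (b • o) (f • o)
    have := pd_tri R.cone hY (b • o) ((b * g) • o) (f • o)
    omega
  -- replace `h` by a good representative modulo the rotation group
  obtain ⟨γ0, hγ0, d0⟩ := qd_att (H := H) (m := m) (𝕐 := 𝕐) o (h • o)
  obtain ⟨γ1, hγ1, d1⟩ := qd_att (H := H) (m := m) (𝕐 := 𝕐) (f • o) (h • f • o)
  have hγ : γ0 * γ1⁻¹ ∈ rotGroup H 𝕐 := mul_mem hγ0 (inv_mem hγ1)
  obtain ⟨γ', hγ', s1, s2⟩ := R.strip hΛ tight (R.red hL hΛL o _ hγ) (γ0 * h)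
  set x : H := γ' * (γ0 * h) with hx
  have x1 : (m.cone 𝕐).d o (x • o) ≤ C' := by
    rw [mul_smul γ0 h] at s1
    omega
  have x2 : (m.cone 𝕐).d (f • o) (x • f • o) ≤ C' := by
    rw [mul_smul γ0 h, mul_smul γ0 γ1⁻¹, R.cone_inv, ← R.cone_inv γ1 (h • _), smul_inv_smul,
      (m.cone 𝕐).symm (γ1 • _)] at s2
    rw [(m.cone 𝕐).symm]
    omega
  -- points close to the segment are moved by a bounded amount
  have mv : ∀ p : V, m.Btw (C + 2 * D) o p (f • o) → (m.cone 𝕐).d p (x • p) ≤ C2 := by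
    intro p hp
    obtain ⟨p', hp', hpp⟩ := X.lox.hyp.btw_near hp
    obtain ⟨hh, gu, -⟩ := R.cone.guess
    obtain ⟨u, hu, hpu⟩ := gu _ _ _ hp'
    have e1 := (m.cone_le 𝕐 p p').trans hpp
    have e2 := (m.cone 𝕐).tri p p' u
    have hu' : (m.cone 𝕐).Btw 0 (x • o) (x • u) (x • f • o) := by
      unfold GMet.Btw
      rw [R.cone_inv, R.cone_inv, R.cone_inv]
      exact hu
    have i1 := R.cone_inv x o u
    have hu2 : (m.cone 𝕐).Btw (6 * C') o (x • u) (f • o) := by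
      have := (m.cone 𝕐).tri o (x • o) (x • u)
      have := (m.cone 𝕐).tri (x • u) (x • f • o) (f • o)
      have := (m.cone 𝕐).tri (x • o) o (x • f • o)
      have := (m.cone 𝕐).tri o (f • o) (x • f • o)
      have := (m.cone 𝕐).symm (x • o) o
      have := (m.cone 𝕐).symm (x • f • o) (f • o)
      unfold GMet.Btw at hu' ⊢
      omega
    have cl := hh.btw_close (e := C') (hu.mono (show 0 ≤ 6 * C' by omega)) hu2
      (by
        have := (m.cone 𝕐).tri (x • o) o (x • u)
        have := (m.cone 𝕐).symm (x • o) o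
        omega)
      (by have := (m.cone 𝕐).tri o (x • o) (x • u); omega)
    have i2 := R.cone_inv x u p
    have := (m.cone 𝕐).tri p u (x • p)
    have := (m.cone 𝕐).tri u (x • u) (x • p)
    have := (m.cone 𝕐).symm u p
    omega
  have c0 := X.corner g hgF (-T) T 1 (Or.inl rfl)
  have b2 : m.Btw C o ((b * g) • o) (f • o) := by
    unfold GMet.Btw at c0 ⊢
    have t1 : (b * g) • g⁻¹ • a ^ (-(T : ℤ)) • o = o := by
      rw [mul_smul, smul_inv_smul, zpow_neg, smul_inv_smul]
    have t2 : (b * g) • a ^ (T : ℤ) • (1 : H) • o = f • o := by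
      rw [one_smul, ← mul_smul]
    have i1 := X.lox.inv (b * g) (g⁻¹ • a ^ (-(T : ℤ)) • o) o
    have i2 := X.lox.inv (b * g) o (a ^ (T : ℤ) • (1 : H) • o)
    have i3 := X.lox.inv (b * g) (g⁻¹ • a ^ (-(T : ℤ)) • o) (a ^ (T : ℤ) • (1 : H) • o)
    rw [t1] at i1 i3
    rw [t2] at i2 i3
    omega
  have b1 : m.Btw (C + 2 * D) o (b • o) (f • o) := by
    have e := X.lox.inv b o (g • o)
    rw [← mul_smul] at e
    have := m.tri o ((b * g) • o) (b • o); have := m.tri (b • o) ((b * g) • o) (f • o)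
    have := m.symm (b • o) ((b * g) • o)
    unfold GMet.Btw at b2 ⊢
    omega
  have m1 := mv _ b1
  have m2 := mv _ (b2.mono (by omega))
  -- both `x` and its conjugate commute with `a`
  have y1 : x * a = a * x := hT x T le_rfl (by omega) m1
  have y2 : ((b * g)⁻¹ * x * (b * g)) * a = a * ((b * g)⁻¹ * x * (b * g)) := by
    have key : b * g * ((b * g)⁻¹ * x * (b * g)) = x * (b * g) := by group
    refine hT _ T le_rfl ?_ ?_
    · rw [← R.cone_inv (b * g), ← mul_smul (b * g) (_ * _), key, mul_smul x]
      exact m2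
    · rw [← R.cone_inv (b * g), ← mul_smul (b * g) (_ * _), key, mul_smul x,
        ← mul_smul (b * g) (a ^ _)]
      exact x2.trans (by omega)
  have xb : x * b = b * x := (Commute.zpow_right (show Commute x a from y1) T).eq
  have y3 : (b * g)⁻¹ * x * (b * g) = g⁻¹ * x * g := by
    rw [mul_inv_rev, mul_assoc, mul_assoc, ← mul_assoc x b, xb]
    group
  rw [y3] at y2
  have y4 : g * (g⁻¹ * x * g) = x * g := by group
  obtain ⟨f1, f2⟩ := X.lox.tors_of_conj y1 y2 (X.disj g hgF) y4
  have x0 := hg _ _ y1 y2 f1 f2 y4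
  have : h = (γ' * γ0)⁻¹ := by
    refine (inv_eq_of_mul_eq_one_right ?_).symm
    rw [mul_assoc]; exact x0
  rw [this]
  exact inv_mem (mul_mem hγ' hγ0)

/-- The constant `kθ` is at most linear in the overlap constant. -/
theorem kθ_le (δ κ c : ℕ) : kθ δ κ c ≤ kθ δ κ 1 * (c + 1) := by
  unfold kθ k4 k3
  ring_nf
  nlinarith [Nat.zero_le (k0 δ κ * c), Nat.zero_le (k2 δ κ * c), Nat.zero_le (δ * c),
    Nat.zero_le (k2 δ κ * k0 δ κ * c), Nat.zero_le (k2 δ κ * δ * c), Nat.zero_le c]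

end Core

/-! ### Hyperbolicity of free products -/

section FreeProd
open Monoid

/-- A subadditive function bounded by `lam` on the generators is at most `lam` times the word
length. -/
theorem len_le_wlen {ι : Type} [DecidableEq ι] {G : Type} [Group G] {p : FreeGroup ι →* G}
    (hp : Surjective p) (N : G → ℕ) (lam : ℕ) (h1 : N 1 = 0)
    (hmul : ∀ x y, N (x * y) ≤ N x + N y) (hgen : ∀ i, N (p (FreeGroup.of i)) ≤ lam)
    (hgen' : ∀ i, N (p (FreeGroup.of i))⁻¹ ≤ lam) (g : G) : N g ≤ lam * wlen p g := by
  obtain ⟨v, rfl, hv⟩ := wlen_spec hp g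
  rw [← hv, FreeGroup.norm]
  have key : ∀ L : List (ι × Bool), N (p (FreeGroup.mk L)) ≤ lam * L.length := by
    intro L
    induction L with
    | nil => rw [← FreeGroup.one_eq_mk, map_one, h1]; simp
    | cons s L ih =>
      have e : FreeGroup.mk (s :: L) = FreeGroup.mk [s] * FreeGroup.mk L := by
        rw [FreeGroup.mul_mk]; rfl
      rw [e, map_mul, List.length_cons, mul_add, mul_one]
      refine (hmul _ _).trans ?_
      have : N (p (FreeGroup.mk [s])) ≤ lam := by
        rcases s with ⟨i, b⟩
        cases b
        · have : FreeGroup.mk [(i, false)] = (FreeGroup.of i)⁻¹ := rfl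
          rw [this, map_inv]; exact hgen' i
        · exact hgen i
      omega
  have := key v.toWord
  rwa [FreeGroup.mk_toWord] at this

theorem wlen_hom_le {ι κ : Type} [DecidableEq ι] [DecidableEq κ] {G H : Type} [Group G] [Group H]
    {p : FreeGroup ι →* G} {q : FreeGroup κ →* H} (hp : Surjective p) (hq : Surjective q)
    (f : G →* H) (lam : ℕ) (hf : ∀ i, wlen q (f (p (FreeGroup.of i))) ≤ lam) (g : G) :
    wlen q (f g) ≤ lam * wlen p g :=
  len_le_wlen hp (fun g => wlen q (f g)) lam (by simp [wlen_one])
    (fun x y => by rw [map_mul]; exact wlen_mul hq _ _) hf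
    (fun i => by rw [map_inv, wlen_inv hq]; exact hf i) g

variable {Q G : Type} [Group G]

/-- The free product of copies of `G` indexed by `Q`. -/
abbrev FP (Q G : Type) [Group G] := CoprodI (fun _ : Q => G)

/-- Reduced lists of syllables. -/
def RL (l : List (Σ _ : Q, G)) : Prop :=
  (∀ s ∈ l, s.2 ≠ 1) ∧ l.IsChain fun s t => s.1 ≠ t.1

/-- The element of the free product represented by a list of syllables. -/
def lp (l : List (Σ _ : Q, G)) : FP Q G :=
  (l.map fun s => (CoprodI.of (M := fun _ : Q => G) (i := s.1) s.2)).prod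

/-- The formal inverse of a list of syllables. -/
def linv (l : List (Σ _ : Q, G)) : List (Σ _ : Q, G) :=
  (l.map fun s => ⟨s.1, s.2⁻¹⟩).reverse

theorem lp_nil : lp ([] : List (Σ _ : Q, G)) = 1 := rfl

theorem lp_cons (s : Σ _ : Q, G) (l) :
    lp (s :: l) = (CoprodI.of (M := fun _ : Q => G) (i := s.1) s.2) * lp l := by simp [lp]

theorem lp_append (l l' : List (Σ _ : Q, G)) : lp (l ++ l') = lp l * lp l' := by simp [lp]

theorem lp_linv (l : List (Σ _ : Q, G)) : lp (linv l) = (lp l)⁻¹ := by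
  induction l with
  | nil => simp [lp, linv]
  | cons s l ih =>
    have : linv (s :: l) = linv l ++ [⟨s.1, s.2⁻¹⟩] := by simp [linv]
    rw [this, lp_append, ih, lp_cons, lp_cons, lp_nil, mul_inv_rev, mul_one, map_inv]

theorem RL.inv {l : List (Σ _ : Q, G)} (h : RL l) : RL (linv l) := by
  constructor
  · intro s hs
    simp only [linv, List.mem_reverse, List.mem_map] at hs
    obtain ⟨t, ht, rfl⟩ := hs
    simpa using h.1 t ht
  · unfold linv
    rw [List.isChain_reverse, List.isChain_map]
    exact h.2.imp fun _ _ h => h.symm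

theorem RL.tail {s : Σ _ : Q, G} {l} (h : RL (s :: l)) : RL l :=
  ⟨fun t ht => h.1 t (List.mem_cons_of_mem _ ht), h.2.tail⟩

/-- Two reduced lists with inverse heads removed can be joined along a syllable. -/
theorem RL.join {l l' : List (Σ _ : Q, G)} {q : Q} {g : G} (h : RL l) (h' : RL l') (hg : g ≠ 1)
    (hl : ∀ s ∈ l.head?, s.1 ≠ q) (hl' : ∀ s ∈ l'.head?, s.1 ≠ q) :
    RL (linv l ++ ⟨q, g⟩ :: l') := by
  constructor
  · intro s hs
    rw [List.mem_append, List.mem_cons] at hs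
    rcases hs with hs | rfl | hs
    · exact h.inv.1 s hs
    · exact hg
    · exact h'.1 s hs
  · rw [List.isChain_append, List.isChain_cons]
    refine ⟨h.inv.2, ⟨fun s hs => (hl' s hs).symm, h'.2⟩, ?_⟩
    intro x hx y hy
    simp only [linv, List.getLast?_reverse, List.head?_map, Option.mem_def,
      Option.map_eq_some_iff] at hx
    obtain ⟨s, hs, rfl⟩ := hx
    simp only [List.head?_cons, Option.mem_def, Option.some.injEq] at hy
    subst hy
    exact hl s hs

theorem exists_RL (x : FP Q G) : ∃ l, RL l ∧ lp l = x := by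
  classical
  refine ⟨(CoprodI.Word.equiv x).toList, ⟨(CoprodI.Word.equiv x).ne_one,
    (CoprodI.Word.equiv x).chain_ne⟩, ?_⟩
  exact CoprodI.Word.equiv.symm_apply_apply x

theorem RL.unique {l l' : List (Σ _ : Q, G)} (h : RL l) (h' : RL l') (e : lp l = lp l') :
    l = l' := by
  classical
  have : (⟨l, h.1, h.2⟩ : CoprodI.Word fun _ : Q => G) = ⟨l', h'.1, h'.2⟩ :=
    CoprodI.Word.equiv.symm.injective e
  exact congrArg CoprodI.Word.toList this

variable {ι : Type} [DecidableEq ι] (p : FreeGroup ι →* G)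

/-- The sum of the lengths of the syllables. -/
noncomputable def ln (l : List (Σ _ : Q, G)) : ℕ := (l.map fun s => wlen p s.2).sum

/-- The length on the free product: the sum of the lengths of the syllables of the reduced form. -/
noncomputable def fpN (x : FP Q G) : ℕ := ln p (exists_RL x).choose

theorem fpN_lp {l : List (Σ _ : Q, G)} (h : RL l) : fpN p (lp l) = ln p l := by
  have := (exists_RL (lp l)).choose_spec
  rw [fpN, this.1.unique h this.2]

variable {p}

theorem ln_linv (hp : Surjective p) (l : List (Σ _ : Q, G)) : ln p (linv l) = ln p l := by
  simp only [ln, linv, List.map_reverse, List.map_map, List.sum_reverse]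
  congr 2
  ext s
  simp [wlen_inv hp]

theorem ln_append (l l' : List (Σ _ : Q, G)) : ln p (l ++ l') = ln p l + ln p l' := by simp [ln]

theorem ln_cons (s : Σ _ : Q, G) (l) : ln p (s :: l) = wlen p s.2 + ln p l := by simp [ln]

theorem fpN_inv (hp : Surjective p) (x : FP Q G) : fpN p x⁻¹ = fpN p x := by
  obtain ⟨l, hl, rfl⟩ := exists_RL x
  rw [← lp_linv, fpN_lp p hl.inv, fpN_lp p hl, ln_linv hp]

open Classical in
/-- Twice the Gromov product of two reduced lists. -/
noncomputable def gp (p : FreeGroup ι →* G) : List (Σ _ : Q, G) → List (Σ _ : Q, G) → ℕ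
  | [], _ => 0
  | _ :: _, [] => 0
  | s :: l, t :: l' =>
    if s = t then 2 * wlen p s.2 + gp p l l' else
      if s.1 = t.1 then wlen p s.2 + wlen p t.2 - wlen p (s.2⁻¹ * t.2) else 0

/-- The distance in the free product in terms of the Gromov product. -/
theorem fpN_dist (hp : Surjective p) : ∀ {l l' : List (Σ _ : Q, G)}, RL l → RL l' →
    fpN p ((lp l)⁻¹ * lp l') + gp p l l' = ln p l + ln p l' := by
  intro l
  induction l with
  | nil =>
    intro l' _ h'
    rw [lp_nil, inv_one, one_mul, fpN_lp p h']
    simp [gp, ln]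
  | cons s l ih =>
    intro l' h h'
    cases l' with
    | nil =>
      rw [lp_nil, mul_one, fpN_inv hp, fpN_lp p h]
      simp [gp, ln]
    | cons t l' =>
      rw [gp]
      split_ifs with h1 h2
      · subst h1
        have := ih h.tail h'.tail
        rw [lp_cons, lp_cons, mul_inv_rev, mul_assoc, inv_mul_cancel_left, ln_cons, ln_cons]
        omega
      · obtain ⟨q, g⟩ := s
        obtain ⟨q', g'⟩ := t
        obtain rfl : q = q' := h2
        have hg : g⁻¹ * g' ≠ 1 := by
          rw [Ne, inv_mul_eq_one]; rintro rfl; exact h1 rfl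
        have j := RL.join (q := q) h.tail h'.tail hg
          (fun s hs => ((List.isChain_cons.1 h.2).1 s hs).symm)
          (fun s hs => ((List.isChain_cons.1 h'.2).1 s hs).symm)
        have e : (lp (⟨q, g⟩ :: l))⁻¹ * lp (⟨q, g'⟩ :: l') = lp (linv l ++ ⟨q, g⁻¹ * g'⟩ :: l') := by
          rw [lp_append, lp_cons, lp_cons, lp_cons, lp_linv, map_mul, map_inv, mul_inv_rev]
          simp only [mul_assoc]
        rw [e, fpN_lp p j, ln_append, ln_linv hp, ln_cons, ln_cons, ln_cons]
        have := wlen_mul hp g⁻¹ g'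
        rw [wlen_inv hp] at this
        dsimp only
        omega
      · have j := RL.join (q := t.1) (g := t.2) h h'.tail (h'.1 t (by simp))
          (fun s' hs => by simp at hs; rwa [← hs])
          (fun s hs => ((List.isChain_cons.1 h'.2).1 s hs).symm)
        have e : (lp (s :: l))⁻¹ * lp (t :: l') = lp (linv (s :: l) ++ t :: l') := by
          rw [lp_append, lp_linv]
        rw [e, fpN_lp p j, ln_append, ln_linv hp]
        rfl

theorem gp_hyp {δ : ℕ} (hp : Surjective p) (hm : (wmet p hp).Hyp δ) :
    ∀ y x z : List (Σ _ : Q, G), gp p x y ≤ gp p x z + δ ∨ gp p y z ≤ gp p x z + δ := by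
  intro y
  induction y with
  | nil => intro x z; right; simp [gp]
  | cons b y ih =>
    intro x z
    cases x with
    | nil => left; simp [gp]
    | cons a x =>
      cases z with
      | nil => right; simp [gp]
      | cons c z =>
        by_cases hab : a = b
        · by_cases hbc : b = c
          · subst hab hbc
            simp only [gp, if_true]
            rcases ih x z with h | h <;> omega
          · subst hab
            simp [gp, hbc]
        · by_cases hbc : b = c
          · subst hbc
            simp [gp, hab]
          · by_cases hac : a = c
            · subst hac
              left
              simp only [gp, if_true, if_neg hab]
              split_ifs
              · have := wlen_mul hp a.2 (a.2⁻¹ * b.2)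
                rw [mul_inv_cancel_left] at this
                omega
              · omega
            · simp only [gp, if_neg hab, if_neg hbc, if_neg hac]
              by_cases e1 : a.1 = b.1
              · by_cases e2 : b.1 = c.1
                · rw [if_pos e1, if_pos e2, if_pos (e1.trans e2)]
                  have h := hm a.2 c.2 b.2 1
                  have t1 := wlen_mul hp a.2⁻¹ b.2
                  have t2 := wlen_mul hp a.2⁻¹ c.2
                  have t3 := wlen_mul hp b.2⁻¹ c.2
                  have t4 := wlen_inv hp (c.2⁻¹ * b.2)
                  simp only [wmet, mul_one, wlen_inv hp, mul_inv_rev, inv_inv] at h t1 t2 t3 t4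
                  omega
                · right; simp [e2]
              · left; simp [e1]

variable [DecidableEq Q]

/-- The marking of the free product by the generators of the factors. -/
noncomputable def fpMark (p : FreeGroup ι →* G) : FreeGroup (Q × ι) →* FP Q G :=
  FreeGroup.lift fun s => CoprodI.of (M := fun _ : Q => G) (i := s.1) (p (FreeGroup.of s.2))

theorem fpMark_surj (hp : Surjective p) : Surjective (fpMark (Q := Q) p) := by
  rw [← MonoidHom.range_eq_top, eq_top_iff]
  rintro x -
  induction x using CoprodI.induction_on with
  | one => exact one_mem _
  | of q g =>
    obtain ⟨v, rfl⟩ := hp g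
    refine ⟨FreeGroup.map (fun i => (q, i)) v, ?_⟩
    have : (fpMark (Q := Q) p).comp (FreeGroup.map fun i => (q, i)) =
        (CoprodI.of (M := fun _ : Q => G) (i := q)).comp p := by
      ext i; simp [fpMark]
    exact DFunLike.congr_fun this v
  | mul x y hx hy => exact mul_mem hx hy

theorem fpN_mul (hp : Surjective p) (x y : FP Q G) : fpN p (x * y) ≤ fpN p x + fpN p y := by
  obtain ⟨l, hl, hx⟩ := exists_RL x⁻¹
  obtain ⟨l', hl', rfl⟩ := exists_RL y
  have := fpN_dist hp hl hl'
  rw [hx, inv_inv] at this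
  rw [← fpN_inv hp x, ← hx, fpN_lp p hl, fpN_lp p hl']
  omega

theorem fpN_of (q : Q) (g : G) : fpN p (CoprodI.of (M := fun _ : Q => G) (i := q) g) = wlen p g := by
  by_cases hg : g = 1
  · subst hg
    have : fpN p (lp ([] : List (Σ _ : Q, G))) = 0 := by
      rw [fpN_lp p ⟨by simp, by simp⟩]; simp [ln]
    rw [map_one, wlen_one]
    exact this
  · have : fpN p (lp [(⟨q, g⟩ : Σ _ : Q, G)]) = wlen p g := by
      rw [fpN_lp p ⟨by simpa using hg, by simp⟩]; simp [ln]
    simpa [lp] using this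

theorem wlen_fpMark (hp : Surjective p) (x : FP Q G) : wlen (fpMark p) x = fpN p x := by
  have hq := fpMark_surj (Q := Q) hp
  have one : fpN p (1 : FP Q G) = 0 := by
    have : fpN p (lp ([] : List (Σ _ : Q, G))) = 0 := by
      rw [fpN_lp p ⟨by simp, by simp⟩]; simp [ln]
    exact this
  apply le_antisymm
  · have hof : ∀ (q : Q) (g : G), wlen (fpMark p) (CoprodI.of (M := fun _ : Q => G) (i := q) g) ≤
        wlen p g := by
      intro q g
      have := wlen_hom_le hp hq (CoprodI.of (M := fun _ : Q => G) (i := q)) 1 (fun i => by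
        have := wlen_of_le (p := fpMark (Q := Q) p) (q, i)
        simpa [fpMark] using this) g
      omega
    obtain ⟨l, hl, rfl⟩ := exists_RL x
    rw [fpN_lp p hl]
    clear hl
    induction l with
    | nil => rw [lp_nil, wlen_one]; omega
    | cons s l ih =>
      rw [lp_cons, ln_cons]
      have := wlen_mul hq (CoprodI.of (M := fun _ : Q => G) (i := s.1) s.2) (lp l)
      have := hof s.1 s.2
      omega
  · have := len_le_wlen hq (fpN p) 1 one (fpN_mul hp)
      (fun i => by
        have : fpMark (Q := Q) p (FreeGroup.of i) =
          CoprodI.of (M := fun _ : Q => G) (i := i.1) (p (FreeGroup.of i.2)) := by simp [fpMark]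
        rw [this, fpN_of]; exact wlen_of_le _)
      (fun i => by
        have : fpMark (Q := Q) p (FreeGroup.of i) =
          CoprodI.of (M := fun _ : Q => G) (i := i.1) (p (FreeGroup.of i.2)) := by simp [fpMark]
        rw [this, fpN_inv hp, fpN_of]; exact wlen_of_le _) x
    omega

theorem fp_hyp {δ : ℕ} (hp : Surjective p) (hm : (wmet p hp).Hyp δ) :
    (wmet (fpMark (Q := Q) p) (fpMark_surj hp)).Hyp δ := by
  intro x y z w
  obtain ⟨X, hX, eX⟩ := exists_RL (w⁻¹ * x)
  obtain ⟨Y, hY, eY⟩ := exists_RL (w⁻¹ * y)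
  obtain ⟨Z, hZ, eZ⟩ := exists_RL (w⁻¹ * z)
  have d1 := fpN_dist hp hX hY
  have d2 := fpN_dist hp hX hZ
  have d3 := fpN_dist hp hZ hY
  have n1 := fpN_lp p hX
  have n2 := fpN_lp p hY
  have n3 := fpN_lp p hZ
  rw [eX, eY] at d1
  rw [eX, eZ] at d2
  rw [eZ, eY] at d3
  rw [eX] at n1
  rw [eY] at n2
  rw [eZ] at n3
  have tr : ∀ a b : FP Q G, (w⁻¹ * a)⁻¹ * (w⁻¹ * b) = a⁻¹ * b := fun a b => by group
  rw [tr] at d1 d2 d3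
  have s1 := fpN_inv hp (w⁻¹ * x)
  have s2 := fpN_inv hp (w⁻¹ * y)
  have s3 := fpN_inv hp (w⁻¹ * z)
  have s4 := fpN_inv hp (z⁻¹ * y)
  simp only [mul_inv_rev, inv_inv] at s1 s2 s3 s4
  simp only [wmet, wlen_fpMark hp]
  rcases gp_hyp hp hm Z X Y with h | h <;> omega

/-- A conjugate of a nontrivial element of a factor lying in a factor: the conjugating element
belongs to the factor. -/
theorem fp_malnormal {q q' : Q} {x y : G} (hx : x ≠ 1) (n : FP Q G)
    (h : n * CoprodI.of (M := fun _ : Q => G) (i := q) x =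
      CoprodI.of (M := fun _ : Q => G) (i := q') y * n) :
    q = q' ∧ ∃ g, n = CoprodI.of (M := fun _ : Q => G) (i := q) g := by
  -- write `n` as the inverse of a reduced list not starting with `q`, times a syllable
  have ex : ∃ (l : List (Σ _ : Q, G)) (g : G), RL l ∧ (∀ s ∈ l.head?, s.1 ≠ q) ∧
      n = (lp l)⁻¹ * CoprodI.of (M := fun _ : Q => G) (i := q) g := by
    obtain ⟨l, hl, e⟩ := exists_RL n⁻¹
    have e' : n = (lp l)⁻¹ := by rw [e, inv_inv]
    cases l with
    | nil => exact ⟨[], 1, hl, by simp, by rw [e', map_one, mul_one]⟩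
    | cons s l =>
      by_cases hs : s.1 = q
      · refine ⟨l, s.2⁻¹, hl.tail, fun t ht => ?_, ?_⟩
        · rw [← hs]; exact ((List.isChain_cons.1 hl.2).1 t ht).symm
        · subst hs; rw [e', lp_cons, mul_inv_rev, map_inv]
      · exact ⟨s :: l, 1, hl, fun t ht => by simp at ht; rwa [← ht], by rw [e', map_one, mul_one]⟩
  obtain ⟨l, g, hl, hh, rfl⟩ := ex
  have hx' : g * x * g⁻¹ ≠ 1 := by simpa using hx
  have j := RL.join hl hl hx' hh hh
  have e : lp (linv l ++ ⟨q, g * x * g⁻¹⟩ :: l) = CoprodI.of (M := fun _ : Q => G) (i := q') y := by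
    rw [← mul_inv_eq_iff_eq_mul] at h
    rw [← h, lp_append, lp_linv, lp_cons, map_mul, map_mul, map_inv]
    group
  have hy : y ≠ 1 := by
    rintro rfl
    rw [map_one, ← lp_nil] at e
    have := j.unique ⟨by simp, by simp⟩ e
    simp at this
  have e2 : lp (linv l ++ ⟨q, g * x * g⁻¹⟩ :: l) = lp [⟨q', y⟩] := by rw [e]; simp [lp]
  have e3 := j.unique (l' := [⟨q', y⟩]) ⟨by simpa using hy, by simp⟩ e2
  have : l = [] := by
    have := congrArg List.length e3
    simp at this
    exact List.eq_nil_of_length_eq_zero (by omega)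
  subst this
  simp [linv] at e3
  refine ⟨e3.1, g, by simp [lp_nil]⟩

end FreeProd

/-! ### The induced action on a free product -/

section Induced
open Monoid

/-- The action of a semidirect product on its kernel: the kernel acts by left translations and
the complement by automorphisms. -/
instance sdAct {N B : Type} [Group N] [Group B] {θ : B →* MulAut N} :
    MulAction (N ⋊[θ] B) N where
  smul h x := h.left * θ h.right x
  one_smul x := by change (1 : N) * θ 1 x = x; simp
  mul_smul h k x := by
    change h.left * θ h.right k.left * θ (h.right * k.right) x = h.left * θ h.right (k.left * θ k.right x)
    simp [mul_assoc]

theorem sd_smul {N B : Type} [Group N] [Group B] {θ : B →* MulAut N} (h : N ⋊[θ] B) (x : N) :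
    h • x = h.left * θ h.right x := rfl

/-- The inclusion of a factor of the free product. -/
abbrev oq {Q G : Type} [Group G] (q : Q) : G →* FP Q G := CoprodI.of (M := fun _ : Q => G) (i := q)

variable {A B G : Type} [Group A] [Group B] [Group G] (φ : A →* MulAut G) (j : A →* B)

theorem exists_bet (b : B) : ∃ a : A, (b : B ⧸ j.range).out * j a = b := by
  obtain ⟨⟨_, a, rfl⟩, h⟩ := QuotientGroup.mk_out_eq_mul j.range b
  exact ⟨a⁻¹, by rw [h, map_inv, mul_inv_cancel_right]⟩

/-- The component in `A` of an element of `B` with respect to the chosen transversal. -/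
noncomputable def bet (b : B) : A := (exists_bet j b).choose

theorem bet_spec (b : B) : (b : B ⧸ j.range).out * j (bet j b) = b := (exists_bet j b).choose_spec

theorem mk_mul_j (b : B) (a : A) : ((b * j a : B) : B ⧸ j.range) = b :=
  QuotientGroup.mk_mul_of_mem b ⟨a, rfl⟩

variable {j}

theorem bet_mul (hj : Injective j) (b : B) (a : A) : bet j (b * j a) = bet j b * a := by
  apply hj
  have h := bet_spec j (b * j a)
  rw [mk_mul_j] at h
  rw [map_mul, ← mul_right_inj, h, ← mul_assoc, bet_spec]

theorem bet_out (hj : Injective j) (q : B ⧸ j.range) : bet j q.out = 1 := by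
  apply hj
  have h := bet_spec j q.out
  rw [QuotientGroup.out_eq'] at h
  simpa using h

variable (j)

/-- The embedding of `G` in the free product indexed by an element `b` of `B`: this is the
translate by `b` of the basic copy of `G`. -/
noncomputable def ia (b : B) : G →* FP (B ⧸ j.range) G :=
  (oq (b : B ⧸ j.range)).comp (φ (bet j b)).toMonoidHom

theorem ia_apply (b : B) (g : G) : ia φ j b g = oq (b : B ⧸ j.range) (φ (bet j b) g) := rfl

variable {j}

theorem ia_mul (hj : Injective j) (b : B) (a : A) (g : G) :
    ia φ j (b * j a) g = ia φ j b (φ a g) := by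
  rw [ia_apply, ia_apply, bet_mul hj, mk_mul_j]; simp

theorem ia_out (hj : Injective j) (q : B ⧸ j.range) (g : G) : ia φ j q.out g = oq q g := by
  rw [ia_apply, bet_out hj, QuotientGroup.out_eq']; simp

theorem ia_ext (hj : Injective j) {K : Type} [Monoid K] {f f' : FP (B ⧸ j.range) G →* K}
    (h : ∀ c g, f (ia φ j c g) = f' (ia φ j c g)) : f = f' := by
  apply CoprodI.ext_hom
  intro q
  ext g
  have := h q.out g
  rwa [ia_out φ hj] at this

variable (j)

/-- The endomorphism of the free product induced by an element of `B`. -/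
noncomputable def iact (b : B) : FP (B ⧸ j.range) G →* FP (B ⧸ j.range) G :=
  CoprodI.lift fun q => ia φ j (b * q.out)

variable {j}

theorem iact_ia (hj : Injective j) (b c : B) (g : G) :
    iact φ j b (ia φ j c g) = ia φ j (b * c) g := by
  rw [ia_apply, iact, CoprodI.lift_of, ← ia_mul φ hj, mul_assoc, bet_spec]

theorem iact_mul (hj : Injective j) (b c : B) : iact φ j (b * c) = (iact φ j b).comp (iact φ j c) := by
  apply ia_ext φ hj
  intro d g
  simp [iact_ia φ hj, mul_assoc]

theorem iact_one (hj : Injective j) : iact φ j 1 = MonoidHom.id _ := by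
  apply ia_ext φ hj
  intro d g
  simp [iact_ia φ hj]

/-- The action of `B` on the free product of copies of `G` induced from the action of `A`. -/
noncomputable def ith (hj : Injective j) : B →* MulAut (FP (B ⧸ j.range) G) where
  toFun b := MonoidHom.toMulEquiv (iact φ j b) (iact φ j b⁻¹)
    (by rw [← iact_mul φ hj, inv_mul_cancel, iact_one φ hj])
    (by rw [← iact_mul φ hj, mul_inv_cancel, iact_one φ hj])
  map_one' := by ext x; simp [iact_one φ hj]
  map_mul' b c := by ext x; simp [iact_mul φ hj]

theorem ith_ia (hj : Injective j) (b c : B) (g : G) : ith φ hj b (ia φ j c g) = ia φ j (b * c) g :=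
  iact_ia φ hj b c g

theorem ia_inj (b : B) : Injective (ia φ j b) := by
  intro x y h
  rw [ia_apply, ia_apply] at h
  exact (φ (bet j b)).injective (CoprodI.of_injective _ h)

theorem oq_eq_ia (b : B) (g : G) : oq (b : B ⧸ j.range) g = ia φ j b ((φ (bet j b))⁻¹ g) := by
  rw [ia_apply]; simp

variable {ι : Type} [DecidableEq ι] [DecidableEq B] (p : FreeGroup ι →* G) (j)

/-- The `B`-invariant marking of the free product. -/
noncomputable def imark : FreeGroup (B × ι) →* FP (B ⧸ j.range) G :=
  FreeGroup.lift fun s => ia φ j s.1 (p (FreeGroup.of s.2))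

theorem imark_of (b : B) (i : ι) :
    imark φ j p (FreeGroup.of (b, i)) = ia φ j b (p (FreeGroup.of i)) := by
  simp [imark]

variable {j p}

theorem imark_surj (hj : Injective j) (hp : Surjective p) : Surjective (imark φ j p) := by
  rw [← MonoidHom.range_eq_top, eq_top_iff]
  rintro x -
  induction x using CoprodI.induction_on with
  | one => exact one_mem _
  | of q g =>
    obtain ⟨v, rfl⟩ := hp g
    refine ⟨FreeGroup.map (fun i => (q.out, i)) v, ?_⟩
    have : (imark φ j p).comp (FreeGroup.map fun i => (q.out, i)) = (oq q).comp p := by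
      ext i; simp [imark, ia_out φ hj]
    exact DFunLike.congr_fun this v
  | mul x y hx hy => exact mul_mem hx hy

theorem wlen_ia_le (hj : Injective j) (hp : Surjective p) (b : B) (g : G) :
    wlen (imark φ j p) (ia φ j b g) ≤ wlen p g := by
  have := wlen_hom_le hp (imark_surj φ hj hp) (ia φ j b) 1 (fun i => by
    have := wlen_of_le (p := imark φ j p) (b, i)
    rwa [imark_of] at this) g
  omega

theorem wlen_ith (hj : Injective j) (hp : Surjective p) (b : B) (x : FP (B ⧸ j.range) G) :
    wlen (imark φ j p) (ith φ hj b x) = wlen (imark φ j p) x := by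
  have hq := imark_surj φ hj hp
  have key : ∀ b x, wlen (imark φ j p) (ith φ hj b x) ≤ wlen (imark φ j p) x := by
    intro b x
    have := wlen_hom_le hq hq (ith φ hj b).toMonoidHom 1 (fun s => by
      have := wlen_of_le (p := imark φ j p) (b * s.1, s.2)
      rw [imark_of] at this
      obtain ⟨c, i⟩ := s
      rw [imark_of]
      simpa [ith_ia] using this) x
    rw [one_mul] at this
    exact this
  apply le_antisymm (key b x)
  have := key b⁻¹ (ith φ hj b x)
  rwa [← MulAut.mul_apply, ← map_mul, inv_mul_cancel, map_one, MulAut.one_apply] at this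

variable [DecidableEq (B ⧸ j.range)]

theorem imark_le_fpMark (hj : Injective j) (hp : Surjective p) (x : FP (B ⧸ j.range) G) :
    wlen (imark φ j p) x ≤ wlen (fpMark p) x := by
  have := wlen_hom_le (fpMark_surj (Q := B ⧸ j.range) hp) (imark_surj φ hj hp) (MonoidHom.id _) 1
    (fun s => by
      have := wlen_ia_le φ hj hp s.1.out (p (FreeGroup.of s.2))
      rw [ia_out φ hj] at this
      have e : fpMark (Q := B ⧸ j.range) p (FreeGroup.of s) = oq s.1 (p (FreeGroup.of s.2)) := by
        simp [fpMark]
      rw [e]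
      exact this.trans (wlen_of_le _)) x
  rw [one_mul] at this
  exact this

theorem fpMark_le_imark [Finite B] [Finite ι] (hj : Injective j) (hp : Surjective p) :
    ∃ lam : ℕ, ∀ x : FP (B ⧸ j.range) G, wlen (fpMark p) x ≤ lam * wlen (imark φ j p) x := by
  obtain ⟨lam, hl⟩ := (Set.finite_range fun s : B × ι =>
    wlen (fpMark p) (imark φ j p (FreeGroup.of s))).bddAbove
  refine ⟨lam, fun x => ?_⟩
  exact wlen_hom_le (imark_surj φ hj hp) (fpMark_surj (Q := B ⧸ j.range) hp) (MonoidHom.id _) lam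
    (fun s => hl ⟨s, rfl⟩) x

theorem imark_hyp [Finite B] [Finite ι] {δ : ℕ} (hj : Injective j) (hp : Surjective p)
    (hm : (wmet p hp).Hyp δ) : ∃ δ', (wmet (imark φ j p) (imark_surj φ hj hp)).Hyp δ' := by
  obtain ⟨lam, hl⟩ := fpMark_le_imark φ hj hp
  obtain ⟨D, hD⟩ := GMet.guess δ lam
  refine ⟨D, (hD _ (wmet (fpMark (Q := B ⧸ j.range) p) (fpMark_surj hp)) _ (fp_hyp hp hm)
    (fun x y => imark_le_fpMark φ hj hp _) ?_).1⟩
  intro x y z hxy hz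
  have h1 := imark_le_fpMark φ hj hp (x⁻¹ * z)
  have h2 := hl (x⁻¹ * y)
  have h3 : lam * wlen (imark φ j p) (x⁻¹ * y) ≤ lam * 1 := Nat.mul_le_mul_left _ hxy
  unfold GMet.Btw at hz
  simp only [wmet] at hz hxy ⊢
  omega

/-- The word length of `G` is bounded in terms of its length in the free product. -/
theorem wlen_le_imark [Finite B] [Finite ι] (hj : Injective j) (hp : Surjective p) (b : B) :
    ∃ lam : ℕ, ∀ g, wlen p g ≤ lam * wlen (imark φ j p) (ia φ j b g) := by
  obtain ⟨l1, hl1⟩ := fpMark_le_imark φ hj hp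
  obtain ⟨l2, hl2⟩ := (Set.finite_range fun i : ι =>
    wlen p ((φ (bet j b))⁻¹ (p (FreeGroup.of i)))).bddAbove
  refine ⟨l2 * l1, fun g => ?_⟩
  have h1 := wlen_hom_le hp hp ((φ (bet j b))⁻¹).toMonoidHom l2 (fun i => hl2 ⟨i, rfl⟩)
    (φ (bet j b) g)
  have e : ((φ (bet j b))⁻¹).toMonoidHom (φ (bet j b) g) = g := (φ (bet j b)).symm_apply_apply g
  rw [e, ← fpN_of (p := p) (b : B ⧸ j.range) (φ (bet j b) g), ← wlen_fpMark hp] at h1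
  have h2 := hl1 (ia φ j b g)
  rw [mul_assoc]
  exact h1.trans (Nat.mul_le_mul_left l2 h2)

end Induced

/-! ### The semidirect product acting on the free product -/

section SemiAct
open Monoid

section General
variable {N B κ : Type} [Group N] [Group B] {θ : B →* MulAut N} [DecidableEq κ]
  {q : FreeGroup κ →* N}

theorem sd_one (h : N ⋊[θ] B) : h • (1 : N) = h.left := by rw [sd_smul, map_one, mul_one]

theorem inl_smul (n x : N) : (SemidirectProduct.inl n : N ⋊[θ] B) • x = n * x := by
  rw [sd_smul]; simp

theorem sd_inv (hq : Surjective q) (hinv : ∀ b x, wlen q (θ b x) = wlen q x) (h : N ⋊[θ] B)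
    (x y : N) : (wmet q hq).d (h • x) (h • y) = (wmet q hq).d x y := by
  have : (h • x)⁻¹ * (h • y) = θ h.right (x⁻¹ * y) := by
    rw [sd_smul, sd_smul, map_mul, map_inv]; group
  change wlen q ((h • x)⁻¹ * (h • y)) = wlen q (x⁻¹ * y)
  rw [this, hinv]

theorem sd_proper [Finite B] [Fintype κ] (hq : Surjective q) (n : ℕ) :
    {h : N ⋊[θ] B | (wmet q hq).d 1 (h • (1 : N)) ≤ n}.Finite := by
  have h1 := (wlen_ball_finite hq n).prod (Set.finite_univ (α := B))
  refine (h1.preimage (SemidirectProduct.equivProd (φ := θ)).injective.injOn).subset ?_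
  intro h hh
  have hh' : wlen q ((1 : N)⁻¹ * (h • (1 : N))) ≤ n := hh
  rw [sd_one, inv_one, one_mul] at hh'
  exact ⟨hh', trivial⟩

end General

variable {A B G : Type} [Group A] [Group B] [Group G] (φ : A →* MulAut G) {j : A →* B}

/-- The embedding of the small semidirect product in the large one. -/
noncomputable def incl (hj : Injective j) :
    G ⋊[φ] A →* FP (B ⧸ j.range) G ⋊[ith φ hj] B :=
  SemidirectProduct.map (ia φ j 1) j fun a => by
    ext g
    have h1 := ia_mul φ hj 1 a g
    have h2 := ith_ia φ hj (j a) 1 g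
    rw [mul_one] at h2
    rw [one_mul] at h1
    simp only [MonoidHom.comp_apply, MulEquiv.coe_toMonoidHom]
    rw [h2, h1]

theorem incl_inj (hj : Injective j) : Injective (incl φ hj) := by
  intro x y h
  have h1 : ia φ j 1 x.left = ia φ j 1 y.left := congrArg SemidirectProduct.left h
  have h2 : j x.right = j y.right := congrArg SemidirectProduct.right h
  exact SemidirectProduct.ext (ia_inj φ 1 h1) (hj h2)

theorem incl_inl (hj : Injective j) (g : G) :
    incl φ hj (SemidirectProduct.inl g) = SemidirectProduct.inl (ia φ j 1 g) := by
  simp [incl]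

theorem ia_eq {b c : B} {x y : G} (hx : x ≠ 1) (n : FP (B ⧸ j.range) G)
    (h : n * ia φ j b x = ia φ j c y * n) : (b : B ⧸ j.range) = c ∧ ∃ g, n = ia φ j b g := by
  classical
  rw [ia_apply, ia_apply] at h
  obtain ⟨e, g, hg⟩ := fp_malnormal (by simpa using hx) n h
  refine ⟨e, (φ (bet j b))⁻¹ g, ?_⟩
  rw [hg, ← oq_eq_ia]

/-- The elementary closure of an element of the basic factor lies in the small semidirect
product. -/
theorem elem_incl (hj : Injective j) {α : G} (hα : ∀ k : ℤ, k ≠ 0 → α ^ k ≠ 1)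
    {h : FP (B ⧸ j.range) G ⋊[ith φ hj] B}
    (hh : h ∈ elem (SemidirectProduct.inl (ia φ j 1 α) : FP (B ⧸ j.range) G ⋊[ith φ hj] B)) :
    ∃ x, h = incl φ hj x := by
  obtain ⟨p, q, hp, hq, e⟩ := hh
  have e1 := congrArg SemidirectProduct.left e
  rw [← map_zpow, ← map_zpow, ← map_zpow, ← map_zpow] at e1
  simp only [SemidirectProduct.mul_left, SemidirectProduct.left_inl, SemidirectProduct.right_inl,
    map_one, MulAut.one_apply, ith_ia, mul_one] at e1
  obtain ⟨e2, g, hg⟩ := ia_eq φ (hα p hp) _ e1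
  have e3 : h.right⁻¹ * 1 ∈ j.range := QuotientGroup.eq.1 e2
  rw [mul_one, inv_mem_iff] at e3
  obtain ⟨a, ha⟩ := e3
  refine ⟨⟨φ a g, a⟩, ?_⟩
  apply SemidirectProduct.ext
  · change h.left = ia φ j 1 (φ a g)
    rw [hg, ← ha, ← ia_mul φ hj, one_mul]
  · exact ha.symm

theorem ia_notMem_incl (hj : Injective j) {b : B} (hb : b ∉ j.range) {x : G} (hx : x ≠ 1)
    (y : G ⋊[φ] A) : SemidirectProduct.inl (ia φ j b x) ≠ incl φ hj y := by
  intro h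
  have e1 : ia φ j b x = ia φ j 1 y.left := congrArg SemidirectProduct.left h
  obtain ⟨e2, -⟩ := ia_eq φ (b := b) (c := 1) hx 1 (by rw [one_mul, mul_one]; exact e1)
  have e3 : b⁻¹ * 1 ∈ j.range := QuotientGroup.eq.1 e2
  rw [mul_one, inv_mem_iff] at e3
  exact hb e3

theorem incl_orbit (hj : Injective j)
    (hEG : EHset (SemidirectProduct.inl (φ := φ)).range = {1}) {x : G ⋊[φ] A}
    (hx : incl φ hj x ≠ 1) :
    ¬ (Set.range fun g : G => (SemidirectProduct.inl (ia φ j 1 g) :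
      FP (B ⧸ j.range) G ⋊[ith φ hj] B) * incl φ hj x *
        (SemidirectProduct.inl (ia φ j 1 g))⁻¹).Finite := by
  intro hfin
  have h1 : x ∈ EHset (SemidirectProduct.inl (φ := φ)).range := by
    have h2 := hfin.preimage (incl_inj φ hj).injOn
    refine h2.subset ?_
    rintro _ ⟨⟨_, g, rfl⟩, rfl⟩
    refine ⟨g, ?_⟩
    simp only [map_mul, map_inv, incl_inl]
  rw [hEG] at h1
  rw [show x = 1 from h1, map_one] at hx
  exact hx rfl

end SemiAct

/-! ### Hyperbolicity of the quotient -/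

section Quot
open GMet

variable {N B κ' : Type} [Group N] [Group B] {θ : B →* MulAut N} [DecidableEq κ']
  {q : FreeGroup κ' →* N} {hq : Surjective q} {𝕐 : Set (Set N)} {δ κ c L Λ : ℕ}
  {Γ : Subgroup (N ⋊[θ] B)} [Γ.Normal]

/-- The image of the kernel of the semidirect product in the quotient. -/
def qpi (Γ : Subgroup (N ⋊[θ] B)) [Γ.Normal] : N →* (N ⋊[θ] B) ⧸ Γ :=
  (QuotientGroup.mk' Γ).comp SemidirectProduct.inl

theorem qpi_one_iff (v : N) : qpi Γ v = 1 ↔ (SemidirectProduct.inl v : N ⋊[θ] B) ∈ Γ :=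
  QuotientGroup.eq_one_iff _

variable (R : Rot (N ⋊[θ] B) (wmet q hq) 𝕐 δ κ c L) (hΓ : Γ = rotGroup (N ⋊[θ] B) 𝕐)
  (hΓl : Γ ≤ (SemidirectProduct.inl : N →* N ⋊[θ] B).range)
include R hΓ hΓl

omit R hΓ in
/-- Elements of the rotation group act as left translations. -/
theorem qpi_smul {γ : N ⋊[θ] B} (hγ : γ ∈ Γ) (v : N) : qpi Γ (γ • v) = qpi Γ v := by
  obtain ⟨n, rfl⟩ := hΓl hγ
  rw [inl_smul, map_mul, (qpi_one_iff n).2 hγ, one_mul]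

theorem qd_zero {v : N} (h : qd (N ⋊[θ] B) (wmet q hq) 𝕐 1 v = 0) : qpi Γ v = 1 := by
  obtain ⟨γ, h1, h2⟩ := qd_att (H := N ⋊[θ] B) (m := wmet q hq) (𝕐 := 𝕐) 1 v
  rw [h] at h2
  have := ((wmet q hq).cone 𝕐).eq_of _ _ h2
  rw [← qpi_smul hΓl (hΓ ▸ h1) v, ← this, map_one]

omit hΓl in
theorem qd_mul_le (x y : N) : qd (N ⋊[θ] B) (wmet q hq) 𝕐 1 (x * y) ≤
    qd (N ⋊[θ] B) (wmet q hq) 𝕐 1 x + qd (N ⋊[θ] B) (wmet q hq) 𝕐 1 y := by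
  have h1 := R.qd_tri 1 x (x * y)
  have h2 := R.qd_inv (SemidirectProduct.inl x) 1 y
  rw [inl_smul, inl_smul, mul_one] at h2
  omega

omit hΓl in
theorem qd_left (x y : N) : qd (N ⋊[θ] B) (wmet q hq) 𝕐 1 (x⁻¹ * y) =
    qd (N ⋊[θ] B) (wmet q hq) 𝕐 x y := by
  have h2 := R.qd_inv (SemidirectProduct.inl x) 1 (x⁻¹ * y)
  rw [inl_smul, inl_smul, mul_one, mul_inv_cancel_left] at h2
  exact h2.symm

omit hΓl in
theorem qd_inv_eq (x : N) : qd (N ⋊[θ] B) (wmet q hq) 𝕐 1 x⁻¹ =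
    qd (N ⋊[θ] B) (wmet q hq) 𝕐 1 x := by
  have := qd_left R hΓ x 1
  rw [mul_one] at this
  rw [this, R.qd_symm]

/-- The distance in the quotient depends only on the image in the quotient. -/
theorem qd_congr {v w : N} (h : qpi Γ v = qpi Γ w) : qd (N ⋊[θ] B) (wmet q hq) 𝕐 1 v =
    qd (N ⋊[θ] B) (wmet q hq) 𝕐 1 w := by
  have key : ∀ v w : N, qpi Γ v = qpi Γ w → qd (N ⋊[θ] B) (wmet q hq) 𝕐 1 v ≤
      qd (N ⋊[θ] B) (wmet q hq) 𝕐 1 w := by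
    intro v w h
    have h1 : (SemidirectProduct.inl (v * w⁻¹) : N ⋊[θ] B) ∈ Γ := by
      rw [← qpi_one_iff, map_mul, map_inv, h, mul_inv_cancel]
    obtain ⟨γ, h2, h3⟩ := qd_att (H := N ⋊[θ] B) (m := wmet q hq) (𝕐 := 𝕐) 1 w
    rw [← h3]
    have h4 := qd_le (m := wmet q hq) (𝕐 := 𝕐) 1 v (mul_mem h2 (inv_mem (hΓ ▸ h1)))
    rw [mul_smul, ← map_inv, inl_smul] at h4
    simpa using h4
  exact le_antisymm (key v w h) (key w v h.symm)

theorem quot_fin [Finite B] [Fintype κ']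
    (hfin : ∃ S : Set N, S.Finite ∧ ∀ Y ∈ 𝕐, ∃ h : N ⋊[θ] B, ∀ y ∈ Y, ∃ γ ∈ Γ, ∃ x ∈ S,
      y = γ • h • x) :
    {x | ∃ v, x = qpi Γ v ∧ qd (N ⋊[θ] B) (wmet q hq) 𝕐 1 v ≤ 1}.Finite := by
  obtain ⟨S, hS, hY⟩ := hfin
  refine ((((wlen_ball_finite hq 1).image (qpi Γ))).union
    (((hS.prod hS).prod (Set.finite_univ (α := B))).image
      fun s : (N × N) × B => qpi Γ (θ s.2 (s.1.1⁻¹ * s.1.2)))).subset ?_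
  rintro _ ⟨v, rfl, hv⟩
  obtain ⟨γ, h1, h2⟩ := qd_att (H := N ⋊[θ] B) (m := wmet q hq) (𝕐 := 𝕐) 1 v
  rw [← h2] at hv
  rw [← qpi_smul hΓl (hΓ ▸ h1) v]
  rcases cone_edge hv with h3 | ⟨Y, h3, h4, h5⟩
  · left
    refine ⟨γ • v, ?_, rfl⟩
    have : wlen q ((1 : N)⁻¹ * (γ • v)) ≤ 1 := h3
    rwa [inv_one, one_mul] at this
  · right
    obtain ⟨h, hh⟩ := hY Y h3
    obtain ⟨γ₁, g1, x₁, k1, e1⟩ := hh _ h4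
    obtain ⟨γ₂, g2, x₂, k2, e2⟩ := hh _ h5
    refine ⟨((x₁, x₂), h.right), ⟨⟨k1, k2⟩, trivial⟩, ?_⟩
    rw [e2, qpi_smul hΓl g2]
    have e3 : qpi Γ (h • x₁) = 1 := by rw [← qpi_smul hΓl g1, ← e1, map_one]
    have e4 : θ h.right (x₁⁻¹ * x₂) = (h • x₁)⁻¹ * (h • x₂) := by
      rw [sd_smul, sd_smul, map_mul, map_inv]; group
    simp only [e4]
    rw [map_mul, map_inv, e3, inv_one, one_mul]

theorem quot_hyp [Finite B] [Fintype κ'] (hL : 22 * kθ δ κ c < L) (hΛ : 4 * kθ δ κ c ≤ Λ)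
    (hΛL : Λ + 14 * kθ δ κ c < L)
    (hfin : ∃ S : Set N, S.Finite ∧ ∀ Y ∈ 𝕐, ∃ h : N ⋊[θ] B, ∀ y ∈ Y, ∃ γ ∈ Γ, ∃ x ∈ S,
      y = γ • h • x) : HyperbolicGroup (qpi Γ).range := by
  classical
  set S : Set (qpi Γ).range := {x | ∃ v, x.1 = qpi Γ v ∧ qd (N ⋊[θ] B) (wmet q hq) 𝕐 1 v ≤ 1}
    with hS
  have fS : S.Finite := Set.Finite.subset ((quot_fin R hΓ hΓl hfin).preimage
    (f := fun x : (qpi Γ).range => x.1) Subtype.val_injective.injOn) fun x hx => hx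
  haveI : Fintype S := fS.fintype
  have ch : ∀ x : (qpi Γ).range, ∃ v, qpi Γ v = x.1 := fun x => x.2
  choose f hf using ch
  set len : (qpi Γ).range → ℕ := fun x => qd (N ⋊[θ] B) (wmet q hq) 𝕐 1 (f x) with hlen
  have len_of : ∀ (x : (qpi Γ).range) v, x.1 = qpi Γ v →
      len x = qd (N ⋊[θ] B) (wmet q hq) 𝕐 1 v := fun x v h =>
    qd_congr R hΓ hΓl ((hf x).trans h)
  have h0 : ∀ x, len x = 0 ↔ x = 1 := by
    intro x
    constructor
    · intro h
      have := qd_zero R hΓ hΓl h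
      rw [hf x] at this
      exact Subtype.ext this
    · rintro rfl
      rw [len_of 1 1 (by rw [map_one]; rfl)]
      have := qd_le (H := N ⋊[θ] B) (m := wmet q hq) (𝕐 := 𝕐) 1 1 (one_mem _)
      rw [one_smul, ((wmet q hq).cone 𝕐).d_self] at this
      omega
  have lmul : ∀ x y, len (x * y) ≤ len x + len y := by
    intro x y
    rw [len_of (x * y) (f x * f y) (by rw [map_mul, hf, hf]; rfl)]
    exact qd_mul_le R hΓ _ _
  have linv : ∀ x, len x⁻¹ = len x := by
    intro x
    rw [len_of x⁻¹ (f x)⁻¹ (by rw [map_inv, hf]; rfl)]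
    exact qd_inv_eq R hΓ _
  have lS : ∀ s : S, len s ≤ 1 := by
    rintro ⟨s, v, h1, h2⟩
    rw [len_of s v h1]; exact h2
  have step : ∀ x, x ≠ 1 → ∃ x' : (qpi Γ).range, ∃ s : S, len x' + 1 = len x ∧ x = x' * s := by
    intro x hx
    have hx0 : len x ≠ 0 := fun h => hx ((h0 x).1 h)
    obtain ⟨γ, h1, h2⟩ := qd_att (H := N ⋊[θ] B) (m := wmet q hq) (𝕐 := 𝕐) 1 (f x)
    obtain ⟨z, h3, h4⟩ := ((wmet q hq).cone 𝕐).geo 1 (γ • f x) (len x - 1) (by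
      rw [h2]; exact Nat.sub_le _ _)
    rw [h2] at h4
    have h4' : len x - 1 + ((wmet q hq).cone 𝕐).d z (γ • f x) = len x := h4
    have h5 : qd (N ⋊[θ] B) (wmet q hq) 𝕐 1 z ≤ len x - 1 := by
      have := qd_le (H := N ⋊[θ] B) (m := wmet q hq) (𝕐 := 𝕐) 1 z (one_mem _)
      rw [one_smul, h3] at this
      exact this
    have h6 : qd (N ⋊[θ] B) (wmet q hq) 𝕐 1 (z⁻¹ * (γ • f x)) ≤ 1 := by
      rw [qd_left R hΓ]
      have := qd_le (H := N ⋊[θ] B) (m := wmet q hq) (𝕐 := 𝕐) z (γ • f x) (one_mem _)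
      rw [one_smul] at this
      omega
    have e : x.1 = qpi Γ z * qpi Γ (z⁻¹ * (γ • f x)) := by
      rw [← map_mul, mul_inv_cancel_left, qpi_smul hΓl (hΓ ▸ h1), hf]
    refine ⟨⟨qpi Γ z, z, rfl⟩, ⟨⟨qpi Γ (z⁻¹ * (γ • f x)), _, rfl⟩, _, rfl, h6⟩, ?_, Subtype.ext e⟩
    have h7 : len x ≤ len ⟨qpi Γ z, z, rfl⟩ + 1 := by
      have := lmul ⟨qpi Γ z, z, rfl⟩ ⟨qpi Γ (z⁻¹ * (γ • f x)), _, rfl⟩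
      rw [show (⟨qpi Γ z, z, rfl⟩ * ⟨qpi Γ (z⁻¹ * (γ • f x)), _, rfl⟩ : (qpi Γ).range) = x from
        (Subtype.ext e).symm, len_of ⟨qpi Γ (z⁻¹ * (γ • f x)), _, rfl⟩ _ rfl] at this
      omega
    have h8 := len_of ⟨qpi Γ z, z, rfl⟩ z rfl
    omega
  set p : FreeGroup S →* (qpi Γ).range := FreeGroup.lift fun s => (s : (qpi Γ).range) with hp
  have pof : ∀ s, p (FreeGroup.of s) = s := fun s => by simp [hp]
  have hps : Surjective p := by
    intro x
    induction h : len x using Nat.strong_induction_on generalizing x with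
    | _ n ih =>
      by_cases hx : x = 1
      · exact ⟨1, by rw [hx, map_one]⟩
      · obtain ⟨x', s, h1, rfl⟩ := step x hx
        obtain ⟨w, rfl⟩ := ih _ (by omega) x' rfl
        exact ⟨w * FreeGroup.of s, by rw [map_mul, pof]⟩
  have wl : ∀ x, wlen p x = len x := by
    apply wlen_eq_of hps len h0
    · intro x s
      have := lmul x (p (FreeGroup.of s))
      have h2 := lS s
      rw [pof] at this ⊢
      omega
    · intro x s
      have := lmul x (p (FreeGroup.of s))⁻¹
      have h2 := lS s
      rw [pof] at this ⊢
      rw [linv] at this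
      omega
    · intro x hx
      obtain ⟨x', s, h1, h2⟩ := step x hx
      exact ⟨x', s, h1, Or.inl (by rw [pof]; exact h2)⟩
  refine ⟨S, inferInstance, inferInstance, p, kD δ κ, hps, by positivity, ?_⟩
  intro x y z w
  have wd : ∀ x y, wlen p (x⁻¹ * y) = qd (N ⋊[θ] B) (wmet q hq) 𝕐 (f x) (f y) := by
    intro x y
    rw [wl, len_of _ ((f x)⁻¹ * f y) (by rw [map_mul, map_inv, hf, hf]; rfl), qd_left R hΓ]
  rw [wd, wd, wd, wd, wd, wd]
  have := R.qd_hyp hL hΛ hΛL R.cone.guess.1 (f x) (f y) (f z) (f w)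
  have hD : (0 : ℝ) ≤ (kD δ κ : ℝ) := by positivity
  rcases this with h | h
  · have h' : (qd (N ⋊[θ] B) (wmet q hq) 𝕐 (f x) (f y) : ℝ) +
      qd (N ⋊[θ] B) (wmet q hq) 𝕐 (f z) (f w) ≤ qd (N ⋊[θ] B) (wmet q hq) 𝕐 (f x) (f z) +
      qd (N ⋊[θ] B) (wmet q hq) 𝕐 (f y) (f w) + kD δ κ := by exact_mod_cast h
    have := le_max_left ((qd (N ⋊[θ] B) (wmet q hq) 𝕐 (f x) (f z) : ℝ) +
      qd (N ⋊[θ] B) (wmet q hq) 𝕐 (f y) (f w)) (qd (N ⋊[θ] B) (wmet q hq) 𝕐 (f x) (f w) +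
      qd (N ⋊[θ] B) (wmet q hq) 𝕐 (f y) (f z))
    linarith
  · have h' : (qd (N ⋊[θ] B) (wmet q hq) 𝕐 (f x) (f y) : ℝ) +
      qd (N ⋊[θ] B) (wmet q hq) 𝕐 (f z) (f w) ≤ qd (N ⋊[θ] B) (wmet q hq) 𝕐 (f x) (f w) +
      qd (N ⋊[θ] B) (wmet q hq) 𝕐 (f y) (f z) + kD δ κ := by exact_mod_cast h
    have := le_max_right ((qd (N ⋊[θ] B) (wmet q hq) 𝕐 (f x) (f z) : ℝ) +
      qd (N ⋊[θ] B) (wmet q hq) 𝕐 (f y) (f w)) (qd (N ⋊[θ] B) (wmet q hq) 𝕐 (f x) (f w) +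
      qd (N ⋊[θ] B) (wmet q hq) 𝕐 (f y) (f z))
    linarith

end Quot

/-! ### Conjugation in the quotient -/

section Conj

variable {N B : Type} [Group N] [Group B] {θ : B →* MulAut N}
  {Γ : Subgroup (N ⋊[θ] B)} [Γ.Normal]

instance qpi_range_normal : (qpi Γ).range.Normal := by
  refine ⟨?_⟩
  rintro _ ⟨v, rfl⟩ g
  induction g using QuotientGroup.induction_on with
  | H h =>
    refine ⟨h.left * θ h.right v * h.left⁻¹, ?_⟩
    change ((SemidirectProduct.inl _ : N ⋊[θ] B) : (N ⋊[θ] B) ⧸ Γ) =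
      ((h * SemidirectProduct.inl v * h⁻¹ : N ⋊[θ] B) : (N ⋊[θ] B) ⧸ Γ)
    congr 1
    apply SemidirectProduct.ext
    · simp [mul_assoc]
    · simp

/-- The action of `B` on the image of the kernel of the semidirect product. -/
noncomputable def qpsi (Γ : Subgroup (N ⋊[θ] B)) [Γ.Normal] : B →* MulAut (qpi Γ).range :=
  MulAut.conjNormal.comp ((QuotientGroup.mk' Γ).comp SemidirectProduct.inr)

theorem qpsi_coe (b : B) (x : (qpi Γ).range) : ((qpsi Γ b x : (qpi Γ).range) : (N ⋊[θ] B) ⧸ Γ) =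
    QuotientGroup.mk' Γ (SemidirectProduct.inr b) * x *
      (QuotientGroup.mk' Γ (SemidirectProduct.inr b))⁻¹ := by
  simp [qpsi, MulAut.conjNormal_apply]

variable (hΓl : Γ ≤ (SemidirectProduct.inl : N →* N ⋊[θ] B).range)
include hΓl

theorem eq_one_of_mul {x : (qpi Γ).range} {b : B}
    (h : (x : (N ⋊[θ] B) ⧸ Γ) * QuotientGroup.mk' Γ (SemidirectProduct.inr b) = 1) : b = 1 := by
  obtain ⟨_, v, rfl⟩ := x
  have h1 : (SemidirectProduct.inl v * SemidirectProduct.inr b : N ⋊[θ] B) ∈ Γ :=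
    (QuotientGroup.eq_one_iff _).1 h
  obtain ⟨n, hn⟩ := hΓl h1
  have := congrArg SemidirectProduct.right hn
  simpa using this.symm

variable (hE : ∀ h : (N ⋊[θ] B) ⧸ Γ, (Set.range fun g : (qpi Γ).range =>
  (g : (N ⋊[θ] B) ⧸ Γ) * h * (g : (N ⋊[θ] B) ⧸ Γ)⁻¹).Finite → h = 1)
include hE

theorem quot_EH : EHset (SemidirectProduct.inl (φ := qpsi Γ)).range = {1} := by
  apply Set.eq_singleton_iff_unique_mem.2
  constructor
  · refine (Set.finite_singleton 1).subset ?_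
    rintro _ ⟨g, rfl⟩
    simp
  · intro e he
    set Φ : (qpi Γ).range ⋊[qpsi Γ] B →* (N ⋊[θ] B) ⧸ Γ := SemidirectProduct.lift
      (qpi Γ).range.subtype ((QuotientGroup.mk' Γ).comp SemidirectProduct.inr) (by
        intro b
        ext x
        simp [qpsi_coe]) with hΦ
    have h1 : Φ e = 1 := by
      apply hE
      refine (he.image Φ).subset ?_
      rintro _ ⟨g, rfl⟩
      refine ⟨_, ⟨⟨SemidirectProduct.inl g, g, rfl⟩, rfl⟩, ?_⟩
      simp [hΦ]
    have h2 : (e.left : (N ⋊[θ] B) ⧸ Γ) * QuotientGroup.mk' Γ (SemidirectProduct.inr e.right) = 1 :=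
      h1
    have h3 := eq_one_of_mul hΓl h2
    rw [h3, map_one, map_one, mul_one] at h2
    exact SemidirectProduct.ext (Subtype.ext h2) h3

theorem quot_out : Injective fun b : B => (QuotientGroup.mk (qpsi Γ b) : OutAut (qpi Γ).range) := by
  intro b b' h
  obtain ⟨g, hg⟩ := QuotientGroup.eq.1 h
  rw [← map_inv, ← map_mul] at hg
  have h1 : ((g⁻¹ : (qpi Γ).range) : (N ⋊[θ] B) ⧸ Γ) *
      QuotientGroup.mk' Γ (SemidirectProduct.inr (b⁻¹ * b')) = 1 := by
    apply hE
    refine (Set.finite_singleton (((g⁻¹ : (qpi Γ).range) : (N ⋊[θ] B) ⧸ Γ) *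
      QuotientGroup.mk' Γ (SemidirectProduct.inr (b⁻¹ * b')))).subset ?_
    rintro _ ⟨x, rfl⟩
    have h2 := qpsi_coe (b⁻¹ * b') x
    rw [← hg, MulAut.conj_apply] at h2
    simp only [Subgroup.coe_mul, InvMemClass.coe_inv] at h2
    rw [Set.mem_singleton_iff]
    simp only [InvMemClass.coe_inv]
    generalize QuotientGroup.mk' Γ (SemidirectProduct.inr (b⁻¹ * b')) = m at h2
    calc (x : (N ⋊[θ] B) ⧸ Γ) * ((g : (N ⋊[θ] B) ⧸ Γ)⁻¹ * m) * (x : (N ⋊[θ] B) ⧸ Γ)⁻¹ =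
        (g : (N ⋊[θ] B) ⧸ Γ)⁻¹ * (g * x * (g : (N ⋊[θ] B) ⧸ Γ)⁻¹) * m *
          (x : (N ⋊[θ] B) ⧸ Γ)⁻¹ := by group
      _ = _ := by rw [h2]; group
  have h2 := eq_one_of_mul hΓl h1
  exact inv_mul_eq_one.1 h2

theorem quot_not_vc (hnt : Nontrivial (qpi Γ).range) : ¬ VirtuallyCyclic (qpi Γ).range := by
  rintro ⟨C, hC, hfi⟩
  have hC1 : C = ⊥ := by
    rw [eq_bot_iff]
    intro c hc
    have h1 : (c : (N ⋊[θ] B) ⧸ Γ) = 1 := by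
      apply hE
      have : Finite ((qpi Γ).range ⧸ C) := Subgroup.finite_quotient_of_finiteIndex
      refine (Set.finite_range fun x : (qpi Γ).range ⧸ C => (x.out : (N ⋊[θ] B) ⧸ Γ) * c *
        (x.out : (N ⋊[θ] B) ⧸ Γ)⁻¹).subset ?_
      rintro _ ⟨x, rfl⟩
      refine ⟨x, ?_⟩
      obtain ⟨d, hd⟩ := QuotientGroup.mk_out_eq_mul C x
      dsimp only
      rw [hd]
      have h2 : (⟨c, hc⟩ : C) * d = d * ⟨c, hc⟩ := hC.isMulCommutative.is_comm.comm _ _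
      have h3 : (c : (N ⋊[θ] B) ⧸ Γ) * d.1 = d.1 * c := by
        have := congrArg (fun z : C => ((z : (qpi Γ).range) : (N ⋊[θ] B) ⧸ Γ)) h2
        simpa using this
      simp only [Subgroup.coe_mul, mul_inv_rev]
      rw [mul_assoc (x : (N ⋊[θ] B) ⧸ Γ), ← h3]
      group
    exact Subtype.ext h1
  subst hC1
  have : Finite (qpi Γ).range := by
    have : Finite ((qpi Γ).range ⧸ (⊥ : Subgroup (qpi Γ).range)) :=
      Subgroup.finite_quotient_of_finiteIndex
    exact Finite.of_injective (fun x => (x : (qpi Γ).range ⧸ (⊥ : Subgroup (qpi Γ).range)))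
      fun x y h => by simpa [QuotientGroup.eq, inv_mul_eq_one] using h
  obtain ⟨x, hx⟩ := exists_ne (1 : (qpi Γ).range)
  exact hx (Subtype.ext (hE _ (Set.finite_range _)))

end Conj

/-! ### The relators in the semidirect product -/

section SemiRel
open GMet
open scoped Pointwise

theorem rel_split {H : Type} [Group H] {a g t : H} (K : Subgroup H) (ha : a ∈ K) (hg : g ∈ K)
    {s : ℕ} (hs : 0 < s) (M i : ℕ) : ∃ u ∈ K, rel a g t s M i = u * t := by
  have key : ∀ k : ℕ, k + 1 ≤ s → rpre a g t s M i k ∈ K := by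
    intro k
    induction k with
    | zero => intro _; exact one_mem _
    | succ k ih =>
      intro hk
      have e : rcor g t s (k : ℤ) = g := by
        have e1 : (k : ℤ) % s = k := Int.emod_eq_of_lt (by omega) (by omega)
        rw [rcor, e1, if_neg (by omega)]
      rw [rpre, e]
      exact mul_mem (mul_mem (ih (by omega)) (zpow_mem ha _)) hg
  obtain ⟨k, rfl⟩ : ∃ k, s = k + 1 := ⟨s - 1, by omega⟩
  refine ⟨_, mul_mem (key k le_rfl) (zpow_mem ha (rexp (k + 1) M i k : ℤ)), ?_⟩
  have e : rcor g t (k + 1) (k : ℤ) = t := by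
    have e1 : (k : ℤ) % (k + 1 : ℕ) = k := Int.emod_eq_of_lt (by omega) (by omega)
    rw [rcor, e1, if_pos (by push_cast; ring)]
  rw [rel, rpre, e]

variable {N B : Type} [Group N] [Group B] {θ : B →* MulAut N} {o : N} {a g : N ⋊[θ] B} {n : ℕ}
  {t : Fin n → N ⋊[θ] B} {s M : ℕ}

theorem rel_mem_rot (hs : 0 < s) (i : Fin n) :
    rel a g (t i) s M i ∈ rotGroup (N ⋊[θ] B) (rfam o a g t s M) := by
  refine rot_mem (𝕐 := rfam o a g t s M) (Y := rset o a g (t i) s M i)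
    (show ∃ (h : N ⋊[θ] B) (i' : Fin n), h • rset o a g (t i') s M i' = _ from
      ⟨1, i, one_smul _ _⟩) ?_
  have := rset_zpow (o := o) (a := a) (g := g) (t i) hs M i 1
  rwa [zpow_one] at this

theorem rot_le_inl (hs : 0 < s) (ha : a.right = 1) (hg : g.right = 1) (ht : ∀ i, (t i).right = 1)
    (hst : ∀ i : Fin n, ∀ x ∈ MulAction.stabilizer (N ⋊[θ] B) (rset o a g (t i) s M i),
      ∃ l : ℤ, x = rel a g (t i) s M i ^ l) :
    rotGroup (N ⋊[θ] B) (rfam o a g t s M) ≤ (SemidirectProduct.inl : N →* N ⋊[θ] B).range := by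
  rw [SemidirectProduct.range_inl_eq_ker_rightHom]
  refine (Subgroup.closure_le _).2 ?_
  rintro x ⟨_, ⟨h, i, rfl⟩, hx⟩
  have h1 : h⁻¹ * x * h ∈ MulAction.stabilizer (N ⋊[θ] B) (rset o a g (t i) s M i) := by
    rw [MulAction.mem_stabilizer_iff] at hx ⊢
    rw [mul_smul, mul_smul, hx, inv_smul_smul]
  obtain ⟨l, hl⟩ := hst i _ h1
  obtain ⟨u, hu, hr⟩ := rel_split (t := t i) (SemidirectProduct.rightHom (φ := θ)).ker
    (show a ∈ _ from ha) (show g ∈ _ from hg) hs M i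
  have h2 : h⁻¹ * x * h ∈ (SemidirectProduct.rightHom (φ := θ)).ker := by
    rw [hl, hr]
    exact zpow_mem (mul_mem hu (show t i ∈ _ from ht i)) _
  have h3 := (SemidirectProduct.rightHom (φ := θ)).normal_ker.conj_mem _ h2 h
  have e : h * (h⁻¹ * x * h) * h⁻¹ = x := by group
  rwa [e] at h3

theorem rfam_fin (hs : 0 < s) (hn : (rotGroup (N ⋊[θ] B) (rfam o a g t s M)).Normal) :
    ∃ S : Set N, S.Finite ∧ ∀ Y ∈ rfam o a g t s M, ∃ h : N ⋊[θ] B, ∀ y ∈ Y,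
      ∃ γ ∈ rotGroup (N ⋊[θ] B) (rfam o a g t s M), ∃ x ∈ S, y = γ • h • x := by
  choose S hS hS' using fun i : Fin n => rset_fin o a g (t i) hs M i
  refine ⟨⋃ i, S i, Set.finite_iUnion hS, ?_⟩
  rintro _ ⟨h, i, rfl⟩
  refine ⟨h, ?_⟩
  rintro _ ⟨z, hz, rfl⟩
  obtain ⟨l, x, hx, rfl⟩ := hS' i z hz
  refine ⟨_, hn.conj_mem _ (zpow_mem (rel_mem_rot hs i) l) h, x, Set.mem_iUnion.2 ⟨i, hx⟩, ?_⟩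
  change h • rel a g (t i) s M i ^ l • x = _
  rw [← mul_smul, ← mul_smul, inv_mul_cancel_right]

/-- An element with finite orbit under conjugation moves the points of an orbit by a bounded
amount in the quotient. -/
theorem qd_orbit {m : GMet N} {𝕐 : Set (Set N)} {δ κ c L : ℕ} (R : Rot (N ⋊[θ] B) m 𝕐 δ κ c L)
    {Γ : Subgroup (N ⋊[θ] B)} [Γ.Normal] (hΓ : Γ = rotGroup (N ⋊[θ] B) 𝕐) (h : N ⋊[θ] B)
    (hf : (Set.range fun g : (qpi Γ).range => (g : (N ⋊[θ] B) ⧸ Γ) * h *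
      (g : (N ⋊[θ] B) ⧸ Γ)⁻¹).Finite) :
    ∃ C', ∀ v : N, qd (N ⋊[θ] B) m 𝕐 ((SemidirectProduct.inl v : N ⋊[θ] B) • (1 : N))
      (h • (SemidirectProduct.inl v : N ⋊[θ] B) • (1 : N)) ≤ C' := by
  obtain ⟨C', hC'⟩ := (hf.image fun u => qd (N ⋊[θ] B) m 𝕐 1 (u.out • (1 : N))).bddAbove
  refine ⟨C', fun v => ?_⟩
  set f : N ⋊[θ] B := SemidirectProduct.inl v with hfdef
  have h1 : qd (N ⋊[θ] B) m 𝕐 (f • (1 : N)) (h • f • (1 : N)) =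
      qd (N ⋊[θ] B) m 𝕐 1 ((f⁻¹ * h * f) • (1 : N)) := by
    rw [← R.qd_inv f⁻¹, inv_smul_smul, mul_smul, mul_smul]
  have h2 : qd (N ⋊[θ] B) m 𝕐 1 ((f⁻¹ * h * f) • (1 : N)) ≤ qd (N ⋊[θ] B) m 𝕐 1
      (((f⁻¹ * h * f : N ⋊[θ] B) : (N ⋊[θ] B) ⧸ Γ).out • (1 : N)) := by
    obtain ⟨γ, hγ⟩ := QuotientGroup.mk_out_eq_mul Γ (f⁻¹ * h * f)
    rw [hγ]
    have hγ' : f⁻¹ * h * f * γ * (f⁻¹ * h * f)⁻¹ ∈ rotGroup (N ⋊[θ] B) 𝕐 :=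
      hΓ ▸ Subgroup.Normal.conj_mem ‹_› _ γ.2 _
    have h3 := R.qd_tri 1 ((f⁻¹ * h * f * γ : N ⋊[θ] B) • (1 : N)) ((f⁻¹ * h * f) • (1 : N))
    have h4 := qd_le (m := m) ((f⁻¹ * h * f * γ : N ⋊[θ] B) • (1 : N))
      ((f⁻¹ * h * f) • (1 : N)) hγ'
    rw [← mul_smul, inv_mul_cancel_right, (m.cone 𝕐).d_self] at h4
    omega
  rw [h1]
  refine h2.trans (hC' ⟨_, ⟨⟨qpi Γ v⁻¹, v⁻¹, rfl⟩, rfl⟩, ?_⟩)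
  have e : ((f⁻¹ * h * f : N ⋊[θ] B) : (N ⋊[θ] B) ⧸ Γ) =
      (qpi Γ v⁻¹) * (h : (N ⋊[θ] B) ⧸ Γ) * (qpi Γ v⁻¹)⁻¹ := by
    rw [map_inv, inv_inv]
    rfl
  rw [e]

end SemiRel

/-! ### The quotient as a quotient of `G` -/

section Assembly
open GMet

variable {A B G : Type} [Group A] [Group B] [Group G] {φ : A →* MulAut G} {j : A →* B}
  {ι : Type} {p : FreeGroup ι →* G}

/-- If every generator `ia b s` of the free product with `b ∉ j(A)` becomes equal, modulo `Γ`, to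
an element of the copy `ia 1 G`, then that copy surjects onto the quotient: generators with
`b = j a` already lie in it. -/
lemma quot_surj (hj : Injective j) (hp : Surjective p)
    (Γ : Subgroup (FP (B ⧸ j.range) G ⋊[ith φ hj] B)) [Γ.Normal]
    (hT : ∀ b i, b ∉ j.range → p (FreeGroup.of i) ≠ 1 →
      ∃ u, qpi Γ (ia φ j b (p (FreeGroup.of i))) = qpi Γ (ia φ j 1 u)) :
    Surjective ((qpi Γ).rangeRestrict.comp (ia φ j 1)) := by
  classical
  rintro ⟨_, x, rfl⟩
  suffices h : x ∈ (((qpi Γ).comp (ia φ j 1)).range.comap (qpi Γ)) by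
    obtain ⟨u, hu⟩ := h
    exact ⟨u, Subtype.ext hu⟩
  obtain ⟨w, rfl⟩ := imark_surj φ hj hp x
  induction w using FreeGroup.induction_on with
  | C1 => simp
  | mul x y hx hy => rw [map_mul]; exact mul_mem hx hy
  | inv_of s hs => rw [map_inv]; exact inv_mem hs
  | of s =>
    obtain ⟨b, i⟩ := s
    rw [imark_of]
    by_cases hb : b ∈ j.range
    · obtain ⟨a, rfl⟩ := hb
      refine ⟨φ a (p (FreeGroup.of i)), ?_⟩
      have := ia_mul φ hj 1 a (p (FreeGroup.of i))
      rw [one_mul] at this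
      simp [this]
    · by_cases h1 : p (FreeGroup.of i) = 1
      · rw [h1]; simp
      · obtain ⟨u, hu⟩ := hT b i hb h1
        exact ⟨u, hu.symm⟩

end Assembly

open GMet in
/-- Proposition 5.2: extension of a faithful outer action of a finite
group `A` on a non-elementary hyperbolic group `G` to a faithful outer action of a
larger finite group `B` on a quotient `Ḡ` of `G`, with prescribed injectivity radius. -/
theorem embedding_larger_finite_group (G : Type) [Group G]
    {ι : Type} [Fintype ι] [DecidableEq ι] (p : FreeGroup ι →* G)
    (hp : Function.Surjective p) (δG : ℝ) (hδ : 0 ≤ δG)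
    (hhypG : MarkedHyperbolic p δG) (hne : ¬ VirtuallyCyclic G)
    (A : Type) [Group A] [Finite A] (φ : A →* MulAut G)
    (hout : Function.Injective fun a : A => (QuotientGroup.mk (φ a) : OutAut G))
    (hEG : EHset (SemidirectProduct.inl (φ := φ)).range = {1})
    (B : Type) [Group B] [Finite B] (j : A →* B) (hj : Function.Injective j)
    (r : ℕ) :
    ∃ (Gb : Type) (_ : Group Gb) (pr : G →* Gb),
      Function.Surjective pr ∧ HyperbolicGroup Gb ∧ ¬ VirtuallyCyclic Gb ∧
      ∃ ψ : B →* MulAut Gb,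
        (∀ c x y : G, wlen p (c⁻¹ * x) ≤ r → wlen p (c⁻¹ * y) ≤ r →
          pr x = pr y → x = y) ∧
        (∀ a : A, pr.comp (φ a).toMonoidHom = (ψ (j a)).toMonoidHom.comp pr) ∧
        (Function.Injective fun b : B => (QuotientGroup.mk (ψ b) : OutAut Gb)) ∧
        EHset (SemidirectProduct.inl (φ := ψ)).range = {1} := by
  classical
  cases nonempty_fintype B
  have hvc : ∀ x : G, ¬ (Subgroup.zpowers x).FiniteIndex :=
    fun x hx => hne ⟨_, inferInstance, hx⟩
  have : Infinite G := by
    by_contra h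
    have := not_infinite_iff_finite.mp h
    exact hvc 1 inferInstance
  -- the free product, its marking, and the action of the semidirect product
  obtain ⟨δ, hyp⟩ := imark_hyp φ hj hp (wmet_hyp hp hhypG)
  have inv := sd_inv (imark_surj φ hj hp) (wlen_ith φ hj hp)
  have proper := sd_proper (θ := ith φ hj) (imark_surj φ hj hp)
  -- a loxodromic element of `G` with controlled elementary closure
  obtain ⟨α₀, hα₀⟩ := exists_lox hp hhypG
  obtain ⟨lam, hlam⟩ := wlen_le_imark φ hj hp (1 : B)
  set J : G →* FP (B ⧸ j.range) G ⋊[ith φ hj] B :=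
    (SemidirectProduct.inl).comp (ia φ j 1) with hJ
  have hJi : Injective J := SemidirectProduct.inl_injective.comp (ia_inj φ 1)
  have hJo : ∀ x, J x • (1 : FP (B ⧸ j.range) G) = ia φ j 1 x := fun x => by
    rw [sd_one]; simp [J]
  have hd : ∀ x, (wmet (imark φ j p) (imark_surj φ hj hp)).d 1 (J x • 1) =
      wlen (imark φ j p) (ia φ j 1 x) := fun x => by
    rw [hJo]; change wlen _ (1⁻¹ * _) = _; simp
  obtain ⟨N, hN, X⟩ := exists_LoxC (a := J α₀) hyp inv proper (lam := lam) (o := 1) (fun k => by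
    rw [← map_pow, hd]
    exact (hα₀ k).trans (hlam _))
  rw [← map_pow] at X
  set α := α₀ ^ N with hα
  have hαk : ∀ k : ℤ, k ≠ 0 → α ^ k ≠ 1 := by
    have h0 : ∀ k : ℕ, k ≠ 0 → α ^ k ≠ 1 := by
      intro k hk h
      have := hα₀ (N * k)
      rw [pow_mul, ← hα, h, wlen_one] at this
      have := Nat.mul_pos hN (Nat.pos_of_ne_zero hk)
      omega
    intro k hk
    obtain ⟨n, rfl | rfl⟩ := k.eq_nat_or_neg
    · rw [zpow_natCast]; exact h0 n (by omega)
    · rw [zpow_neg, zpow_natCast, Ne, inv_eq_one]; exact h0 n (by omega)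
  have hel : ∀ {h}, h ∈ elem (J α) → ∃ x, h = incl φ hj x := fun hh => elem_incl φ hj hαk hh
  obtain ⟨g, hge, hg⟩ := X.exists_g J rfl (hvc α) hJi (by
    intro e he1 he
    obtain ⟨x, rfl⟩ := hel he
    exact incl_orbit φ hj hEG he1)
  -- the generators that have to be absorbed into the copy `ia 1 G`
  let T := {s : B × ι // s.1 ∉ j.range ∧ p (FreeGroup.of s.2) ≠ 1}
  let E := Fintype.equivFin T
  let t : Fin (Fintype.card T) → FP (B ⧸ j.range) G ⋊[ith φ hj] B := fun k =>
    SemidirectProduct.inl (ia φ j (E.symm k).1.1 (p (FreeGroup.of (E.symm k).1.2)))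
  have ht : ∀ k, t k ∉ elem (J α) := by
    intro k hk
    obtain ⟨x, hx⟩ := hel hk
    exact ia_notMem_incl φ hj (E.symm k).2.1 (E.symm k).2.2 x hx
  obtain ⟨D, C, Y⟩ := exists_Crn X (insert (J g) (range t)) ((finite_range t).insert _) (by
    rintro c (rfl | ⟨k, rfl⟩)
    · exact hge
    · exact ht k)
  -- small cancellation relators `u k = t k`, with pieces short compared with `r`
  set κ := 2 * C + 9 * δ + 7 * D with hκ
  set ρ := 2 * r + 2 with hρ
  obtain ⟨s, M, c, L, hs, R, hQ, hst, hOv⟩ :=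
    Y.relRot hg (kθ δ κ 1 * (40 + 2 * D + 8 * k1 δ κ + ρ) + 1)
  set K := kθ δ κ c with hK
  have hK1 : 1 ≤ K := by simp only [hK, kθ]; omega
  set W := 2 * D + 8 * k1 δ κ + ρ with hW
  have hLK : K * (40 + W) < L := by
    have h1 : K ≤ kθ δ κ 1 * (c + 1) := kθ_le δ κ c
    have h2 : K * (40 + W) ≤ kθ δ κ 1 * (c + 1) * (40 + W) := Nat.mul_le_mul_right _ h1
    have h3 : (kθ δ κ 1 * (40 + 2 * D + 8 * k1 δ κ + ρ) + 1) * (c + 1) =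
      kθ δ κ 1 * (c + 1) * (40 + W) + (c + 1) := by rw [hW]; ring
    omega
  set Λ := K * (16 + W) with hΛ
  have e1 : K * (40 + W) = 40 * K + K * W := by ring
  have e2 : Λ = 16 * K + K * W := by rw [hΛ]; ring
  have e3 : K * W = 2 * (K * D) + 8 * (K * k1 δ κ) + K * ρ := by rw [hW]; ring
  have hL22 : 22 * K < L := by omega
  have hΛL : Λ + 14 * K < L := by omega
  have h4 : 4 * K ≤ Λ := by omega
  have h5 : 2 * (2 * (K + 2 * k1 δ κ) + K * (D + 1)) + 2 * K ≤ Λ := by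
    have : k1 δ κ ≤ K * k1 δ κ := Nat.le_mul_of_pos_left _ hK1
    have e4 : K * (D + 1) = K * D + K := by ring
    omega
  have hn := R.normal
  have hin := rot_le_inl (o := (1 : FP (B ⧸ j.range) G)) (M := M) hs
    (a := J α) (g := J g) (t := t) (by simp [J]) (by simp [J]) (by simp [t]) hst
  have hfin := rfam_fin hs hn
  set 𝕐 := rfam (1 : FP (B ⧸ j.range) G) (J α) (J g) t s M with h𝕐
  generalize hΓ : rotGroup (FP (B ⧸ j.range) G ⋊[ith φ hj] B) 𝕐 = Γ at hn hin hfin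
  -- short elements of `G` survive
  have claim : ∀ z : G, wlen p z ≤ 2 * r + 1 → qpi Γ (ia φ j 1 z) = 1 → z = 1 := by
    intro z hz h1
    by_contra hz1
    rw [qpi_one_iff, ← hΓ] at h1
    have := R.red_far (R.red hL22 hΛL 1 _ h1) (fun h => hz1 (hJi (h.trans (map_one J).symm)))
    have h2 := hd z
    have h3 := wlen_ia_le φ hj hp 1 z
    change Λ < K * ((wmet (imark φ j p) (imark_surj φ hj hp)).d 1 (J z • 1) + 1) at this
    have h6 : K * ((wmet (imark φ j p) (imark_surj φ hj hp)).d 1 (J z • 1) + 1) ≤ K * ρ :=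
      Nat.mul_le_mul_left _ (by omega)
    omega
  -- an element of the large quotient centralised by a finite index subgroup of `N / Γ` is trivial
  have hE : ∀ h : (FP (B ⧸ j.range) G ⋊[ith φ hj] B) ⧸ Γ,
      (range fun g : (qpi Γ).range => (g : (FP (B ⧸ j.range) G ⋊[ith φ hj] B) ⧸ Γ) * h *
        (g : (FP (B ⧸ j.range) G ⋊[ith φ hj] B) ⧸ Γ)⁻¹).Finite → h = 1 := by
    intro h hf
    induction h using QuotientGroup.induction_on with
    | H h =>
    obtain ⟨C', hC'⟩ := qd_orbit R hΓ.symm h hf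
    rw [QuotientGroup.eq_one_iff, ← hΓ]
    refine Y.mem_rot (mem_insert _ _) R (by omega) hOv hg hL22 hΛL h5 (C' := C') ?_ ?_
    · simpa using hC' 1
    · intro k
      have : J α ^ (k : ℤ) * J g * J α ^ (k : ℤ) =
          SemidirectProduct.inl (ia φ j 1 (α ^ (k : ℤ) * g * α ^ (k : ℤ))) := by
        simp [J, map_mul]
      rw [this]
      exact hC' _
  have hnt : Nontrivial (qpi Γ).range := by
    obtain ⟨i, hi⟩ : ∃ i, p (FreeGroup.of i) ≠ 1 := by
      by_contra! hall
      have : p = 1 := FreeGroup.ext_hom _ _ fun i => hall i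
      obtain ⟨x, hx⟩ := exists_ne (1 : G)
      obtain ⟨w, rfl⟩ := hp x
      rw [this] at hx
      exact hx rfl
    refine ⟨⟨(qpi Γ).rangeRestrict (ia φ j 1 (p (FreeGroup.of i))), 1, fun h => hi ?_⟩⟩
    exact claim _ ((wlen_of_le i).trans (by omega)) (congrArg Subtype.val h)
  refine ⟨(qpi Γ).range, inferInstance, (qpi Γ).rangeRestrict.comp (ia φ j 1), ?_,
    quot_hyp R hΓ.symm hin hL22 h4 hΛL hfin, quot_not_vc hin hE hnt, qpsi Γ, ?_, ?_,
    quot_out hin hE, quot_EH hin hE⟩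
  · refine quot_surj hj hp Γ fun b i hb hi => ?_
    set k := E ⟨(b, i), hb, hi⟩ with hk
    have htk : t k = SemidirectProduct.inl (ia φ j b (p (FreeGroup.of i))) := by
      simp only [t, hk, Equiv.symm_apply_apply]
    obtain ⟨u, ⟨v, rfl⟩, hu⟩ := rel_split (t := t k) J.range ⟨α, rfl⟩ ⟨g, rfl⟩ hs M (k : ℕ)
    have hm := rel_mem_rot (o := (1 : FP (B ⧸ j.range) G)) (a := J α) (g := J g) (t := t)
      (M := M) hs k
    rw [← h𝕐, hΓ, hu, htk] at hm
    refine ⟨v⁻¹, ?_⟩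
    have h1 : qpi Γ (ia φ j 1 v * ia φ j b (p (FreeGroup.of i))) = 1 := by
      rw [qpi_one_iff, map_mul]; exact hm
    rw [map_mul] at h1
    rw [map_inv, map_inv]
    exact eq_inv_of_mul_eq_one_right h1
  · intro c x y hx hy hxy
    have h1 : wlen p (x⁻¹ * y) ≤ 2 * r + 1 := by
      have h2 := wlen_mul hp (x⁻¹ * c) (c⁻¹ * y)
      have h3 := wlen_inv hp (c⁻¹ * x)
      simp only [mul_inv_rev, inv_inv] at h3
      have : x⁻¹ * c * (c⁻¹ * y) = x⁻¹ * y := by group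
      rw [this] at h2
      omega
    have h2 : qpi Γ (ia φ j 1 x) = qpi Γ (ia φ j 1 y) := congrArg Subtype.val hxy
    have := claim (x⁻¹ * y) h1 (by
      rw [map_mul, map_mul, map_inv, map_inv, h2, inv_mul_cancel])
    exact inv_mul_eq_one.mp this
  · intro a
    ext x
    have h1 := ia_mul φ hj 1 a x
    have h2 := ith_ia φ hj (j a) 1 x
    rw [one_mul] at h1
    rw [mul_one] at h2
    change qpi Γ (ia φ j 1 (φ a x)) = _
    simp only [MonoidHom.coe_comp, comp_apply, MulEquiv.toMonoidHom_eq_coe, MonoidHom.coe_coe]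
    rw [qpsi_coe, ← h1, ← h2]
    change QuotientGroup.mk' Γ (SemidirectProduct.inl _) = _
    rw [SemidirectProduct.inl_aut, map_mul, map_mul, map_inv]
    rfl

end LacHyp
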